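/- arXiv:2203.14687 — 2 statements merged into one kernel-verified Lean document; each statement's English description precedes it below -/
import Mathlib

section
/- Let q = p^h be a prime power and let f(X,Y) ∈ F_q[X,Y] have total degree d ≥ 1 and satisfy f(0,0) = 0. Suppose that q > 6.3·(d+1)^{13/3} and that the hypersurface S_f contains an absolutely irreducible component defined over F_q (i.e., there is a nonconstant polynomial g ∈ F_q[X_0,X_1,X_2,X_3,X_4] dividing F that remains irreducible over the algebraic closure of F_q). Then f does not satisfy the ovoid condition; that is, there exist (x_1,y_1) ≠ (x_2,y_2) in F_q^2 with (y_1 − y_2)^2 + (x_1 − x_2)(f(x_1,y_1) − f(x_2,y_2)) = 0, so O_4(f) is not an ovoid of Q(4,q). -/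
open MvPolynomial

/-- The coefficient `a_{i,j}` of the monomial `X^i Y^j` in `f ∈ F_q[X,Y]`. -/
noncomputable def coeffXY {K : Type*} [Field K] (f : MvPolynomial (Fin 2) K) (i j : ℕ) : K :=
  f.coeff (Finsupp.single (0 : Fin 2) i + Finsupp.single (1 : Fin 2) j)

/-- The homogeneous polynomial
`F = (X₂ − X₄)² X₀^{d−1} + (X₁ − X₃)·Σ_{i,j} a_{i,j}(X₁^i X₂^j − X₃^i X₄^j) X₀^{d−i−j}`
defining the hypersurface `S_f ⊂ PG(4,q)`. -/
noncomputable def Fpoly {K : Type*} [Field K] (f : MvPolynomial (Fin 2) K) (d : ℕ) :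
    MvPolynomial (Fin 5) K :=
  (X 2 - X 4) ^ 2 * (X 0) ^ (d - 1)
    + (X 1 - X 3) *
      ∑ m ∈ f.support,
        C (f.coeff m) *
          ((X 1) ^ (m 0) * (X 2) ^ (m 1) - (X 3) ^ (m 0) * (X 4) ^ (m 1))
          * (X 0) ^ (d - m 0 - m 1)

/-- `S_f` contains an absolutely irreducible component defined over the base field: there is a
nonconstant polynomial `g` over the base field dividing `F` that remains irreducible over the
algebraic closure. -/
def HasAbsIrrComponent {K : Type*} [Field K] (F : MvPolynomial (Fin 5) K) : Prop :=
  ∃ g : MvPolynomial (Fin 5) K, g ∣ F ∧ 0 < g.totalDegree ∧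
    Irreducible (MvPolynomial.map (algebraMap K (AlgebraicClosure K)) g)

/-- The ovoid condition:
`(y₁ − y₂)² + (x₁ − x₂)(f(x₁,y₁) − f(x₂,y₂)) ≠ 0` for all `(x₁,y₁) ≠ (x₂,y₂)`. -/
def OvoidCondition {K : Type*} [Field K] (f : MvPolynomial (Fin 2) K) : Prop :=
  ∀ x₁ y₁ x₂ y₂ : K, (x₁, y₁) ≠ (x₂, y₂) →
    (y₁ - y₂) ^ 2 + (x₁ - x₂) * (eval ![x₁, y₁] f - eval ![x₂, y₂] f) ≠ 0

section Stepanov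

variable {K L Λ : Type*}

/-- The value at `(a, b)` of the polynomial `V ^ n + ∑ γ k i Y ^ i V ^ k` of weight `ω * n`. -/
noncomputable def weightedVal [CommSemiring K] [CommSemiring Λ] [Algebra K Λ] (γ : ℕ → ℕ → K)
    (n ω : ℕ) (a b : Λ) : Λ :=
  b ^ n + ∑ k ∈ Finset.range n, ∑ i ∈ Finset.range (ω * (n - k) + 1),
    algebraMap K Λ (γ k i) * a ^ i * b ^ k

lemma map_weightedVal [CommSemiring K] [CommSemiring Λ] [Algebra K Λ] [CommSemiring L] [Algebra K L]
    (φ : L →ₐ[K] Λ) (γ : ℕ → ℕ → K) (n ω : ℕ) (a b : L) :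
    φ (weightedVal γ n ω a b) = weightedVal γ n ω (φ a) (φ b) := by
  simp [weightedVal, map_sum]

section Spans

variable [Field L] [Field Λ] [Algebra L Λ]

/-- The span of the monomials `y ^ i * θ ^ k * y₂ ^ j * θ₂ ^ l` of weight at most `N`, where
`θ` and `θ₂` have weight `ω`. -/
def weightSpan (L : Type*) [Field L] [Algebra L Λ] (y θ y₂ θ₂ : Λ) (ω N : ℕ) : Submodule L Λ :=
  Submodule.span L {z | ∃ i k j l, i + j + ω * (k + l) ≤ N ∧ z = y ^ i * θ ^ k * y₂ ^ j * θ₂ ^ l}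

variable {y θ y₂ θ₂ : Λ} {ω N : ℕ}

lemma mem_weightSpan {i k j l : ℕ} (h : i + j + ω * (k + l) ≤ N) :
    y ^ i * θ ^ k * y₂ ^ j * θ₂ ^ l ∈ weightSpan L y θ y₂ θ₂ ω N :=
  Submodule.subset_span ⟨i, k, j, l, h, rfl⟩

lemma mul_mem_weightSpan {M : ℕ} {s t : Λ} (hs : s ∈ weightSpan L y θ y₂ θ₂ ω N)
    (ht : t ∈ weightSpan L y θ y₂ θ₂ ω M) : s * t ∈ weightSpan L y θ y₂ θ₂ ω (N + M) := by
  have h := Submodule.mul_mem_mul hs ht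
  rw [weightSpan, weightSpan, Submodule.span_mul_span] at h
  refine Submodule.span_mono ?_ h
  rintro _ ⟨_, ⟨i, k, j, l, h1, rfl⟩, _, ⟨i', k', j', l', h2, rfl⟩, rfl⟩
  refine ⟨i + i', k + k', j + j', l + l', by nlinarith, ?_⟩
  simp only [pow_add]; ring

lemma weightSpan_mono {M : ℕ} (h : N ≤ M) :
    weightSpan L y θ y₂ θ₂ ω N ≤ weightSpan L y θ y₂ θ₂ ω M := by
  refine Submodule.span_mono ?_
  rintro _ ⟨i, k, j, l, h1, rfl⟩
  exact ⟨i, k, j, l, h1.trans h, rfl⟩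

/-- Exponents `(i, k)` of the monomials `y ^ i * θ ^ k` of weight at most `a` with `k < n`. -/
def redIndex (ω n a : ℕ) : Finset (ℕ × ℕ) :=
  (Finset.range (a + 1) ×ˢ Finset.range n).filter fun s => s.1 + ω * s.2 ≤ a

lemma mem_redIndex {n a : ℕ} {s : ℕ × ℕ} : s ∈ redIndex ω n a ↔ s.1 + ω * s.2 ≤ a ∧ s.2 < n := by
  simp only [redIndex, Finset.mem_filter, Finset.mem_product, Finset.mem_range]
  constructor
  · rintro ⟨⟨-, h⟩, h'⟩; exact ⟨h', h⟩
  · rintro ⟨h, h'⟩; exact ⟨⟨by nlinarith [Nat.zero_le (ω * s.2)], h'⟩, h⟩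

lemma card_redIndex (ω n a : ℕ) :
    (redIndex ω n a).card = ∑ k ∈ Finset.range n, (a + 1 - ω * k) := by
  rw [redIndex, Finset.card_filter, Finset.sum_product_right]
  refine Finset.sum_congr rfl fun k _ => ?_
  rw [← Finset.card_filter]
  rw [show (Finset.range (a + 1)).filter (fun i => i + ω * k ≤ a) = Finset.range (a + 1 - ω * k) by
    ext i; simp only [Finset.mem_filter, Finset.mem_range]; omega]
  simp

lemma two_mul_card_redIndex {ω n a : ℕ} (h : ω * (n - 1) ≤ a + 1) :
    2 * (redIndex ω n a).card + ω * (n * (n - 1)) = 2 * n * (a + 1) := by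
  have h1 : (redIndex ω n a).card + ∑ k ∈ Finset.range n, ω * k = n * (a + 1) := by
    rw [card_redIndex, ← Finset.sum_add_distrib, Finset.sum_congr rfl (g := fun _ => a + 1)]
    · simp
    · intro k hk
      have : ω * k ≤ ω * (n - 1) := Nat.mul_le_mul_left _ (by have := Finset.mem_range.1 hk; omega)
      omega
  rw [← Finset.mul_sum] at h1
  have h2 := Finset.sum_range_id_mul_two n
  rw [← h2]; linarith

lemma card_redIndex_add_le (ω n a e : ℕ) :
    (redIndex ω n (a + e)).card ≤ (redIndex ω n e).card + n * a := by
  rw [card_redIndex, card_redIndex]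
  calc _ ≤ ∑ k ∈ Finset.range n, ((e + 1 - ω * k) + a) := Finset.sum_le_sum fun k _ => by omega
    _ = _ := by rw [Finset.sum_add_distrib]; simp

/-- Freeness of `1, θ, …, θ ^ (n - 1)` over `L[y]` gives independence of monomials. -/
lemma linearIndepOn_monomials {n : ℕ}
    (hfree : ∀ p : ℕ → Polynomial L, ∑ k ∈ Finset.range n, Polynomial.aeval y (p k) * θ ^ k = 0 →
      ∀ k < n, p k = 0) (I : Finset (ℕ × ℕ)) (hI : ∀ s ∈ I, s.2 < n) :
    LinearIndepOn L (fun s : ℕ × ℕ => y ^ s.1 * θ ^ s.2) (I : Set (ℕ × ℕ)) := by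
  rw [linearIndepOn_finset_iff]
  intro f hf s hs
  have := hfree (fun k => ∑ s ∈ I with s.2 = k, Polynomial.C (f s) * Polynomial.X ^ s.1) ?_ s.2
    (hI s hs)
  · have h2 := congrArg (fun P => Polynomial.coeff P s.1) this
    simp only [Polynomial.finsetSum_coeff, Polynomial.coeff_C_mul_X_pow, Polynomial.coeff_zero] at h2
    rw [Finset.sum_eq_single s] at h2
    · simpa using h2
    · intro t ht hts
      rw [if_neg]
      intro h
      exact hts (Prod.ext h.symm (Finset.mem_filter.1 ht).2)
    · intro h; exact absurd (Finset.mem_filter.2 ⟨hs, rfl⟩ : s ∈ I.filter fun t => t.2 = s.2) h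
  · rw [← hf, ← Finset.sum_fiberwise_of_maps_to (s := I) (t := Finset.range n) (g := Prod.snd)
      (fun s hs => Finset.mem_range.2 (hI s hs))]
    refine Finset.sum_congr rfl fun k _ => ?_
    rw [map_sum, Finset.sum_mul]
    refine Finset.sum_congr rfl fun s hs => ?_
    rw [← (Finset.mem_filter.1 hs).2]
    simp [Algebra.smul_def, mul_assoc]

end Spans

end Stepanov

section Stepanov

variable {K L Λ : Type*} [Field K] [Field L] [Field Λ] [Algebra K L] [Algebra L Λ] [Algebra K Λ]
  [IsScalarTower K L Λ]

lemma smul_mem_of_tower (S : Submodule L Λ) (c : K) {x : Λ} (hx : x ∈ S) :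
    algebraMap K Λ c * x ∈ S := by
  rw [IsScalarTower.algebraMap_apply K L Λ, ← Algebra.smul_def]
  exact S.smul_mem _ hx

variable {y θ : Λ} {ω n : ℕ} {γ : ℕ → ℕ → K}

/-- Monomials reduce modulo the equation of `θ` without increasing their weight. -/
lemma monomial_mem_span_redIndex (hG : weightedVal γ n ω y θ = 0) (a : ℕ) (k : ℕ) :
    ∀ i, i + ω * k ≤ a → y ^ i * θ ^ k ∈
      Submodule.span L ((fun s : ℕ × ℕ => y ^ s.1 * θ ^ s.2) '' (redIndex ω n a : Set (ℕ × ℕ))) := by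
  induction k using Nat.strong_induction_on with
  | _ k ih =>
  intro i hi
  by_cases hk : k < n
  · exact Submodule.subset_span ⟨(i, k), Finset.mem_coe.2 (mem_redIndex.2 ⟨hi, hk⟩), rfl⟩
  · obtain ⟨m, rfl⟩ := Nat.exists_eq_add_of_le (not_lt.1 hk)
    have h1 : y ^ i * θ ^ (n + m) = - ∑ k ∈ Finset.range n, ∑ j ∈ Finset.range (ω * (n - k) + 1),
        algebraMap K Λ (γ k j) * (y ^ (i + j) * θ ^ (k + m)) := by
      have h2 : θ ^ n = - ∑ k ∈ Finset.range n, ∑ j ∈ Finset.range (ω * (n - k) + 1),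
        algebraMap K Λ (γ k j) * y ^ j * θ ^ k := eq_neg_of_add_eq_zero_left hG
      rw [pow_add, h2, neg_mul, mul_neg, Finset.sum_mul, Finset.mul_sum]
      congr 1
      refine Finset.sum_congr rfl fun k _ => ?_
      rw [Finset.sum_mul, Finset.mul_sum]
      refine Finset.sum_congr rfl fun j _ => ?_
      simp only [pow_add]; ring
    rw [h1]
    refine Submodule.neg_mem _ (Submodule.sum_mem _ fun k hk => Submodule.sum_mem _ fun j hj =>
      smul_mem_of_tower _ _ (ih _ ?_ _ ?_))
    · have := Finset.mem_range.1 hk; omega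
    · have h3 := Finset.mem_range.1 hk
      have h4 := Finset.mem_range.1 hj
      obtain ⟨e, rfl⟩ := Nat.exists_eq_add_of_lt h3
      rw [show k + e + 1 - k = e + 1 by omega] at h4
      nlinarith

lemma weightSpan_eq_span_redIndex (hG : weightedVal γ n ω y θ = 0) (a : ℕ) :
    weightSpan L y θ 1 1 ω a =
      Submodule.span L ((fun s : ℕ × ℕ => y ^ s.1 * θ ^ s.2) '' (redIndex ω n a : Set (ℕ × ℕ))) := by
  apply le_antisymm
  · refine Submodule.span_le.2 ?_
    rintro _ ⟨i, k, j, l, h, rfl⟩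
    simpa using monomial_mem_span_redIndex hG a k i (by nlinarith)
  · refine Submodule.span_le.2 ?_
    rintro _ ⟨s, hs, rfl⟩
    have := (mem_redIndex.1 (Finset.mem_coe.1 hs)).1
    simpa using mem_weightSpan (L := L) (y := y) (θ := θ) (y₂ := 1) (θ₂ := 1) (j := 0) (l := 0)
      (N := a) (i := s.1) (k := s.2) (ω := ω) (by simpa using this)

lemma finrank_span_redIndex
    (hfree : ∀ p : ℕ → Polynomial L, ∑ k ∈ Finset.range n, Polynomial.aeval y (p k) * θ ^ k = 0 →
      ∀ k < n, p k = 0) (a : ℕ) :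
    Module.finrank L (Submodule.span L
      ((fun s : ℕ × ℕ => y ^ s.1 * θ ^ s.2) '' (redIndex ω n a : Set (ℕ × ℕ)))) =
      (redIndex ω n a).card := by
  have h := linearIndepOn_monomials hfree (redIndex ω n a) fun s hs => (mem_redIndex.1 hs).2
  rw [Set.image_eq_range]
  have := finrank_span_eq_card h
  simpa using this

lemma aeval_injective_of_free {L Λ : Type*} [Field L] [Field Λ] [Algebra L Λ] {y θ : Λ} {n : ℕ}
    (hn : 1 ≤ n)
    (hfree : ∀ p : ℕ → Polynomial L, ∑ k ∈ Finset.range n, Polynomial.aeval y (p k) * θ ^ k = 0 →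
      ∀ k < n, p k = 0) : Function.Injective (Polynomial.aeval (R := L) y) := by
  rw [injective_iff_map_eq_zero]
  intro P hP
  have := hfree (fun k => if k = 0 then P else 0) ?_ 0 (by omega)
  · simpa using this
  · rw [Finset.sum_eq_single 0]
    · simp [hP]
    · intro b _ hb; simp [hb]
    · intro h; exact absurd (Finset.mem_range.2 (by omega)) h

/-- A nonzero element of weight `a` has a multiple in `L[y]` of degree at most `n * a`, with
cofactor of weight `(n - 1) * a`. -/
lemma exists_mul_eq_aeval (hG : weightedVal γ n ω y θ = 0) (hn : 1 ≤ n)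
    (hfree : ∀ p : ℕ → Polynomial L, ∑ k ∈ Finset.range n, Polynomial.aeval y (p k) * θ ^ k = 0 →
      ∀ k < n, p k = 0) {a : ℕ} {s : Λ} (hs : s ∈ weightSpan L y θ 1 1 ω a) (hs0 : s ≠ 0) :
    ∃ w ∈ weightSpan L y θ 1 1 ω ((n - 1) * a), ∃ P : Polynomial L, P ≠ 0 ∧ P.natDegree ≤ n * a ∧
      s * w = Polynomial.aeval y P := by
  classical
  set e := (n - 1) * a with he
  have hae : a + e = n * a := by
    rw [he]; obtain ⟨m, rfl⟩ := Nat.exists_eq_add_of_le' hn; simp; ring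
  set W := fun a => weightSpan L y θ 1 1 ω a with hW
  have hfin : ∀ a, Module.Finite L (W a) := fun a => by
    change Module.Finite L (weightSpan L y θ 1 1 ω a)
    rw [weightSpan_eq_span_redIndex hG]
    exact FiniteDimensional.span_of_finite L (Set.Finite.image _ (Finset.finite_toSet _))
  have hrank : ∀ a, Module.finrank L (W a) = (redIndex ω n a).card := fun a => by
    change Module.finrank L (weightSpan L y θ 1 1 ω a) = _
    rw [weightSpan_eq_span_redIndex hG, finrank_span_redIndex hfree]
  set A := (W e).map (LinearMap.mulLeft L s) with hA
  set B := (Polynomial.degreeLT L (a + e + 1)).map (Polynomial.aeval y).toLinearMap with hB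
  have hinjy := aeval_injective_of_free hn hfree
  have hdeg : ∀ P ∈ Polynomial.degreeLT L (a + e + 1), P.natDegree ≤ a + e := fun P hP => by
    rcases eq_or_ne P 0 with rfl | hP0
    · simp
    · exact Nat.lt_succ_iff.1
        ((Polynomial.natDegree_lt_iff_degree_lt hP0).2 (Polynomial.mem_degreeLT.1 hP))
  have hAW : A ≤ W (a + e) := by
    rintro _ ⟨w, hw, rfl⟩
    exact mul_mem_weightSpan hs hw
  have hBW : B ≤ W (a + e) := by
    rintro _ ⟨P, hP, rfl⟩
    change Polynomial.aeval y P ∈ _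
    rw [Polynomial.aeval_eq_sum_range' (n := a + e + 1)]
    · refine Submodule.sum_mem _ fun i hi => Submodule.smul_mem _ _ ?_
      have := mem_weightSpan (L := L) (y := y) (θ := θ) (y₂ := 1) (θ₂ := 1) (j := 0) (l := 0)
        (N := a + e) (i := i) (k := 0) (ω := ω) (by have := Finset.mem_range.1 hi; omega)
      simpa using this
    · exact Nat.lt_succ_of_le (hdeg P hP)
  have hArank : Module.finrank L A = (redIndex ω n e).card := by
    rw [← hrank e]
    exact (Submodule.equivMapOfInjective (LinearMap.mulLeft L s)
      (mul_right_injective₀ hs0) (W e)).finrank_eq.symm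
  have hBrank : Module.finrank L B = a + e + 1 := by
    rw [hB, ← (Submodule.equivMapOfInjective (Polynomial.aeval y).toLinearMap hinjy
      (Polynomial.degreeLT L (a + e + 1))).finrank_eq, (Polynomial.degreeLTEquiv L (a + e + 1)).finrank_eq]; simp
  have := hfin (a + e)
  have : Module.Finite L A := Submodule.finiteDimensional_of_le hAW
  have : Module.Finite L B := Submodule.finiteDimensional_of_le hBW
  have hsup : Module.finrank L ↥(A ⊔ B) ≤ (redIndex ω n (a + e)).card := by
    rw [← hrank]; exact Submodule.finrank_mono (sup_le hAW hBW)
  have hsum := Submodule.finrank_sup_add_finrank_inf_eq A B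
  have hle := card_redIndex_add_le ω n a e
  have hpos : 0 < Module.finrank L ↥(A ⊓ B) := by omega
  obtain ⟨⟨x, ⟨w, hw, hwx⟩, ⟨P, hP, hPx⟩⟩, hx0⟩ := Module.finrank_pos_iff_exists_ne_zero.1 hpos
  refine ⟨w, hw, P, ?_, ?_, hwx.trans hPx.symm⟩
  · rintro rfl
    apply hx0
    ext
    simpa using hPx.symm
  · exact (hdeg P hP).trans hae.le

end Stepanov

section Stepanov

section Place

variable {L Λ : Type*} [Field L] [Field Λ] [Algebra L Λ]

/-- A discrete place of `Λ` over `L` with residue field `L`: the order function together with the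
subspaces of elements of order at least `m`. -/
structure DiscretePlace (L Λ : Type*) [Field L] [Field Λ] [Algebra L Λ] where
  ord : Λ → ℤ
  ge : ℤ → Submodule L Λ
  ord_mul : ∀ {x z : Λ}, x ≠ 0 → z ≠ 0 → ord (x * z) = ord x + ord z
  mem_ge : ∀ {m : ℤ} {x : Λ}, x ≠ 0 → (x ∈ ge m ↔ m ≤ ord x)
  exists_sub_smul_mem : ∀ {x z : Λ}, z ≠ 0 → x ∈ ge (ord z) → ∃ e : L, x - e • z ∈ ge (ord z + 1)

namespace DiscretePlace

variable (v : DiscretePlace L Λ)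

lemma ge_anti {m k : ℤ} (h : m ≤ k) : v.ge k ≤ v.ge m := by
  intro x hx
  rcases eq_or_ne x 0 with rfl | hx0
  · exact zero_mem _
  · exact (v.mem_ge hx0).2 (h.trans ((v.mem_ge hx0).1 hx))

lemma ord_one : v.ord 1 = 0 := by
  have := v.ord_mul (one_ne_zero (α := Λ)) one_ne_zero
  rw [mul_one] at this
  omega

lemma ord_pow {x : Λ} (hx : x ≠ 0) (k : ℕ) : v.ord (x ^ k) = k * v.ord x := by
  induction k with
  | zero => simp [v.ord_one]
  | succ k ih => rw [pow_succ, v.ord_mul (pow_ne_zero _ hx) hx, ih]; push_cast; ring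

lemma mul_mem_ge {m k : ℤ} {x z : Λ} (hx : x ∈ v.ge m)
    (hz : z ∈ v.ge k) : x * z ∈ v.ge (m + k) := by
  rcases eq_or_ne x 0 with rfl | hx0
  · simp
  rcases eq_or_ne z 0 with rfl | hz0
  · simp
  rw [v.mem_ge (mul_ne_zero hx0 hz0), v.ord_mul hx0 hz0]
  exact add_le_add ((v.mem_ge hx0).1 hx) ((v.mem_ge hz0).1 hz)

lemma pow_mem_ge {m : ℤ} {x : Λ} (hx : x ∈ v.ge m) (k : ℕ) :
    x ^ k ∈ v.ge (k * m) := by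
  induction k with
  | zero =>
    rw [pow_zero, v.mem_ge one_ne_zero]
    simp [v.ord_one]
  | succ k ih =>
    rw [pow_succ]
    refine v.ge_anti ?_ (v.mul_mem_ge ih hx)
    push_cast; linarith

lemma weightSpan_le_ge {y θ : Λ} {ω : ℕ} {κ : ℤ} (hκ : 0 ≤ κ)
    (hy : y ∈ v.ge (-κ)) (hθ : θ ∈ v.ge (-κ * ω)) (a : ℕ) :
    weightSpan L y θ 1 1 ω a ≤ v.ge (-κ * a) := by
  refine Submodule.span_le.2 ?_
  rintro _ ⟨i, k, j, l, h, rfl⟩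
  simp only [one_pow, mul_one]
  refine v.ge_anti ?_ (v.mul_mem_ge (v.pow_mem_ge hy i) (v.pow_mem_ge hθ k))
  have h1 : (i : ℤ) + ω * k ≤ a := by
    have : i + ω * k ≤ a := by nlinarith
    exact_mod_cast this
  nlinarith

variable {K : Type*} [Field K] [Fintype K] [Algebra K L] [Algebra K Λ] [IsScalarTower K L Λ]

/-- Products of a monomial of small weight and the Frobenius image of another monomial are
linearly independent. -/
lemma coeff_eq_zero_of_sum_mul_pow_eq_zero
    {y θ : Λ} {ω n a b : ℕ} {γ : ℕ → ℕ → K} {κ : ℤ}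
    (hκ : 0 ≤ κ) (hy : y ∈ v.ge (-κ)) (hθ : θ ∈ v.ge (-κ * ω))
    (hord : ∀ P : Polynomial L, P ≠ 0 → v.ord (Polynomial.aeval y P) ≤ (1 - κ) * P.natDegree)
    (hκ1 : κ ≤ 1)
    (hroot : ∀ c : L, ∃ e : L, e ^ Fintype.card K = c)
    (hG : weightedVal γ n ω y θ = 0) (hn : 1 ≤ n)
    (hfree : ∀ p : ℕ → Polynomial L, ∑ k ∈ Finset.range n, Polynomial.aeval y (p k) * θ ^ k = 0 →
      ∀ k < n, p k = 0) (ha : n * a < Fintype.card K) (c : ℕ × ℕ → ℕ × ℕ → L)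
    (hc : ∑ s ∈ redIndex ω n a, ∑ t ∈ redIndex ω n b,
      c s t • (y ^ s.1 * θ ^ s.2 * (y ^ t.1 * θ ^ t.2) ^ Fintype.card K) = 0) :
    ∀ s ∈ redIndex ω n a, ∀ t ∈ redIndex ω n b, c s t = 0 := by
  classical
  set q := Fintype.card K with hq
  have hq0 : q ≠ 0 := Fintype.card_ne_zero
  set φ := FiniteField.frobeniusAlgHom K (Λ) with hφ
  have hφa : ∀ x, φ x = x ^ q := fun x => by rw [hφ, FiniteField.coe_frobeniusAlgHom]
  choose r hr using hroot
  set μ : ℕ × ℕ → Λ := fun s => y ^ s.1 * θ ^ s.2 with hμ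
  have hindep : ∀ a, LinearIndepOn L μ (redIndex ω n a : Set (ℕ × ℕ)) := fun a =>
    linearIndepOn_monomials hfree (redIndex ω n a) fun s hs => (mem_redIndex.1 hs).2
  set τ : ℕ × ℕ → Λ := fun s => ∑ t ∈ redIndex ω n b, r (c s t) • μ t with hτ
  have hsm : ∀ (e : L) (x : Λ), (e • x) ^ q = e ^ q • x ^ q := fun e x => smul_pow e x q
  have hsum : ∑ s ∈ redIndex ω n a, μ s * τ s ^ q = 0 := by
    rw [← hc]
    refine Finset.sum_congr rfl fun s _ => ?_
    rw [← hφa, hτ, map_sum, Finset.mul_sum]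
    refine Finset.sum_congr rfl fun t _ => ?_
    rw [hφa, hsm, hr, mul_smul_comm]
  by_cases hall : ∀ s ∈ redIndex ω n a, τ s = 0
  · intro s hs t ht
    have := linearIndepOn_finset_iff.1 (hindep b) _ (hall s hs) t ht
    rw [← hr (c s t), this, zero_pow hq0]
  exfalso
  push Not at hall
  obtain ⟨s₁, hs₁, hs₁0⟩ := hall
  obtain ⟨s₀, hs₀, hmin⟩ := Finset.exists_min_image ((redIndex ω n a).filter fun s => τ s ≠ 0)
    (fun s => v.ord (τ s)) ⟨s₁, Finset.mem_filter.2 ⟨hs₁, hs₁0⟩⟩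
  obtain ⟨hs₀, hτ0⟩ := Finset.mem_filter.1 hs₀
  set m := v.ord (τ s₀) with hm
  have hres : ∀ s, ∃ e : L, s ∈ redIndex ω n a → τ s - e • τ s₀ ∈ v.ge (m + 1) := by
    intro s
    by_cases hs : s ∈ redIndex ω n a
    · obtain ⟨e, he⟩ := v.exists_sub_smul_mem (x := τ s) hτ0 (by
        by_cases h0 : τ s = 0
        · rw [h0]; exact zero_mem _
        · exact (v.mem_ge h0).2 (hmin s (Finset.mem_filter.2 ⟨hs, h0⟩)))
      exact ⟨e, fun _ => he⟩
    · exact ⟨0, fun h => absurd h hs⟩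
  choose e he using hres
  have he0 : e s₀ ≠ 0 := by
    intro h
    have h1 := he s₀ hs₀
    rw [h, zero_smul, sub_zero, v.mem_ge hτ0] at h1
    omega
  set S := ∑ s ∈ redIndex ω n a, (e s ^ q) • μ s with hS
  have hS0 : S ≠ 0 := by
    intro h
    have := linearIndepOn_finset_iff.1 (hindep a) _ h s₀ hs₀
    exact he0 (pow_eq_zero_iff hq0 |>.1 this)
  have hμW : ∀ s ∈ redIndex ω n a, μ s ∈ weightSpan L y θ 1 1 ω a := fun s hs => by
    rw [weightSpan_eq_span_redIndex hG]
    exact Submodule.subset_span ⟨s, hs, rfl⟩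
  have hSW : S ∈ weightSpan L y θ 1 1 ω a :=
    Submodule.sum_mem _ fun s hs => Submodule.smul_mem _ _ (hμW s hs)
  have hkey : τ s₀ ^ q * S ∈ v.ge (-κ * a + q * (m + 1)) := by
    have h1 : τ s₀ ^ q * S = - ∑ s ∈ redIndex ω n a, μ s * (τ s - e s • τ s₀) ^ q := by
      rw [eq_neg_iff_add_eq_zero, ← hsum, hS, Finset.mul_sum, ← Finset.sum_add_distrib]
      refine Finset.sum_congr rfl fun s _ => ?_
      rw [← hφa (_ - _), map_sub, hφa, hφa, hsm, mul_sub, mul_smul_comm, mul_smul_comm,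
        mul_comm (μ s) (τ s₀ ^ q)]
      ring
    rw [h1]
    exact Submodule.neg_mem _ (Submodule.sum_mem _ fun s hs =>
      v.mul_mem_ge (v.weightSpan_le_ge hκ hy hθ a (hμW s hs)) (v.pow_mem_ge (he s hs) q))
  rw [v.mem_ge (mul_ne_zero (pow_ne_zero _ hτ0) hS0),
    v.ord_mul (pow_ne_zero _ hτ0) hS0, v.ord_pow hτ0] at hkey
  obtain ⟨w, hw, P, hP0, hPd, hSw⟩ := exists_mul_eq_aeval hG hn hfree hSW hS0
  have hinjy : Polynomial.aeval y P ≠ 0 :=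
    (map_ne_zero_iff _ (aeval_injective_of_free hn hfree)).2 hP0
  have hw0 : w ≠ 0 := by rintro rfl; exact hinjy (by rw [← hSw, mul_zero])
  have h2 := hord P hP0
  rw [← hSw, v.ord_mul hS0 hw0] at h2
  have h3 := (v.mem_ge hw0).1 (v.weightSpan_le_ge hκ hy hθ _ hw)
  obtain ⟨n', rfl⟩ := Nat.exists_eq_add_of_le' hn
  rw [← hm] at hkey
  have h4 : ((n' + 1 : ℕ) * a : ℤ) < q := by exact_mod_cast ha
  have h5 : (P.natDegree : ℤ) ≤ (n' + 1 : ℕ) * a := by exact_mod_cast hPd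
  simp only [Nat.add_sub_cancel] at h3
  push_cast at h3 h4 h5
  have h6 : (1 - κ) * (P.natDegree : ℤ) ≤ (1 - κ) * ((n' + 1) * a) :=
    mul_le_mul_of_nonneg_left h5 (by omega)
  nlinarith

end DiscretePlace

end Place

end Stepanov

section Stepanov

/-- Exponents of the monomials `y ^ i * θ ^ k * θ₂ ^ l` of weight at most `N`, with `k < n` and
`l < n - 1`. -/
def crossIndex (ω n N : ℕ) : Finset (ℕ × ℕ × ℕ) :=
  (Finset.range (N + 1) ×ˢ Finset.range n ×ˢ Finset.range (n - 1)).filter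
    fun s => s.1 + ω * (s.2.1 + s.2.2) ≤ N

lemma mem_crossIndex {ω n N i k l : ℕ} :
    (i, k, l) ∈ crossIndex ω n N ↔ i + ω * (k + l) ≤ N ∧ k < n ∧ l < n - 1 := by
  simp only [crossIndex, Finset.mem_filter, Finset.mem_product, Finset.mem_range]
  constructor
  · rintro ⟨⟨-, h1, h2⟩, h'⟩; exact ⟨h', h1, h2⟩
  · rintro ⟨h, h1, h2⟩; exact ⟨⟨by nlinarith [Nat.zero_le (ω * (k + l))], h1, h2⟩, h⟩

lemma two_mul_card_crossIndex {ω n N : ℕ} (h : ω * (2 * n) ≤ N + 1) (hn : 2 ≤ n) :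
    2 * (crossIndex ω n N).card + ω * (n * (n - 1) * (2 * n - 3)) =
      2 * (n * (n - 1)) * (N + 1) := by
  have h0 : (crossIndex ω n N).card =
      ∑ k ∈ Finset.range n, ∑ l ∈ Finset.range (n - 1), (N + 1 - ω * (k + l)) := by
    rw [crossIndex, Finset.card_filter, Finset.sum_product_right, Finset.sum_product]
    refine Finset.sum_congr rfl fun k _ => Finset.sum_congr rfl fun l _ => ?_
    rw [← Finset.card_filter]
    rw [show (Finset.range (N + 1)).filter (fun i => i + ω * (k + l) ≤ N) =
      Finset.range (N + 1 - ω * (k + l)) by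
        ext i; simp only [Finset.mem_filter, Finset.mem_range]; omega]
    simp
  have h1 : (crossIndex ω n N).card + ∑ k ∈ Finset.range n, ∑ l ∈ Finset.range (n - 1),
      ω * (k + l) = n * (n - 1) * (N + 1) := by
    rw [h0, ← Finset.sum_add_distrib, Finset.sum_congr rfl (g := fun _ => (n - 1) * (N + 1))]
    · simp [mul_assoc]
    · intro k hk
      rw [← Finset.sum_add_distrib, Finset.sum_congr rfl (g := fun _ => N + 1)]
      · simp
      · intro l hl
        have : ω * (k + l) ≤ ω * (2 * n) := Nat.mul_le_mul_left _ (by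
          have := Finset.mem_range.1 hk; have := Finset.mem_range.1 hl; omega)
        omega
  have h2 := Finset.sum_range_id_mul_two n
  have h3 := Finset.sum_range_id_mul_two (n - 1)
  have h5 : ∑ k ∈ Finset.range n, ∑ l ∈ Finset.range (n - 1), ω * (k + l) =
      ω * ((n - 1) * ∑ k ∈ Finset.range n, k + n * ∑ l ∈ Finset.range (n - 1), l) := by
    simp [Finset.sum_add_distrib, Finset.mul_sum, mul_add, mul_left_comm]
  rw [h5] at h1
  obtain ⟨m, rfl⟩ := Nat.exists_eq_add_of_le' hn
  rw [show m + 2 - 1 = m + 1 by omega] at *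
  rw [show m + 1 - 1 = m by omega] at *
  rw [show 2 * (m + 2) - 3 = 2 * m + 1 by omega]
  set A := ∑ i ∈ Finset.range (m + 2), i
  set B := ∑ i ∈ Finset.range (m + 1), i
  have h4 : (m + 1) * (2 * A) + (m + 2) * (2 * B) = (m + 2) * (m + 1) * (2 * m + 1) := by
    rw [mul_comm 2 A, mul_comm 2 B, h2, h3]; ring
  rw [← h4]
  linarith

variable {K L Λ : Type*} [Field K] [Field L] [Field Λ] [Algebra K L] [Algebra L Λ] [Algebra K Λ]
  [IsScalarTower K L Λ]

variable {y θ y₂ θ₂ : Λ} {w n : ℕ} {γ : ℕ → ℕ → K}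

lemma mul_mem_weightSpan_add {N M : ℕ} {s : Λ} {i k j l : ℕ}
    (hs : s ∈ weightSpan L y θ y₂ θ₂ (w + 1) N) (h : N + (i + j + (w + 1) * (k + l)) ≤ M) :
    s * (y ^ i * θ ^ k * y₂ ^ j * θ₂ ^ l) ∈ weightSpan L y θ y₂ θ₂ (w + 1) M :=
  weightSpan_mono h (mul_mem_weightSpan hs (mem_weightSpan le_rfl))

/-- Elements of weight `N` whose product with `(θ - θ₂) / (y - y₂)` has weight `N + w`. -/
def quotientSpan (L : Type*) [Field L] [Algebra L Λ] (y θ y₂ θ₂ : Λ) (w N : ℕ) : Submodule L Λ :=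
  (weightSpan L y θ y₂ θ₂ (w + 1) (N + w)).comap (LinearMap.mulLeft L ((θ - θ₂) / (y - y₂)))

lemma mem_quotientSpan {N : ℕ} {s : Λ} : s ∈ quotientSpan L y θ y₂ θ₂ w N ↔
    (θ - θ₂) / (y - y₂) * s ∈ weightSpan L y θ y₂ θ₂ (w + 1) (N + w) := Iff.rfl

lemma sub_mul_mem_quotientSpan (hy : y ≠ y₂) {N : ℕ} {s : Λ}
    (hs : s ∈ weightSpan L y θ y₂ θ₂ (w + 1) N) :
    (y - y₂) * s ∈ quotientSpan L y θ y₂ θ₂ w (N + 1) := by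
  rw [mem_quotientSpan, ← mul_assoc, div_mul_cancel₀ _ (sub_ne_zero.2 hy), sub_mul]
  refine Submodule.sub_mem _ ?_ ?_
  · have := mul_mem_weightSpan_add (i := 0) (j := 0) (k := 1) (l := 0) (M := N + 1 + w) hs (by omega)
    simpa [mul_comm] using this
  · have := mul_mem_weightSpan_add (i := 0) (j := 0) (k := 0) (l := 1) (M := N + 1 + w) hs (by omega)
    simpa [mul_comm] using this

/-- The divided difference of the equation of `θ` in its second variable. -/
noncomputable def divDiff (γ : ℕ → ℕ → K) (n ω : ℕ) (y θ θ₂ : Λ) : Λ :=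
  ∑ a ∈ Finset.range n, θ ^ a * θ₂ ^ (n - 1 - a) +
    ∑ k ∈ Finset.range n, ∑ i ∈ Finset.range (ω * (n - k) + 1),
      algebraMap K Λ (γ k i) * y ^ i * ∑ a ∈ Finset.range k, θ ^ a * θ₂ ^ (k - 1 - a)

lemma divDiff_mul_sub (γ : ℕ → ℕ → K) (n ω : ℕ) (y θ θ₂ : Λ) :
    divDiff γ n ω y θ θ₂ * (θ - θ₂) = weightedVal γ n ω y θ - weightedVal γ n ω y θ₂ := by
  simp only [divDiff, weightedVal, add_mul, Finset.sum_mul, mul_assoc]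
  rw [← Finset.sum_congr rfl fun a _ => mul_assoc _ _ _, ← Finset.sum_mul, geom_sum₂_mul]
  rw [add_sub_add_comm, ← Finset.sum_sub_distrib]
  congr 1
  refine Finset.sum_congr rfl fun k _ => ?_
  rw [← Finset.sum_sub_distrib]
  refine Finset.sum_congr rfl fun i _ => ?_
  rw [← Finset.sum_congr rfl fun a _ => mul_assoc _ _ _, ← Finset.sum_mul, geom_sum₂_mul]
  ring

lemma sum_mul_sub_eq_weightedVal_sub (γ : ℕ → ℕ → K) (n ω : ℕ) (y y₂ θ : Λ) :
    (∑ k ∈ Finset.range n, ∑ i ∈ Finset.range (ω * (n - k) + 1),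
      algebraMap K Λ (γ k i) * ((∑ a ∈ Finset.range i, y ^ a * y₂ ^ (i - 1 - a)) * θ ^ k)) *
        (y - y₂) = weightedVal γ n ω y θ - weightedVal γ n ω y₂ θ := by
  simp only [weightedVal, Finset.sum_mul (s := Finset.range _) (a := y - y₂)]
  rw [add_sub_add_left_eq_sub, ← Finset.sum_sub_distrib]
  refine Finset.sum_congr rfl fun k _ => ?_
  rw [← Finset.sum_sub_distrib]
  refine Finset.sum_congr rfl fun i _ => ?_
  linear_combination algebraMap K Λ (γ k i) * θ ^ k * geom_sum₂_mul y y₂ i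

lemma divDiff_mul_mem_quotientSpan (hG : weightedVal γ n (w + 1) y θ = 0)
    (hG₂ : weightedVal γ n (w + 1) y₂ θ₂ = 0) (hy : y ≠ y₂) (hn : 1 ≤ n) {N : ℕ} {s : Λ}
    (hs : s ∈ weightSpan L y θ y₂ θ₂ (w + 1) N) :
    divDiff γ n (w + 1) y θ θ₂ * s ∈ quotientSpan L y θ y₂ θ₂ w (N + (w + 1) * (n - 1)) := by
  rw [mem_quotientSpan]
  have h1 := divDiff_mul_sub γ n (w + 1) y θ θ₂
  have h2 := sum_mul_sub_eq_weightedVal_sub γ n (w + 1) y y₂ θ₂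
  rw [hG] at h1
  rw [hG₂] at h2
  set Q := ∑ k ∈ Finset.range n, ∑ i ∈ Finset.range ((w + 1) * (n - k) + 1),
      algebraMap K Λ (γ k i) * ((∑ a ∈ Finset.range i, y ^ a * y₂ ^ (i - 1 - a)) * θ₂ ^ k) with hQ
  have h3 : (θ - θ₂) / (y - y₂) * (divDiff γ n (w + 1) y θ θ₂ * s) = - (Q * s) := by
    have hy' := sub_ne_zero.2 hy
    field_simp
    linear_combination s * h1 + s * h2
  rw [h3]
  refine Submodule.neg_mem _ ?_
  rw [hQ, Finset.sum_mul]
  refine Submodule.sum_mem _ fun k hk => ?_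
  rw [Finset.sum_mul]
  refine Submodule.sum_mem _ fun i hi => ?_
  rw [mul_assoc]
  refine smul_mem_of_tower _ _ ?_
  rw [Finset.sum_mul, Finset.sum_mul]
  refine Submodule.sum_mem _ fun a ha => ?_
  have hk := Finset.mem_range.1 hk
  have hi := Finset.mem_range.1 hi
  have ha := Finset.mem_range.1 ha
  have := mul_mem_weightSpan_add (i := a) (j := i - 1 - a) (k := 0) (l := k)
    (M := N + (w + 1) * (n - 1) + w) hs (by
      obtain ⟨e, rfl⟩ := Nat.exists_eq_add_of_lt hk
      rw [show k + e + 1 - k = e + 1 by omega] at hi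
      rw [show k + e + 1 - 1 = k + e by omega]
      have : a + (i - 1 - a) = i - 1 := by omega
      rw [this]
      have : i ≤ (w + 1) * (e + 1) := by omega
      have : i - 1 ≤ (w + 1) * e + w := by
        have : (w + 1) * (e + 1) = (w + 1) * e + w + 1 := by ring
        omega
      nlinarith)
  have h4 : y ^ a * y₂ ^ (i - 1 - a) * θ₂ ^ k * s =
    s * (y ^ a * θ ^ 0 * y₂ ^ (i - 1 - a) * θ₂ ^ k) := by ring
  rw [h4]; exact this

end Stepanov

section Stepanov

variable {K L Λ : Type*} [Field K] [Field L] [Field Λ] [Algebra K L] [Algebra L Λ] [Algebra K Λ]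
  [IsScalarTower K L Λ]

variable {y θ y₂ θ₂ : Λ} {w n : ℕ} {γ : ℕ → ℕ → K}

/-- The span of the monomials indexed by `crossIndex`. -/
def crossSpan (L : Type*) [Field L] [Algebra L Λ] (y θ θ₂ : Λ) (ω n N : ℕ) : Submodule L Λ :=
  Submodule.span L ((fun s : ℕ × ℕ × ℕ => y ^ s.1 * θ ^ s.2.1 * θ₂ ^ s.2.2) ''
    (crossIndex ω n N : Set (ℕ × ℕ × ℕ)))

lemma monomial_mem_quotientSpan_sup_crossSpan (hG : weightedVal γ n (w + 1) y θ = 0)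
    (hG₂ : weightedVal γ n (w + 1) y₂ θ₂ = 0) (hy : y ≠ y₂) (hn : 1 ≤ n) (N l : ℕ) :
    ∀ k i, i + (w + 1) * (k + l) ≤ N → y ^ i * θ ^ k * θ₂ ^ l ∈
      quotientSpan L y θ y₂ θ₂ w N ⊔ crossSpan L y θ θ₂ (w + 1) n N := by
  induction l using Nat.strong_induction_on with
  | _ l ihl =>
  intro k
  induction k using Nat.strong_induction_on with
  | _ k ihk =>
  intro i hi
  by_cases hl : l < n - 1
  · by_cases hk : k < n
    · exact Submodule.mem_sup_right (Submodule.subset_span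
        ⟨(i, k, l), Finset.mem_coe.2 (mem_crossIndex.2 ⟨hi, hk, hl⟩), rfl⟩)
    · obtain ⟨m, rfl⟩ := Nat.exists_eq_add_of_le (not_lt.1 hk)
      have h1 : y ^ i * θ ^ (n + m) * θ₂ ^ l =
          - ∑ k ∈ Finset.range n, ∑ j ∈ Finset.range ((w + 1) * (n - k) + 1),
          algebraMap K Λ (γ k j) * (y ^ (i + j) * θ ^ (k + m) * θ₂ ^ l) := by
        have h2 : θ ^ n = - ∑ k ∈ Finset.range n, ∑ j ∈ Finset.range ((w + 1) * (n - k) + 1),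
          algebraMap K Λ (γ k j) * y ^ j * θ ^ k := eq_neg_of_add_eq_zero_left hG
        rw [pow_add, h2, neg_mul, mul_neg, neg_mul, Finset.sum_mul, Finset.mul_sum, Finset.sum_mul]
        congr 1
        refine Finset.sum_congr rfl fun k _ => ?_
        rw [Finset.sum_mul, Finset.mul_sum, Finset.sum_mul]
        refine Finset.sum_congr rfl fun j _ => ?_
        simp only [pow_add]; ring
      rw [h1]
      refine Submodule.neg_mem _ (Submodule.sum_mem _ fun k hk => Submodule.sum_mem _ fun j hj =>
        smul_mem_of_tower _ _ (ihk _ ?_ _ ?_))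
      · have := Finset.mem_range.1 hk; omega
      · have h3 := Finset.mem_range.1 hk
        have h4 := Finset.mem_range.1 hj
        obtain ⟨e, rfl⟩ := Nat.exists_eq_add_of_lt h3
        rw [show k + e + 1 - k = e + 1 by omega] at h4
        nlinarith
  · obtain ⟨m, rfl⟩ := Nat.exists_eq_add_of_le (not_lt.1 hl)
    obtain ⟨n, rfl⟩ := Nat.exists_eq_add_of_le' hn
    rw [show n + 1 - 1 = n by omega] at *
    set T := quotientSpan L y θ y₂ θ₂ w N ⊔ crossSpan L y θ θ₂ (w + 1) (n + 1) N with hT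
    set u := y ^ i * θ ^ k * θ₂ ^ m with hu
    have hdd : divDiff γ (n + 1) (w + 1) y θ θ₂ * u ∈ T := by
      refine Submodule.mem_sup_left ?_
      have h5 : i + (w + 1) * (k + m) + (w + 1) * (n + 1 - 1) ≤ N := by
        rw [Nat.add_sub_cancel]; nlinarith
      have h6 : u ∈ weightSpan L y θ y₂ θ₂ (w + 1) (N - (w + 1) * (n + 1 - 1)) := by
        have := mem_weightSpan (L := L) (y := y) (θ := θ) (y₂ := y₂) (θ₂ := θ₂) (i := i) (k := k)
          (j := 0) (l := m) (ω := w + 1) (N := N - (w + 1) * (n + 1 - 1)) (by omega)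
        simpa [hu] using this
      have h7 := divDiff_mul_mem_quotientSpan hG hG₂ hy hn h6
      rwa [Nat.sub_add_cancel (by omega)] at h7
    have hexp : y ^ i * θ ^ k * θ₂ ^ (n + m) = divDiff γ (n + 1) (w + 1) y θ θ₂ * u -
        (∑ a ∈ Finset.range n, θ ^ (a + 1) * θ₂ ^ (n - (a + 1)) * u +
        ∑ k ∈ Finset.range (n + 1), ∑ i ∈ Finset.range ((w + 1) * (n + 1 - k) + 1),
          algebraMap K Λ (γ k i) * ∑ a ∈ Finset.range k, y ^ i * (θ ^ a * θ₂ ^ (k - 1 - a)) * u) := by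
      have h8 : ∀ k i : ℕ, ∑ a ∈ Finset.range k, y ^ i * (θ ^ a * θ₂ ^ (k - 1 - a)) * u =
          y ^ i * (∑ a ∈ Finset.range k, θ ^ a * θ₂ ^ (k - 1 - a)) * u := fun k i => by
        rw [Finset.mul_sum, Finset.sum_mul]
      simp only [h8]
      simp only [← mul_assoc, ← Finset.sum_mul]
      rw [divDiff, Finset.sum_range_succ' (n := n), Nat.add_sub_cancel, pow_zero, Nat.sub_zero,
        hu, pow_add]
      simp only [← mul_assoc, ← Finset.sum_mul]
      ring
    rw [hexp]
    refine Submodule.sub_mem _ hdd (Submodule.add_mem _ ?_ ?_)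
    · refine Submodule.sum_mem _ fun a ha => ?_
      have ha := Finset.mem_range.1 ha
      have := ihl (n - (a + 1) + m) (by omega) (a + 1 + k) i (by
        rw [show a + 1 + k + (n - (a + 1) + m) = k + (n + m) by omega]; exact hi)
      convert this using 1
      rw [hu, pow_add, pow_add]; ring
    · refine Submodule.sum_mem _ fun k' hk' => Submodule.sum_mem _ fun j hj =>
        smul_mem_of_tower _ _ (Submodule.sum_mem _ fun a ha => ?_)
      have hk' := Finset.mem_range.1 hk'
      have hj := Finset.mem_range.1 hj
      have ha := Finset.mem_range.1 ha
      have := ihl (k' - 1 - a + m) (by omega) (a + k) (i + j) (by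
        rw [show a + k + (k' - 1 - a + m) = k + m + (k' - 1) by omega]
        obtain ⟨e, he⟩ := Nat.exists_eq_add_of_lt hk'
        rw [show n + 1 - k' = e + 1 by omega] at hj
        have : n + m = e + (k' - 1) + 1 + m := by omega
        rw [this] at hi
        nlinarith)
      convert this using 1
      rw [hu, pow_add, pow_add, pow_add]; ring

lemma weightSpan_le_quotientSpan_sup_crossSpan (hG : weightedVal γ n (w + 1) y θ = 0)
    (hG₂ : weightedVal γ n (w + 1) y₂ θ₂ = 0) (hy : y ≠ y₂) (hn : 1 ≤ n) (N : ℕ) :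
    weightSpan L y θ y₂ θ₂ (w + 1) N ≤
      quotientSpan L y θ y₂ θ₂ w N ⊔ crossSpan L y θ θ₂ (w + 1) n N := by
  refine Submodule.span_le.2 ?_
  rintro _ ⟨i, k, j, l, h, rfl⟩
  induction j generalizing i with
  | zero =>
    have := monomial_mem_quotientSpan_sup_crossSpan (L := L) hG hG₂ hy hn N l k i (by omega)
    simpa using this
  | succ j ih =>
    have h1 := ih (i + 1) (by omega)
    have h2 := sub_mul_mem_quotientSpan (L := L) hy (mem_weightSpan (L := L) (y := y) (θ := θ)
      (y₂ := y₂) (θ₂ := θ₂) (i := i) (k := k) (j := j) (l := l) (ω := w + 1) (N := N - 1) (by omega))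
    rw [show N - 1 + 1 = N by omega] at h2
    have h3 : y ^ i * θ ^ k * y₂ ^ (j + 1) * θ₂ ^ l = y ^ (i + 1) * θ ^ k * y₂ ^ j * θ₂ ^ l -
      (y - y₂) * (y ^ i * θ ^ k * y₂ ^ j * θ₂ ^ l) := by ring
    rw [h3]
    exact Submodule.sub_mem _ h1 (Submodule.mem_sup_left h2)

lemma finrank_le_finrank_inf_add_card {V Q : Submodule L Λ} {ι : Type*} (f : ι → Λ) (I : Finset ι)
    [Module.Finite L V] (h : V ≤ Q ⊔ Submodule.span L (f '' (I : Set ι))) :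
    Module.finrank L V ≤ Module.finrank L ↥(V ⊓ Q) + I.card := by
  classical
  set π := Q.mkQ.comp V.subtype
  have h1 := LinearMap.finrank_range_add_finrank_ker π
  have h2 : Module.finrank L (LinearMap.ker π) ≤ Module.finrank L ↥(V ⊓ Q) := by
    refine LinearMap.finrank_le_finrank_of_injective (f := LinearMap.codRestrict (V ⊓ Q)
      (V.subtype.comp (LinearMap.ker π).subtype) fun x => ⟨x.1.2, ?_⟩) ?_
    · exact (Submodule.Quotient.mk_eq_zero Q).1 (LinearMap.mem_ker.1 x.2)
    · intro x z hxz
      have := congrArg (fun t : ↥(V ⊓ Q) => (t : Λ)) hxz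
      exact Subtype.ext (Subtype.ext this)
  have h3 : Module.finrank L (LinearMap.range π) ≤ I.card := by
    have hle : LinearMap.range π ≤ Submodule.span L ((I.image fun s => Q.mkQ (f s) : Finset _) :
        Set (Λ ⧸ Q)) := by
      rintro _ ⟨x, rfl⟩
      obtain ⟨a, ha, b, hb, hab⟩ := Submodule.mem_sup.1 (h x.2)
      have hx : π x = Q.mkQ b := by
        change Q.mkQ (x : Λ) = _
        rw [← hab, map_add, Submodule.mkQ_apply, (Submodule.Quotient.mk_eq_zero Q).2 ha, zero_add]
      rw [hx]
      have := Submodule.mem_map_of_mem (f := Q.mkQ) hb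
      rw [Submodule.map_span, ← Set.image_comp] at this
      rw [Finset.coe_image]
      exact this
    have := FiniteDimensional.span_finset L (I.image fun s => Q.mkQ (f s))
    exact (Submodule.finrank_mono hle).trans
      ((finrank_span_finset_le_card _).trans Finset.card_image_le)
  omega

/-- A space of dimension larger than the total size of the successive cross spans contains an
element that can be multiplied `M` times by `(θ - θ₂) / (y - y₂)`. -/
lemma exists_pow_mul_mem_weightSpan (hG : weightedVal γ n (w + 1) y θ = 0)
    (hG₂ : weightedVal γ n (w + 1) y₂ θ₂ = 0) (hy : y ≠ y₂) (hθ : θ ≠ θ₂) (hn : 1 ≤ n) (M : ℕ) :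
    ∀ (N : ℕ) (V : Submodule L Λ), V ≤ weightSpan L y θ y₂ θ₂ (w + 1) N →
      ∑ i ∈ Finset.range M, (crossIndex (w + 1) n (N + i * w)).card < Module.finrank L V →
      ∃ h ∈ V, h ≠ 0 ∧
        ((θ - θ₂) / (y - y₂)) ^ M * h ∈ weightSpan L y θ y₂ θ₂ (w + 1) (N + M * w) := by
  set ξ := (θ - θ₂) / (y - y₂) with hξ
  have hξ0 : ξ ≠ 0 := div_ne_zero (sub_ne_zero.2 hθ) (sub_ne_zero.2 hy)
  induction M with
  | zero =>
    intro N V hV hdim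
    have : Module.Finite L V := Module.finite_of_finrank_pos (by omega)
    obtain ⟨⟨h, hh⟩, h0⟩ := Module.finrank_pos_iff_exists_ne_zero.1 (by omega : 0 < Module.finrank L V)
    exact ⟨h, hh, fun h' => h0 (Subtype.ext h'), by simpa using hV hh⟩
  | succ M ih =>
    intro N V hV hdim
    have : Module.Finite L V := Module.finite_of_finrank_pos (by omega)
    have h1 := finrank_le_finrank_inf_add_card
      (fun s : ℕ × ℕ × ℕ => y ^ s.1 * θ ^ s.2.1 * θ₂ ^ s.2.2) (crossIndex (w + 1) n N)
      (hV.trans (weightSpan_le_quotientSpan_sup_crossSpan hG hG₂ hy hn N))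
    rw [Finset.sum_range_succ'] at hdim
    obtain ⟨_, ⟨h, hh, rfl⟩, h0, hr⟩ := ih (N + w)
      ((V ⊓ quotientSpan L y θ y₂ θ₂ w N).map (LinearMap.mulLeft L ξ)) (by
        rintro _ ⟨h, hh, rfl⟩
        exact hh.2) (by
        rw [← (Submodule.equivMapOfInjective (LinearMap.mulLeft L ξ)
          (mul_right_injective₀ hξ0) _).finrank_eq]
        have h2 : ∀ i, N + w + i * w = N + (i + 1) * w := fun i => by ring
        simp only [h2]
        simp only [zero_mul, add_zero] at hdim
        omega)
    refine ⟨h, hh.1, fun h' => h0 (by simp [h']), ?_⟩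
    rw [pow_succ, mul_assoc, show N + (M + 1) * w = N + w + M * w by ring]
    exact hr

end Stepanov

section Stepanov

lemma sum_card_crossIndex_lt {w n M a b : ℕ} (hn : 2 ≤ n) (hM : M = (w + 1) * (n * (n - 1)))
    (hb : b + 1 = M) (ha : a = (w + 2) * (n - 1) * M) :
    ∑ i ∈ Finset.range M, (crossIndex (w + 1) n (a + b + i * w)).card <
      (redIndex (w + 1) n a).card * (redIndex (w + 1) n b).card := by
  have h1 : 2 * (redIndex (w + 1) n a).card + M = 2 * n * (a + 1) := by
    rw [hM]
    refine two_mul_card_redIndex ?_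
    have hMa : M ≤ a := by
      rw [ha]
      exact Nat.le_mul_of_pos_left _ (Nat.mul_pos (by omega) (by omega))
    have : (w + 1) * (n - 1) ≤ M := by
      rw [hM]; exact Nat.mul_le_mul_left _ (Nat.le_mul_of_pos_left _ (by omega))
    omega
  have h2 : 2 * (redIndex (w + 1) n b).card + M = 2 * n * M := by
    have : 2 * (redIndex (w + 1) n b).card + (w + 1) * (n * (n - 1)) = 2 * n * (b + 1) := by
      refine two_mul_card_redIndex ?_
      rw [hb, hM]
      exact Nat.mul_le_mul_left _ (Nat.le_mul_of_pos_left _ (by omega))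
    rw [hb, ← hM] at this
    exact this
  have h3 : ∀ i, 2 * (crossIndex (w + 1) n (a + b + i * w)).card + M * (2 * n - 3) =
      2 * (n * (n - 1)) * (a + M + i * w) := by
    intro i
    have := two_mul_card_crossIndex (ω := w + 1) (n := n) (N := a + b + i * w) (by
      have hMa : 2 * M ≤ a := by
        rw [ha]
        refine Nat.mul_le_mul_right _ ?_
        obtain ⟨m, rfl⟩ := Nat.exists_eq_add_of_le' hn
        simp only [show m + 2 - 1 = m + 1 by omega]
        nlinarith [Nat.zero_le (w * m)]
      have : (w + 1) * n ≤ M := by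
        rw [hM]; exact Nat.mul_le_mul_left _ (Nat.le_mul_of_pos_right _ (by omega))
      nlinarith [Nat.zero_le (i * w)]) hn
    rw [show a + M + i * w = a + b + i * w + 1 by omega, ← this, hM]
    ring
  have h4 : 2 * ∑ i ∈ Finset.range M, (crossIndex (w + 1) n (a + b + i * w)).card +
      M * (M * (2 * n - 3)) = 2 * (n * (n - 1)) * (M * (a + M)) +
        n * (n - 1) * w * (M * (M - 1)) := by
    have h5 := Finset.sum_congr (rfl : Finset.range M = _) fun i _ => h3 i
    rw [Finset.sum_add_distrib, ← Finset.mul_sum, ← Finset.mul_sum, ← Finset.mul_sum,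
      Finset.sum_add_distrib,
      ← Finset.sum_mul] at h5
    simp only [Finset.sum_const, Finset.card_range, smul_eq_mul] at h5
    rw [h5, ← Finset.sum_range_id_mul_two M]
    ring
  obtain ⟨m, rfl⟩ := Nat.exists_eq_add_of_le' hn
  simp only [show m + 2 - 1 = m + 1 by omega, show 2 * (m + 2) - 3 = 2 * m + 1 by omega] at *
  have hM1 : M - 1 = b := by omega
  rw [hM1] at h4
  set S := ∑ i ∈ Finset.range M, (crossIndex (w + 1) (m + 2) (a + b + i * w)).card
  set A := (redIndex (w + 1) (m + 2) a).card
  set B := (redIndex (w + 1) (m + 2) b).card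
  have hMpos : 0 < M := by omega
  zify at *
  have e1 : (2 * A : ℤ) = 2 * (m + 2) * (a + 1) - M := by linarith
  have e2 : (2 * B : ℤ) = M * (2 * m + 3) := by linarith
  have e3 : (2 * S : ℤ) = 2 * ((m + 2) * (m + 1)) * (M * (a + M)) +
        (m + 2) * (m + 1) * w * (M * (M - 1)) - M * (M * (2 * m + 1)) := by
    have : (b : ℤ) = M - 1 := by linarith
    rw [this] at h4
    linarith
  have e4 : (2 * A : ℤ) * (2 * B) - 2 * (2 * S) =
      M * (2 * (m + 2) * (2 * m + 3) + 2 * (m + 2) * (m + 1) * w + M * (2 * m - 1)) := by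
    rw [e1, e2, e3, ha]; ring
  have e5 : (0 : ℤ) < 2 * (m + 2) * (2 * m + 3) + 2 * (m + 2) * (m + 1) * w + M * (2 * m - 1) := by
    have hm : (0 : ℤ) ≤ m := by positivity
    have hw : (0 : ℤ) ≤ w := by positivity
    rw [hM]
    nlinarith [mul_nonneg hm hw, mul_nonneg hm hm, mul_nonneg (mul_nonneg hm hm) hw,
      mul_nonneg (mul_nonneg hm hm) hm, mul_nonneg (mul_nonneg (mul_nonneg hm hm) hm) hw]
  have e6 := mul_pos hMpos e5
  rw [← e4] at e6
  linarith

end Stepanov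

section Stepanov

variable {K L Λ : Type*} [Field K] [Field L] [Field Λ] [Algebra K L] [Algebra L Λ] [Algebra K Λ]
  [IsScalarTower K L Λ]

variable {y θ : Λ} {n ω : ℕ} {γ : ℕ → ℕ → K}

lemma exists_eq_sum_aeval_of_mem_weightSpan (hG : weightedVal γ n ω y θ = 0) {N : ℕ} {x : Λ}
    (hx : x ∈ weightSpan L y θ 1 1 ω N) : ∃ p : ℕ → Polynomial L, (∀ k, (p k).natDegree ≤ N) ∧
      x = ∑ k ∈ Finset.range n, Polynomial.aeval y (p k) * θ ^ k := by
  rw [weightSpan_eq_span_redIndex hG] at hx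
  induction hx using Submodule.span_induction with
  | mem x h =>
    obtain ⟨s, hs, rfl⟩ := h
    have hs := mem_redIndex.1 (Finset.mem_coe.1 hs)
    refine ⟨fun k => if k = s.2 then Polynomial.X ^ s.1 else 0, fun k => ?_, ?_⟩
    · simp only
      split_ifs
      · rw [Polynomial.natDegree_X_pow]; exact le_trans (Nat.le_add_right _ _) hs.1
      · simp
    · rw [Finset.sum_eq_single s.2]
      · simp
      · intro k _ hk; simp [hk]
      · intro h; exact absurd (Finset.mem_range.2 hs.2) h
  | zero => exact ⟨0, by simp, by simp⟩
  | add x z _ _ hx hz =>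
    obtain ⟨p, hp, rfl⟩ := hx
    obtain ⟨r, hr, rfl⟩ := hz
    refine ⟨p + r, fun k => Polynomial.natDegree_add_le_of_degree_le (hp k) (hr k), ?_⟩
    simp [add_mul, Finset.sum_add_distrib]
  | smul c x _ hx =>
    obtain ⟨p, hp, rfl⟩ := hx
    refine ⟨fun k => c • p k, fun k => (Polynomial.natDegree_smul_le _ _).trans (hp k), ?_⟩
    simp [Finset.smul_sum]

lemma exists_mem_weightSpan_of_mem_adjoin {x : Λ} (ω : ℕ) (hx : x ∈ Algebra.adjoin L {y, θ}) :
    ∃ N, x ∈ weightSpan L y θ 1 1 ω N := by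
  induction hx using Algebra.adjoin_induction with
  | mem x h =>
    rcases h with rfl | rfl
    · refine ⟨1, ?_⟩
      simpa using mem_weightSpan (L := L) (y := x) (θ := θ) (y₂ := 1) (θ₂ := 1) (ω := ω) (N := 1)
        (i := 1) (k := 0) (j := 0) (l := 0) (by simp)
    · refine ⟨ω, ?_⟩
      simpa using mem_weightSpan (L := L) (y := y) (θ := x) (y₂ := 1) (θ₂ := 1) (ω := ω) (N := ω)
        (i := 0) (k := 1) (j := 0) (l := 0) (by simp)
  | algebraMap c =>
    refine ⟨0, ?_⟩
    rw [Algebra.algebraMap_eq_smul_one]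
    refine Submodule.smul_mem _ _ ?_
    simpa using mem_weightSpan (L := L) (y := y) (θ := θ) (y₂ := 1) (θ₂ := 1) (ω := ω) (N := 0)
        (i := 0) (k := 0) (j := 0) (l := 0) (by simp)
  | add x z _ _ hx hz =>
    obtain ⟨N, hN⟩ := hx
    obtain ⟨M, hM⟩ := hz
    exact ⟨max N M, Submodule.add_mem _ (weightSpan_mono (le_max_left _ _) hN)
      (weightSpan_mono (le_max_right _ _) hM)⟩
  | mul x z _ _ hx hz =>
    obtain ⟨N, hN⟩ := hx
    obtain ⟨M, hM⟩ := hz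
    exact ⟨N + M, mul_mem_weightSpan hN hM⟩

lemma weightSpan_le_adjoin {y₂ θ₂ : Λ} {N : ℕ} (hy₂ : y₂ ∈ Algebra.adjoin L {y, θ})
    (hθ₂ : θ₂ ∈ Algebra.adjoin L {y, θ}) :
    weightSpan L y θ y₂ θ₂ ω N ≤ (Algebra.adjoin L {y, θ}).toSubmodule := by
  refine Submodule.span_le.2 ?_
  rintro _ ⟨i, k, j, l, -, rfl⟩
  have h1 : y ∈ Algebra.adjoin L {y, θ} := Algebra.subset_adjoin (by simp)
  have h2 : θ ∈ Algebra.adjoin L {y, θ} := Algebra.subset_adjoin (by simp)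
  change _ ∈ Algebra.adjoin L {y, θ}
  exact mul_mem (mul_mem (mul_mem (pow_mem h1 i) (pow_mem h2 k)) (pow_mem hy₂ j)) (pow_mem hθ₂ l)

/-- An element of small weight that is divisible by a monic polynomial in `y` of large degree
vanishes. -/
lemma eq_zero_of_eq_aeval_mul (hG : weightedVal γ n ω y θ = 0)
    (hfree : ∀ p : ℕ → Polynomial L, ∑ k ∈ Finset.range n, Polynomial.aeval y (p k) * θ ^ k = 0 →
      ∀ k < n, p k = 0) {N : ℕ} {h r : Λ} (hh : h ∈ weightSpan L y θ 1 1 ω N)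
    (hr : r ∈ Algebra.adjoin L {y, θ}) {E : Polynomial L} (hE : E.Monic) (hN : N < E.natDegree)
    (heq : h = Polynomial.aeval y E * r) : h = 0 := by
  obtain ⟨p, hp, hpe⟩ := exists_eq_sum_aeval_of_mem_weightSpan hG hh
  obtain ⟨M, hM⟩ := exists_mem_weightSpan_of_mem_adjoin ω hr
  obtain ⟨t, -, hte⟩ := exists_eq_sum_aeval_of_mem_weightSpan hG hM
  have h1 := hfree (fun k => p k - E * t k) (by
    simp only [map_sub, map_mul, sub_mul, Finset.sum_sub_distrib]
    rw [← hpe, heq, hte, Finset.mul_sum, sub_eq_zero]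
    exact Finset.sum_congr rfl fun k _ => (mul_assoc _ _ _).symm)
  rw [heq, hte, Finset.sum_eq_zero, mul_zero]
  intro k hk
  have h2 := sub_eq_zero.1 (h1 k (Finset.mem_range.1 hk))
  have h3 : t k = 0 := by
    by_contra h0
    have := hp k
    rw [h2, hE.natDegree_mul' h0] at this
    omega
  simp [h3]

lemma isCoprime_sub_of_weightedVal_ne_zero {R : Type*} [CommRing R] [Algebra K R] {y θ : R}
    (hG : weightedVal γ n ω y θ = 0) {a b : K} (hab : weightedVal γ n ω a b ≠ 0) :
    IsCoprime (θ - algebraMap K R b) (y - algebraMap K R a) := by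
  set I := Ideal.span {θ - algebraMap K R b, y - algebraMap K R a} with hI
  set π := Ideal.Quotient.mkₐ K I with hπ
  have h1 : π y = algebraMap K _ a := by
    rw [← π.commutes, ← sub_eq_zero, ← map_sub, hπ, Ideal.Quotient.mkₐ_eq_mk,
      Ideal.Quotient.eq_zero_iff_mem]
    exact Ideal.subset_span (by simp)
  have h2 : π θ = algebraMap K _ b := by
    rw [← π.commutes, ← sub_eq_zero, ← map_sub, hπ, Ideal.Quotient.mkₐ_eq_mk,
      Ideal.Quotient.eq_zero_iff_mem]
    exact Ideal.subset_span (by simp)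
  have h3 := map_weightedVal π γ n ω y θ
  rw [hG, map_zero, h1, h2] at h3
  have h4 := map_weightedVal (Algebra.ofId K (R ⧸ I)) γ n ω a b
  rw [Algebra.ofId_apply, Algebra.ofId_apply, Algebra.ofId_apply, ← h3] at h4
  have h5 : (1 : R) ∈ I := by
    rw [← Ideal.Quotient.eq_zero_iff_mem, map_one]
    have h6 := congrArg (algebraMap K (R ⧸ I) (weightedVal γ n ω a b)⁻¹ * ·) h4
    simp only [← map_mul, inv_mul_cancel₀ hab, map_one, mul_zero] at h6
    exact h6
  obtain ⟨s, t, hst⟩ := Ideal.mem_span_pair.1 h5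
  exact ⟨s, t, hst⟩

lemma prod_sub_algebraMap_eq {R : Type*} [CommRing R] [Fintype K] [Algebra K R] (x : R) :
    ∏ c : K, (x - algebraMap K R c) = x ^ Fintype.card K - x := by
  have h : ∏ c : K, (Polynomial.X - Polynomial.C c) =
      (Polynomial.X ^ Fintype.card K - Polynomial.X : Polynomial K) := by
    have h1 := Polynomial.prod_multiset_X_sub_C_of_monic_of_roots_card_eq
      (p := (Polynomial.X ^ Fintype.card K - Polynomial.X : Polynomial K))
      (Polynomial.monic_X_pow_sub (by
        rw [Polynomial.degree_X]; exact_mod_cast Fintype.one_lt_card))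
      (by rw [FiniteField.roots_X_pow_card_sub_X,
            FiniteField.X_pow_card_sub_X_natDegree_eq K Fintype.one_lt_card]; rfl)
    rw [FiniteField.roots_X_pow_card_sub_X] at h1
    exact h1
  have := congrArg (Polynomial.aeval x) h
  simpa [map_prod] using this

end Stepanov

section Stepanov

variable {K L Λ : Type*} [Field K] [Field L] [Field Λ] [Algebra K L] [Algebra L Λ] [Algebra K Λ]
  [IsScalarTower K L Λ]

variable {y θ : Λ} {n ω : ℕ} {γ : ℕ → ℕ → K}

lemma algebraMap_ne_of_free {L Λ : Type*} [Field L] [Field Λ] [Algebra L Λ] {y θ : Λ} {n : ℕ}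
    (hn : 2 ≤ n)
    (hfree : ∀ p : ℕ → Polynomial L, ∑ k ∈ Finset.range n, Polynomial.aeval y (p k) * θ ^ k = 0 →
      ∀ k < n, p k = 0) (c : L) : θ ≠ algebraMap L Λ c := by
  intro h
  have h1 := hfree (fun k => if k = 0 then Polynomial.C (-c) else if k = 1 then 1 else 0) (by
    obtain ⟨m, rfl⟩ := Nat.exists_eq_add_of_le' hn
    rw [Finset.sum_range_succ', Finset.sum_range_succ', Finset.sum_eq_zero]
    · simp [h]
    · intro k _; simp) 1 (by omega)
  simp at h1

lemma finrank_span_mul_pow [Fintype K] (v : DiscretePlace L Λ) {a b : ℕ} {κ : ℤ}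
    (hκ : 0 ≤ κ) (hy : y ∈ v.ge (-κ)) (hθ : θ ∈ v.ge (-κ * ω))
    (hord : ∀ P : Polynomial L, P ≠ 0 → v.ord (Polynomial.aeval y P) ≤ (1 - κ) * P.natDegree)
    (hκ1 : κ ≤ 1) (hroot : ∀ c : L, ∃ e : L, e ^ Fintype.card K = c)
    (hG : weightedVal γ n ω y θ = 0) (hn : 1 ≤ n)
    (hfree : ∀ p : ℕ → Polynomial L, ∑ k ∈ Finset.range n, Polynomial.aeval y (p k) * θ ^ k = 0 →
      ∀ k < n, p k = 0) (ha : n * a < Fintype.card K) :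
    Module.finrank L (Submodule.span L
      ((fun s : (ℕ × ℕ) × (ℕ × ℕ) =>
        y ^ s.1.1 * θ ^ s.1.2 * (y ^ s.2.1 * θ ^ s.2.2) ^ Fintype.card K) ''
        (redIndex ω n a ×ˢ redIndex ω n b : Finset ((ℕ × ℕ) × (ℕ × ℕ))))) =
      (redIndex ω n a).card * (redIndex ω n b).card := by
  have h : LinearIndepOn L (fun s : (ℕ × ℕ) × (ℕ × ℕ) =>
        y ^ s.1.1 * θ ^ s.1.2 * (y ^ s.2.1 * θ ^ s.2.2) ^ Fintype.card K)
        (redIndex ω n a ×ˢ redIndex ω n b : Finset ((ℕ × ℕ) × (ℕ × ℕ))) := by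
    rw [linearIndepOn_finset_iff]
    intro c hc s hs
    rw [Finset.sum_product] at hc
    rw [Finset.mem_product] at hs
    exact v.coeff_eq_zero_of_sum_mul_pow_eq_zero hκ hy hθ hord hκ1 hroot hG hn hfree ha
      (fun s t => c (s, t)) hc s.1 hs.1 s.2 hs.2
  rw [Set.image_eq_range]
  have := finrank_span_eq_card h
  simpa using this

/-- Stepanov's method: an irreducible equation of bounded weight that has a suitable place has a
rational solution outside a given vertical line. -/
theorem exists_weightedVal_eq_zero [Fintype K] (v : DiscretePlace L Λ) {w : ℕ} {κ : ℤ}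
    (hκ : 0 ≤ κ) (hy : y ∈ v.ge (-κ)) (hθ : θ ∈ v.ge (-κ * (w + 1 : ℕ)))
    (hord : ∀ P : Polynomial L, P ≠ 0 → v.ord (Polynomial.aeval y P) ≤ (1 - κ) * P.natDegree)
    (hκ1 : κ ≤ 1) (hroot : ∀ c : L, ∃ e : L, e ^ Fintype.card K = c)
    (hG : weightedVal γ n (w + 1) y θ = 0) (hn : 2 ≤ n)
    (hfree : ∀ p : ℕ → Polynomial L, ∑ k ∈ Finset.range n, Polynomial.aeval y (p k) * θ ^ k = 0 →
      ∀ k < n, p k = 0)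
    (hq : (w + 1) * (w + 2) * (n ^ 2 * (n - 1) ^ 2) < Fintype.card K) (c : K) :
    ∃ y₀ : K, y₀ ≠ c ∧ ∃ u₀ : K, weightedVal γ n (w + 1) y₀ u₀ = 0 := by
  classical
  by_contra! hcon
  set q := Fintype.card K with hqdef
  have hq0 : 1 < q := Fintype.one_lt_card
  obtain ⟨m, rfl⟩ := Nat.exists_eq_add_of_le' hn
  obtain ⟨M, hM⟩ : ∃ M, M = (w + 1) * ((m + 2) * (m + 2 - 1)) := ⟨_, rfl⟩
  obtain ⟨b, hb⟩ : ∃ b, b + 1 = M := by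
    refine ⟨M - 1, Nat.sub_add_cancel ?_⟩
    rw [hM, show m + 2 - 1 = m + 1 by omega]; exact Nat.succ_le_of_lt (by positivity)
  obtain ⟨a, ha⟩ : ∃ a, a = (w + 2) * (m + 2 - 1) * M := ⟨_, rfl⟩
  have hcount := sum_card_crossIndex_lt hn hM hb ha
  have hna : (m + 2) * a < q := by
    refine lt_of_eq_of_lt ?_ hq
    rw [ha, hM]; simp only [show m + 2 - 1 = m + 1 by omega]; ring
  have haM : a + M < q := by
    refine lt_of_le_of_lt ?_ hna
    have : M ≤ a := by
      rw [ha]; exact Nat.le_mul_of_pos_left _ (by simp)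
    nlinarith
  have hinj := aeval_injective_of_free (by omega) hfree
  set φ := FiniteField.frobeniusAlgHom K Λ with hφ
  have hφa : ∀ x, φ x = x ^ q := fun x => by rw [hφ, FiniteField.coe_frobeniusAlgHom]
  have hG₂ : weightedVal γ (m + 2) (w + 1) (y ^ q) (θ ^ q) = 0 := by
    rw [← hφa, ← hφa, ← map_weightedVal, hG, map_zero]
  have hyne : y ≠ y ^ q := by
    intro h
    have h1 : (Polynomial.X : Polynomial L) = Polynomial.X ^ q := hinj (by simpa using h)
    have := congrArg Polynomial.natDegree h1
    simp at this; omega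
  have hθne : θ ≠ θ ^ q := by
    intro h
    have h1 := prod_sub_algebraMap_eq (K := K) θ
    rw [← hqdef, ← h, sub_self, Finset.prod_eq_zero_iff] at h1
    obtain ⟨c', -, hc'⟩ := h1
    rw [IsScalarTower.algebraMap_apply K L Λ] at hc'
    exact algebraMap_ne_of_free hn hfree _ (sub_eq_zero.1 hc')
  set V := Submodule.span L
      ((fun s : (ℕ × ℕ) × (ℕ × ℕ) =>
        y ^ s.1.1 * θ ^ s.1.2 * (y ^ s.2.1 * θ ^ s.2.2) ^ q) ''
        (redIndex (w + 1) (m + 2) a ×ˢ redIndex (w + 1) (m + 2) b :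
          Finset ((ℕ × ℕ) × (ℕ × ℕ)))) with hV
  have hVrank : Module.finrank L V = _ :=
    finrank_span_mul_pow v hκ hy hθ hord hκ1 hroot hG (by omega) hfree hna (b := b)
  have hV1 : V ≤ weightSpan L y θ (y ^ q) (θ ^ q) (w + 1) (a + b) := by
    refine Submodule.span_le.2 ?_
    rintro _ ⟨s, hs, rfl⟩
    obtain ⟨hs1, hs2⟩ := Finset.mem_product.1 (Finset.mem_coe.1 hs)
    have hs1 := (mem_redIndex.1 hs1).1
    have hs2 := (mem_redIndex.1 hs2).1
    have := mem_weightSpan (L := L) (y := y) (θ := θ) (y₂ := y ^ q) (θ₂ := θ ^ q) (N := a + b)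
      (i := s.1.1) (k := s.1.2) (j := s.2.1) (l := s.2.2) (ω := w + 1) (by nlinarith)
    refine (congrArg (· ∈ weightSpan _ _ _ _ _ _ _) ?_).mpr this
    ring
  have hV2 : V ≤ weightSpan L y θ 1 1 (w + 1) (a + q * b) := by
    refine Submodule.span_le.2 ?_
    rintro _ ⟨s, hs, rfl⟩
    obtain ⟨hs1, hs2⟩ := Finset.mem_product.1 (Finset.mem_coe.1 hs)
    have hs1 := (mem_redIndex.1 hs1).1
    have hs2 := (mem_redIndex.1 hs2).1
    have := mem_weightSpan (L := L) (y := y) (θ := θ) (y₂ := 1) (θ₂ := 1) (N := a + q * b)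
      (i := s.1.1 + q * s.2.1) (k := s.1.2 + q * s.2.2) (j := 0) (l := 0) (ω := w + 1) (by
        have := Nat.mul_le_mul_left q hs2
        nlinarith)
    refine (congrArg (· ∈ weightSpan _ _ _ _ _ _ _) ?_).mpr this
    ring
  rw [← hVrank] at hcount
  obtain ⟨h, hhV, hh0, hr⟩ := exists_pow_mul_mem_weightSpan hG hG₂ hyne hθne (by omega) M _ V hV1
    hcount
  set S := Algebra.adjoin L {y, θ} with hS
  have hyS : y ∈ S := Algebra.subset_adjoin (by simp)
  have hθS : θ ∈ S := Algebra.subset_adjoin (by simp)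
  have hrS := weightSpan_le_adjoin (pow_mem hyS q) (pow_mem hθS q) hr
  have hhS := weightSpan_le_adjoin (one_mem S) (one_mem S) (hV2 hhV)
  set r : S := ⟨_, hrS⟩ with hrdef
  set h' : S := ⟨h, hhS⟩ with hh'
  set y' : S := ⟨y, hyS⟩ with hy'
  set θ' : S := ⟨θ, hθS⟩ with hθ'
  have hkey : (θ' ^ q - θ') ^ M * h' = (y' ^ q - y') ^ M * r := by
    apply Subtype.ext
    have hyq : y - y ^ q ≠ 0 := sub_ne_zero.2 hyne
    change (θ ^ q - θ) ^ M * h = (y ^ q - y) ^ M * (((θ - θ ^ q) / (y - y ^ q)) ^ M * h)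
    rw [← mul_assoc, ← mul_pow, ← neg_sub y, neg_mul, mul_div_cancel₀ _ hyq, neg_sub]
  have hGS : weightedVal γ (m + 2) (w + 1) y' θ' = 0 := by
    have h1 := map_weightedVal (S.val.restrictScalars K) γ (m + 2) (w + 1) y' θ'
    apply Subtype.val_injective
    exact h1.trans hG
  set E₁ : S := ∏ y₀ ∈ Finset.univ.erase c, (y' - algebraMap K S y₀) with hE₁
  have hfac : y' ^ q - y' = E₁ * (y' - algebraMap K S c) := by
    rw [← prod_sub_algebraMap_eq (K := K), hE₁, Finset.prod_erase_mul _ _ (Finset.mem_univ c)]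
  have hcop : IsCoprime (E₁ ^ M) ((θ' ^ q - θ') ^ M) := by
    apply IsCoprime.pow
    rw [← prod_sub_algebraMap_eq (K := K) θ']
    refine IsCoprime.prod_left fun y₀ hy₀ => IsCoprime.prod_right fun u₀ _ => ?_
    exact (isCoprime_sub_of_weightedVal_ne_zero hGS
      (hcon y₀ (Finset.ne_of_mem_erase hy₀) u₀)).symm
  have hdvd : E₁ ^ M ∣ h' := by
    refine hcop.dvd_of_dvd_mul_left ?_
    rw [hkey, hfac, mul_pow, mul_assoc]
    exact dvd_mul_right _ _
  obtain ⟨t, ht⟩ := hdvd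
  set E : Polynomial L := (∏ y₀ ∈ Finset.univ.erase c,
    (Polynomial.X - Polynomial.C (algebraMap K L y₀))) ^ M with hE
  have hmon : (∏ y₀ ∈ Finset.univ.erase c,
    (Polynomial.X - Polynomial.C (algebraMap K L y₀))).Monic :=
    Polynomial.monic_prod_of_monic _ _ fun y₀ _ => Polynomial.monic_X_sub_C _
  refine hh0 (eq_zero_of_eq_aeval_mul hG hfree (hV2 hhV) t.2 (E := E) (hmon.pow _) ?_ ?_)
  · rw [hE, hmon.natDegree_pow, Polynomial.natDegree_prod_of_monic _ _
      fun y₀ _ => Polynomial.monic_X_sub_C _]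
    simp only [Polynomial.natDegree_X_sub_C, Finset.sum_const, smul_eq_mul, mul_one,
      Finset.card_erase_of_mem (Finset.mem_univ c), Finset.card_univ, ← hqdef]
    obtain ⟨q', hq'⟩ : ∃ q', q = q' + 1 := ⟨q - 1, by omega⟩
    rw [hq'] at haM ⊢
    subst hb
    simp only [Nat.add_sub_cancel]
    nlinarith
  · have := congrArg (Subtype.val) ht
    rw [hh'] at this
    simp only at this
    rw [this, hE, hE₁]
    simp [map_prod, ← IsScalarTower.algebraMap_apply K L Λ, hy']

end Stepanov

section LaurentPlace

lemma PowerSeries.exists_eq_add_X_mul_eval {L : Type*} [Field L] (A : PowerSeries L)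
    (P : Polynomial (PowerSeries L)) : ∃ s : PowerSeries L, s = A + PowerSeries.X * P.eval s := by
  set T : PowerSeries L → PowerSeries L := fun s => A + PowerSeries.X * P.eval s with hT
  have hcontr : ∀ k s t, (PowerSeries.X : PowerSeries L) ^ k ∣ s - t →
      (PowerSeries.X : PowerSeries L) ^ (k + 1) ∣ T s - T t := by
    intro k s t h
    have h1 : T s - T t = PowerSeries.X * (P.eval s - P.eval t) := by simp only [hT]; ring
    rw [h1, pow_succ']
    exact mul_dvd_mul_left _ (h.trans (Polynomial.sub_dvd_eval_sub _ _ _))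
  have hstep : ∀ n, (PowerSeries.X : PowerSeries L) ^ n ∣ T^[n + 1] 0 - T^[n] 0 := by
    intro n
    induction n with
    | zero => simp
    | succ n ih =>
      rw [Function.iterate_succ_apply' T (n + 1), Function.iterate_succ_apply' T n]
      exact hcontr _ _ _ (by rwa [← Function.iterate_succ_apply' T n])
  have hfar : ∀ n m, (PowerSeries.X : PowerSeries L) ^ n ∣ T^[n + m] 0 - T^[n] 0 := by
    intro n m
    induction m with
    | zero => simp
    | succ m ih =>
      have := dvd_add ((pow_dvd_pow _ (Nat.le_add_right n m)).trans (hstep (n + m))) ih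
      rwa [sub_add_sub_cancel] at this
  refine ⟨PowerSeries.mk fun n => PowerSeries.coeff n (T^[n + 1] 0), ?_⟩
  set s : PowerSeries L := PowerSeries.mk fun n => PowerSeries.coeff n (T^[n + 1] 0) with hs
  have happrox : ∀ n, (PowerSeries.X : PowerSeries L) ^ n ∣ s - T^[n] 0 := by
    intro n
    rw [PowerSeries.X_pow_dvd_iff]
    intro m hm
    obtain ⟨k, rfl⟩ := Nat.exists_eq_add_of_le (Nat.succ_le_of_lt hm)
    have := PowerSeries.X_pow_dvd_iff.1 (hfar (m + 1) k) m (by omega)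
    rw [map_sub, sub_eq_zero] at this
    rw [map_sub, hs, PowerSeries.coeff_mk, sub_eq_zero, ← this]
  change s = T s
  ext n
  have h1 := PowerSeries.X_pow_dvd_iff.1 (happrox (n + 2)) n (by omega)
  have h2 := PowerSeries.X_pow_dvd_iff.1 (hcontr _ _ _ (happrox (n + 1))) n (by omega)
  rw [← Function.iterate_succ_apply' T (n + 1)] at h2
  rw [map_sub, sub_eq_zero] at h1 h2
  rw [h1, h2]

/-- The field of Laurent series over `L`, as an algebra over every subfield of `L`. -/
def LaurentField (L : Type*) [Field L] : Type _ := LaurentSeries L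

namespace LaurentField

variable {L : Type*} [Field L]

noncomputable instance : Field (LaurentField L) := inferInstanceAs (Field (LaurentSeries L))

noncomputable instance {K : Type*} [Field K] [Algebra K L] : Algebra K (LaurentField L) :=
  ((HahnSeries.C : L →+* LaurentSeries L).comp (algebraMap K L)).toAlgebra

instance {K : Type*} [Field K] [Algebra K L] : IsScalarTower K L (LaurentField L) :=
  IsScalarTower.of_algebraMap_eq fun _ => rfl

/-- The coefficients of a Laurent series. -/
def coeff (x : LaurentField L) (k : ℤ) : L := HahnSeries.coeff x k

/-- The inclusion of power series into Laurent series. -/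
noncomputable def ofPowerSeries : PowerSeries L →+* LaurentField L :=
  HahnSeries.ofPowerSeries ℤ L

/-- The inverse of the variable. -/
noncomputable def invX : LaurentField L := (HahnSeries.single (-1) 1 : LaurentSeries L)

@[simp] lemma coeff_add (x z : LaurentField L) (k : ℤ) :
    (x + z).coeff k = x.coeff k + z.coeff k := HahnSeries.coeff_add

@[simp] lemma coeff_sub (x z : LaurentField L) (k : ℤ) :
    (x - z).coeff k = x.coeff k - z.coeff k := HahnSeries.coeff_sub

@[simp] lemma coeff_zero (k : ℤ) : (0 : LaurentField L).coeff k = 0 := rfl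

@[simp] lemma coeff_smul (c : L) (x : LaurentField L) (k : ℤ) :
    (c • x).coeff k = c * x.coeff k := by
  rw [Algebra.smul_def]
  exact (congrArg (HahnSeries.coeff · k) (HahnSeries.C_mul_eq_smul (r := c) (x := x))).trans
    HahnSeries.coeff_smul

lemma coeff_ofPowerSeries (s : PowerSeries L) (k : ℕ) :
    (ofPowerSeries s).coeff k = PowerSeries.coeff k s :=
  HahnSeries.ofPowerSeries_apply_coeff s k

lemma coeff_ofPowerSeries_of_neg (s : PowerSeries L) {k : ℤ} (hk : k < 0) :
    (ofPowerSeries s).coeff k = 0 := by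
  have := PowerSeries.coeff_coe (R := L) s k
  rw [if_pos hk] at this
  exact this

lemma ofPowerSeries_injective : Function.Injective (ofPowerSeries (L := L)) :=
  HahnSeries.ofPowerSeries_injective

@[simp] lemma ofPowerSeries_C (c : L) :
    ofPowerSeries (PowerSeries.C c) = algebraMap L (LaurentField L) c :=
  HahnSeries.ofPowerSeries_C c

lemma invX_mul_ofPowerSeries_X : invX * ofPowerSeries (PowerSeries.X : PowerSeries L) = 1 := by
  have : (HahnSeries.single (-1 : ℤ) (1 : L)) *
      HahnSeries.ofPowerSeries ℤ L (PowerSeries.X : PowerSeries L) = 1 := by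
    rw [HahnSeries.ofPowerSeries_X, HahnSeries.single_mul_single]; simp
  exact this

lemma invX_pow (n : ℕ) :
    (invX : LaurentField L) ^ n = (HahnSeries.single (-n : ℤ) (1 : L) : LaurentSeries L) := by
  have := HahnSeries.single_pow (-1 : ℤ) n (1 : L)
  rw [one_pow] at this
  rw [show n • (-1 : ℤ) = -n by simp] at this
  exact this

lemma coeff_invX_pow (n : ℕ) (k : ℤ) :
    ((invX : LaurentField L) ^ n).coeff k = if k = -n then 1 else 0 := by
  rw [invX_pow]
  split_ifs with h
  · subst h; exact HahnSeries.coeff_single_same _ _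
  · exact HahnSeries.coeff_single_of_ne h

@[simp] lemma coeff_sum {ι : Type*} (I : Finset ι) (x : ι → LaurentField L) (k : ℤ) :
    (∑ i ∈ I, x i).coeff k = ∑ i ∈ I, (x i).coeff k := by
  classical
  induction I using Finset.induction_on with
  | empty => simp
  | insert a I ha ih => simp [Finset.sum_insert ha, ih]

variable (L) in
/-- The place of the field of Laurent series given by the order. -/
noncomputable def place : DiscretePlace L (LaurentField L) where
  ord x := HahnSeries.order (x : LaurentSeries L)
  ge m :=
    { carrier := {x | ∀ k < m, x.coeff k = 0}
      add_mem' := fun {x z} hx hz k hk => by simp [hx k hk, hz k hk]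
      zero_mem' := fun k _ => by simp
      smul_mem' := fun c x hx k hk => by simp [hx k hk] }
  ord_mul := HahnSeries.order_mul
  mem_ge := fun {m x} hx => by
    constructor
    · intro h
      by_contra! hlt
      exact HahnSeries.coeff_order_eq_zero.not.2 hx (h _ hlt)
    · intro h k hk
      exact HahnSeries.coeff_eq_zero_of_lt_order (lt_of_lt_of_le hk h)
  exists_sub_smul_mem := fun {x z} hz hx => by
    set m := HahnSeries.order (z : LaurentSeries L) with hm
    have hz' : z.coeff m ≠ 0 := HahnSeries.coeff_order_eq_zero.not.2 hz
    refine ⟨x.coeff m / z.coeff m, fun k hk => ?_⟩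
    rcases lt_or_eq_of_le (Int.lt_add_one_iff.1 hk) with h | rfl
    · have h1 : x.coeff k = 0 := hx k h
      have h2 : z.coeff k = 0 := HahnSeries.coeff_eq_zero_of_lt_order h
      simp [h1, h2]
    · simp [div_mul_cancel₀ _ hz']

lemma place_ord_le {x : LaurentField L} {k : ℤ} (h : x.coeff k ≠ 0) :
    (place L).ord x ≤ k := HahnSeries.order_le_of_coeff_ne_zero h

lemma ofPowerSeries_mem_place_ge (s : PowerSeries L) {m : ℤ} (hm : m ≤ 0) :
    ofPowerSeries s ∈ (place L).ge m := fun _ hk => coeff_ofPowerSeries_of_neg s (by omega)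

lemma place_ord_aeval_invX_le {P : Polynomial L} (hP : P ≠ 0) :
    (place L).ord (Polynomial.aeval invX P) ≤ -P.natDegree := by
  apply place_ord_le
  rw [Polynomial.aeval_eq_sum_range, coeff_sum, Finset.sum_eq_single P.natDegree]
  · rw [coeff_smul, coeff_invX_pow, if_pos rfl, mul_one]
    exact Polynomial.leadingCoeff_ne_zero.2 hP
  · intro k _ hk
    rw [coeff_smul, coeff_invX_pow, if_neg (by omega), mul_zero]
  · intro h; simp at h

lemma aeval_ofPowerSeries (s : PowerSeries L) (P : Polynomial L) :
    Polynomial.aeval (ofPowerSeries s) P =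
      ofPowerSeries (P.eval₂ PowerSeries.C s) := by
  rw [Polynomial.hom_eval₂, Polynomial.aeval_def]
  congr 1
  ext c : 1
  exact (ofPowerSeries_C c).symm

lemma eval₂_C_add_X (c : L) (P : Polynomial L) :
    P.eval₂ PowerSeries.C (PowerSeries.C c + PowerSeries.X) =
      (Polynomial.taylor c P).toPowerSeries := by
  rw [Polynomial.taylor_apply, Polynomial.comp, ← Polynomial.coeToPowerSeries.ringHom_apply,
    Polynomial.hom_eval₂]
  simp only [map_add, Polynomial.coeToPowerSeries.ringHom_apply, Polynomial.coe_X,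
    Polynomial.coe_C, add_comm]
  congr 1
  ext : 1
  simp

lemma place_ord_aeval_C_add_X_le (c : L) {P : Polynomial L} (hP : P ≠ 0) :
    (place L).ord (Polynomial.aeval
      (ofPowerSeries (PowerSeries.C c + PowerSeries.X)) P) ≤ P.natDegree := by
  apply place_ord_le
  rw [aeval_ofPowerSeries, coeff_ofPowerSeries, eval₂_C_add_X, Polynomial.coeff_coe,
    Polynomial.coeff_taylor_natDegree]
  exact Polynomial.leadingCoeff_ne_zero.2 hP

end LaurentField

end LaurentPlace

section WeightedDegree

/-- The substitution `X ↦ Z`, `Y ↦ V Z` from `K[X][Y]` to `K[V][Z]`, whose degree in `Z` is the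
total degree. -/
noncomputable def totalDegreeHom (K : Type*) [Field K] :
    Polynomial (Polynomial K) →+* Polynomial (Polynomial K) :=
  Polynomial.eval₂RingHom (Polynomial.mapRingHom Polynomial.C)
    (Polynomial.C Polynomial.X * Polynomial.X)

variable {K : Type*} [Field K]

lemma coeff_coeff_totalDegreeHom (P : Polynomial (Polynomial K)) (m k : ℕ) :
    ((totalDegreeHom K P).coeff m).coeff k = if k ≤ m then (P.coeff k).coeff (m - k) else 0 := by
  induction P using Polynomial.induction_on' with
  | add p r hp hr =>
    rw [map_add, Polynomial.coeff_add, Polynomial.coeff_add, hp, hr]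
    split_ifs <;> simp
  | monomial j a =>
    have h : totalDegreeHom K (Polynomial.monomial j a) =
        Polynomial.map Polynomial.C a * Polynomial.C (Polynomial.X ^ j) * Polynomial.X ^ j := by
      simp [totalDegreeHom, mul_pow, mul_assoc]
    have h' : ∀ i, ((Polynomial.map Polynomial.C a * Polynomial.C (Polynomial.X ^ j)).coeff i).coeff k
        = if k = j then a.coeff i else 0 := by
      intro i
      rw [Polynomial.coeff_mul_C, Polynomial.coeff_map, Polynomial.coeff_C_mul,
        Polynomial.coeff_X_pow, mul_ite, mul_one, mul_zero]
    rw [h, Polynomial.coeff_mul_X_pow', Polynomial.coeff_monomial]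
    rcases eq_or_ne j k with rfl | hjk
    · rw [if_pos rfl]
      split_ifs
      · rw [h', if_pos rfl]
      · rfl
    · rw [if_neg hjk, Polynomial.coeff_zero, ite_self]
      split_ifs
      · rw [h', if_neg hjk.symm]
      · rfl

lemma natDegree_totalDegreeHom_le_iff (P : Polynomial (Polynomial K)) (N : ℕ) :
    (totalDegreeHom K P).natDegree ≤ N ↔ ∀ i k, N < i + k → (P.coeff k).coeff i = 0 := by
  rw [Polynomial.natDegree_le_iff_coeff_eq_zero]
  constructor
  · intro h i k hik
    have := congrArg (Polynomial.coeff · k) (h (i + k) hik)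
    simpa [coeff_coeff_totalDegreeHom] using this
  · intro h m hm
    ext k
    rw [coeff_coeff_totalDegreeHom]
    split_ifs with hk
    · rw [h _ _ (by omega)]; simp
    · simp

lemma natDegree_le_natDegree_totalDegreeHom {P : Polynomial (Polynomial K)} (hP : P.Monic) :
    P.natDegree ≤ (totalDegreeHom K P).natDegree := by
  have := (natDegree_totalDegreeHom_le_iff P _).1 le_rfl 0 P.natDegree
  by_contra! h
  have h1 := this (by omega)
  rw [hP.coeff_natDegree] at h1
  simp at h1

/-- A monic factor of a monic bivariate polynomial of minimal total degree has minimal total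
degree. -/
lemma natDegree_coeff_le_of_monic_dvd {g P : Polynomial (Polynomial K)} (hg : g.Monic)
    (hP : P.Monic) (hgP : g ∣ P) (h : ∀ i k, P.natDegree < i + k → (P.coeff k).coeff i = 0) (k : ℕ) :
    (g.coeff k).natDegree ≤ 1 * (g.natDegree - k) := by
  obtain ⟨r, rfl⟩ := hgP
  have hr : r.Monic := hg.of_mul_monic_left hP
  rw [← natDegree_totalDegreeHom_le_iff, hg.natDegree_mul hr, map_mul] at h
  have hne : ∀ {s : Polynomial (Polynomial K)}, s.Monic → totalDegreeHom K s ≠ 0 := by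
    intro s hs h0
    have := coeff_coeff_totalDegreeHom s s.natDegree s.natDegree
    rw [h0, if_pos le_rfl, hs.coeff_natDegree] at this
    simp at this
  rw [Polynomial.natDegree_mul (hne hg) (hne hr)] at h
  have h1 := natDegree_le_natDegree_totalDegreeHom hr
  have h2 := (natDegree_totalDegreeHom_le_iff g g.natDegree).1 (by omega)
  rw [one_mul, Polynomial.natDegree_le_iff_coeff_eq_zero]
  intro i hi
  exact h2 _ _ (by omega)

lemma weightedVal_eq_eval₂ {R : Type*} [CommRing R] [Algebra K R] {g : Polynomial (Polynomial K)}
    (hg : g.Monic) {n ω : ℕ} (hn : g.natDegree = n)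
    (hdeg : ∀ k < n, (g.coeff k).natDegree ≤ ω * (n - k)) (a b : R) :
    weightedVal (fun k i => (g.coeff k).coeff i) n ω a b =
      g.eval₂ (Polynomial.aeval (R := K) a).toRingHom b := by
  rw [Polynomial.eval₂_eq_sum_range, hn, Finset.sum_range_succ, ← hn, hg.coeff_natDegree, hn,
    map_one, one_mul, add_comm, weightedVal]
  congr 1
  refine Finset.sum_congr rfl fun k hk => ?_
  change _ = Polynomial.aeval a (g.coeff k) * b ^ k
  rw [Polynomial.aeval_eq_sum_range' (Nat.lt_succ_of_le (hdeg k (Finset.mem_range.1 hk))),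
    Finset.sum_mul]
  refine Finset.sum_congr rfl fun i _ => ?_
  rw [Algebra.smul_def]

lemma exists_monic_minimal {L Λ : Type*} [Field L] [Field Λ] [Algebra L Λ] {y θ : Λ}
    (hy : Function.Injective (Polynomial.aeval (R := L) y)) {P : Polynomial (Polynomial L)}
    (hP : P.Monic) (hPθ : P.eval₂ (Polynomial.aeval (R := L) y).toRingHom θ = 0) :
    ∃ g : Polynomial (Polynomial L), g.Monic ∧ g ∣ P ∧ 1 ≤ g.natDegree ∧
      g.eval₂ (Polynomial.aeval (R := L) y).toRingHom θ = 0 ∧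
      ∀ r : Polynomial (Polynomial L),
        r.eval₂ (Polynomial.aeval (R := L) y).toRingHom θ = 0 → g ∣ r := by
  let _ : Algebra (Polynomial L) Λ := (Polynomial.aeval (R := L) y).toRingHom.toAlgebra
  have hinj : Function.Injective (algebraMap (Polynomial L) Λ) := hy
  have : FaithfulSMul (Polynomial L) Λ := (faithfulSMul_iff_algebraMap_injective _ _).2 hinj
  have hint : IsIntegral (Polynomial L) θ := ⟨P, hP, hPθ⟩
  exact ⟨minpoly (Polynomial L) θ, minpoly.monic hint, minpoly.isIntegrallyClosed_dvd hint hPθ,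
    minpoly.natDegree_pos hint, minpoly.aeval _ _,
    fun r hr => minpoly.isIntegrallyClosed_dvd hint hr⟩

lemma eq_zero_of_sum_aeval_mul_pow_eq_zero {L Λ : Type*} [Field L] [Field Λ] [Algebra L Λ]
    {y θ : Λ} {g : Polynomial (Polynomial L)} (hg : g.Monic) {n : ℕ} (hn : g.natDegree = n)
    (hmin : ∀ r : Polynomial (Polynomial L),
        r.eval₂ (Polynomial.aeval (R := L) y).toRingHom θ = 0 → g ∣ r) (p : ℕ → Polynomial L)
    (hp : ∑ k ∈ Finset.range n, Polynomial.aeval y (p k) * θ ^ k = 0) : ∀ k < n, p k = 0 := by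
  set r : Polynomial (Polynomial L) := ∑ k ∈ Finset.range n, Polynomial.monomial k (p k) with hr
  have h1 : g ∣ r := hmin r (by
    rw [hr, Polynomial.eval₂_finsetSum, ← hp]
    refine Finset.sum_congr rfl fun k _ => ?_
    rw [Polynomial.eval₂_monomial]
    rfl)
  have h2 : r = 0 := by
    refine Polynomial.eq_zero_of_dvd_of_degree_lt h1 ?_
    rw [Polynomial.degree_eq_natDegree hg.ne_zero, hn]
    refine lt_of_le_of_lt (Polynomial.degree_sum_le _ _) ?_
    rw [Finset.sup_lt_iff (by exact WithBot.bot_lt_coe n)]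
    intro k hk
    exact lt_of_le_of_lt (Polynomial.degree_monomial_le _ _)
      (by exact_mod_cast Finset.mem_range.1 hk)
  intro k hk
  have h3 := congrArg (Polynomial.coeff · k) h2
  simpa [hr, Polynomial.finsetSum_coeff, Polynomial.coeff_monomial, hk] using h3

end WeightedDegree

section PlaceAtInfinity

variable {K : Type*} [Field K] [Fintype K]

lemma exists_eval₂_eq_zero_of_place_at_infinity {P : Polynomial (Polynomial K)} (hP : P.Monic)
    (h : ∀ i k, P.natDegree < i + k → (P.coeff k).coeff i = 0) (θ : PowerSeries K)
    (hθ : P.eval₂ (Polynomial.aeval (R := K) (LaurentField.invX (L := K))).toRingHom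
      (LaurentField.ofPowerSeries θ) = 0)
    (hq : 2 * (P.natDegree ^ 2 * (P.natDegree - 1) ^ 2) < Fintype.card K) (c : K) :
    ∃ y₀ : K, y₀ ≠ c ∧ ∃ u₀ : K, P.eval₂ (Polynomial.aeval (R := K) y₀).toRingHom u₀ = 0 := by
  have hord : ∀ P : Polynomial K, P ≠ 0 → (LaurentField.place K).ord
      (Polynomial.aeval (LaurentField.invX (L := K)) P) ≤ (1 - 1) * P.natDegree := by
    intro P hP
    have := LaurentField.place_ord_aeval_invX_le hP
    omega
  have hinj : Function.Injective (Polynomial.aeval (R := K) (LaurentField.invX (L := K))) := by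
    rw [injective_iff_map_eq_zero]
    intro r hr
    by_contra hr0
    have h1 := LaurentField.place_ord_aeval_invX_le (mul_ne_zero hr0 Polynomial.X_ne_zero)
    rw [map_mul, hr, zero_mul, Polynomial.natDegree_mul_X hr0] at h1
    have h2 : (LaurentField.place K).ord 0 = 0 := HahnSeries.order_zero
    rw [h2] at h1
    push_cast at h1
    omega
  obtain ⟨g, hg, hgP, hg1, hgθ, hmin⟩ := exists_monic_minimal hinj hP hθ
  suffices ∃ y₀ : K, y₀ ≠ c ∧ ∃ u₀ : K,
      g.eval₂ (Polynomial.aeval (R := K) y₀).toRingHom u₀ = 0 by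
    obtain ⟨y₀, hy₀, u₀, hu₀⟩ := this
    exact ⟨y₀, hy₀, u₀, Polynomial.eval₂_eq_zero_of_dvd_of_eval₂_eq_zero _ _ hgP hu₀⟩
  rcases Nat.lt_or_ge g.natDegree 2 with h2 | h2
  · obtain ⟨y₀, hy₀⟩ := exists_ne c
    refine ⟨y₀, hy₀, -Polynomial.aeval y₀ (g.coeff 0), ?_⟩
    rw [Polynomial.eval₂_eq_sum_range, show g.natDegree = 1 by omega, Finset.sum_range_succ,
      Finset.sum_range_one]
    have : g.coeff 1 = 1 := by rw [← hg.coeff_natDegree]; congr 1; omega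
    rw [this]
    simp
  have hw := natDegree_coeff_le_of_monic_dvd hg hP hgP h
  have hle : g.natDegree ≤ P.natDegree := Polynomial.natDegree_le_of_dvd hgP hP.ne_zero
  obtain ⟨y₀, hy₀, u₀, hu₀⟩ := exists_weightedVal_eq_zero (LaurentField.place K) (w := 0) (κ := 1)
    (K := K) (γ := fun k i => (g.coeff k).coeff i) (n := g.natDegree)
    (y := LaurentField.invX) (θ := LaurentField.ofPowerSeries θ) (by norm_num) (by
      intro k hk
      have := LaurentField.coeff_invX_pow (L := K) 1 k
      rw [pow_one] at this
      rw [this, if_neg (by push_cast; omega)])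
    (LaurentField.ofPowerSeries_mem_place_ge θ (by norm_num)) hord le_rfl
    (fun c => ⟨c, FiniteField.pow_card c⟩)
    (by rw [weightedVal_eq_eval₂ hg rfl fun k _ => hw k]; exact hgθ) h2
    (eq_zero_of_sum_aeval_mul_pow_eq_zero hg rfl hmin) (by
      refine lt_of_le_of_lt ?_ hq
      have h3 : g.natDegree - 1 ≤ P.natDegree - 1 := by omega
      simp only [zero_add, one_mul]
      gcongr) c
  rw [weightedVal_eq_eval₂ hg rfl fun k _ => hw k] at hu₀
  exact ⟨y₀, hy₀, u₀, hu₀⟩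

end PlaceAtInfinity

section Fiber

variable {K : Type*} [Field K]

/-- The equation `-α⁻¹ ((Y - l U)² + U (φ(Y) - a(U))) = 0`, as a polynomial in `U` over `K[Y]`,
where `α` is the leading coefficient of `a`. -/
noncomputable def fiberPoly (φ a : Polynomial K) (l : K) : Polynomial (Polynomial K) :=
  Polynomial.C (Polynomial.C (-a.leadingCoeff⁻¹)) *
    ((Polynomial.C Polynomial.X - Polynomial.C (Polynomial.C l) * Polynomial.X) ^ 2 +
      Polynomial.X * (Polynomial.C φ - a.map Polynomial.C))

lemma eval₂_fiberPoly {R : Type*} [CommRing R] [Algebra K R] (φ a : Polynomial K) (l : K)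
    (y u : R) : (fiberPoly φ a l).eval₂ (Polynomial.aeval (R := K) y).toRingHom u =
      -algebraMap K R (a.leadingCoeff⁻¹) * ((y - algebraMap K R l * u) ^ 2 +
        u * (Polynomial.aeval y φ - Polynomial.aeval u a)) := by
  have h : (a.map Polynomial.C).eval₂ (Polynomial.aeval (R := K) y : Polynomial K →+* R) u =
      Polynomial.aeval u a := by
    rw [Polynomial.eval₂_map, Polynomial.aeval_def]
    congr 1
    ext c
    simp
  simp [fiberPoly, Polynomial.eval₂_mul, Polynomial.eval₂_sub, Polynomial.eval₂_pow,
    Polynomial.eval₂_add, h]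

variable {φ a : Polynomial K} {d : ℕ}

lemma monic_fiberPoly (ha : a.natDegree = d) (hJ : 2 ≤ φ.natDegree) (hJd : φ.natDegree ≤ d)
    (l : K) :
    (fiberPoly φ a l).Monic ∧ (fiberPoly φ a l).natDegree = d + 1 := by
  have ha0 : a.leadingCoeff ≠ 0 := by
    rw [Ne, Polynomial.leadingCoeff_eq_zero]
    rintro rfl
    simp at ha; omega
  have hdeg : ((Polynomial.C Polynomial.X - Polynomial.C (Polynomial.C l) * Polynomial.X) ^ 2 +
      Polynomial.X * (Polynomial.C φ) : Polynomial (Polynomial K)).natDegree < d + 1 := by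
    have : ((Polynomial.C Polynomial.X - Polynomial.C (Polynomial.C l) * Polynomial.X) ^ 2 +
      Polynomial.X * (Polynomial.C φ) : Polynomial (Polynomial K)).natDegree ≤ 2 := by
      compute_degree
    omega
  have h2 : (Polynomial.X * a.map Polynomial.C : Polynomial (Polynomial K)).natDegree = d + 1 := by
    rw [Polynomial.natDegree_X_mul, Polynomial.natDegree_map, ha]
    rw [Polynomial.map_ne_zero_iff Polynomial.C_injective]
    rintro rfl; simp at ha0
  have hform : fiberPoly φ a l = Polynomial.C (Polynomial.C (a.leadingCoeff⁻¹)) *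
      (Polynomial.X * a.map Polynomial.C -
      ((Polynomial.C Polynomial.X - Polynomial.C (Polynomial.C l) * Polynomial.X) ^ 2 +
      Polynomial.X * (Polynomial.C φ))) := by
    simp only [fiberPoly, map_neg]; ring
  have hc : (Polynomial.C (a.leadingCoeff⁻¹)) ≠ 0 := by simpa using ha0
  have hnd : (fiberPoly φ a l).natDegree = d + 1 := by
    rw [hform, Polynomial.natDegree_C_mul hc, Polynomial.natDegree_sub_eq_left_of_natDegree_lt, h2]
    rw [h2]; exact hdeg
  refine ⟨?_, hnd⟩
  rw [Polynomial.Monic, Polynomial.leadingCoeff, hnd, hform, Polynomial.coeff_C_mul,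
    Polynomial.coeff_sub, Polynomial.coeff_eq_zero_of_natDegree_lt hdeg, sub_zero,
    Polynomial.coeff_X_mul, Polynomial.coeff_map, ← ha]
  change Polynomial.C _ * Polynomial.C a.leadingCoeff = 1
  rw [← map_mul, inv_mul_cancel₀ ha0, map_one]

lemma coeff_coeff_fiberPoly_eq_zero (ha : a.natDegree = d) (hJ : 2 ≤ φ.natDegree) (hJd : φ.natDegree ≤ d)
    (l : K) (i k : ℕ) (h : (fiberPoly φ a l).natDegree < i + k) :
    ((fiberPoly φ a l).coeff k).coeff i = 0 := by
  refine (natDegree_totalDegreeHom_le_iff _ (d + 1)).1 ?_ i k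
    (by rwa [(monic_fiberPoly ha hJ hJd l).2] at h)
  have h1 : ∀ r : Polynomial K, totalDegreeHom K (Polynomial.C r) = r.map Polynomial.C := fun r => by
    simp [totalDegreeHom]
  have h2 : totalDegreeHom K Polynomial.X = Polynomial.C Polynomial.X * Polynomial.X := by
    simp [totalDegreeHom]
  have h3 : totalDegreeHom K (a.map Polynomial.C) =
      ((a.map Polynomial.C).comp (Polynomial.C Polynomial.X * Polynomial.X)) := by
    simp only [totalDegreeHom, Polynomial.coe_eval₂RingHom, Polynomial.eval₂_map, Polynomial.comp]
    congr 1
    ext c : 1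
    simp
  have h4 : (totalDegreeHom K (a.map Polynomial.C)).natDegree ≤ d := by
    rw [h3]
    refine Polynomial.natDegree_comp_le.trans ?_
    rw [Polynomial.natDegree_map_eq_of_injective Polynomial.C_injective, ha]
    refine (Nat.mul_le_mul_left d (?_ : _ ≤ 1)).trans (by omega)
    compute_degree
  have h5 : (totalDegreeHom K Polynomial.X).natDegree ≤ 1 := by
    rw [h2]; compute_degree
  have h6 : (totalDegreeHom K (Polynomial.C φ)).natDegree ≤ d := by
    rw [h1]; exact Polynomial.natDegree_map_le.trans hJd
  rw [fiberPoly, map_mul, map_add, map_mul, map_sub, map_pow, map_sub, map_mul]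
  refine Polynomial.natDegree_mul_le.trans ?_
  have h7 : (totalDegreeHom K (Polynomial.C (Polynomial.C (-a.leadingCoeff⁻¹)))).natDegree = 0 := by
    rw [h1]; simp
  rw [h7, zero_add]
  refine Polynomial.natDegree_add_le_of_degree_le ?_ ?_
  · refine Polynomial.natDegree_pow_le.trans ?_
    have : (totalDegreeHom K (Polynomial.C Polynomial.X) - totalDegreeHom K
        (Polynomial.C (Polynomial.C l)) * totalDegreeHom K Polynomial.X).natDegree ≤ 1 := by
      rw [h1, h1, h2]; simp only [Polynomial.map_X, Polynomial.map_C]; compute_degree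
    omega
  · refine Polynomial.natDegree_mul_le.trans ?_
    have := Polynomial.natDegree_sub_le_of_le h6 h4
    rw [max_self] at this
    omega

/-- The fibre equation has a power series solution at the point `Y = ∞`, `U = 0` or `-φ₂⁻¹`. -/
lemma exists_powerSeries_fiberPoly (hJ : 2 ≤ φ.natDegree) (l : K) : ∃ θ : PowerSeries K,
    (fiberPoly φ a l).eval₂ (Polynomial.aeval (R := K) (LaurentField.invX (L := K))).toRingHom
      (LaurentField.ofPowerSeries θ) = 0 := by
  obtain ⟨j, hj⟩ := Nat.exists_eq_add_of_le' hJ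
  set τ : PowerSeries K := PowerSeries.X with hτ
  set ρ : PowerSeries K := Polynomial.toPowerSeries φ.reverse with hρ
  have hρ0 : ρ * ρ⁻¹ = 1 := by
    apply PowerSeries.mul_inv_cancel
    rw [hρ, Polynomial.constantCoeff_coe, Polynomial.coeff_zero_reverse, Ne,
      Polynomial.leadingCoeff_eq_zero]
    rintro rfl
    simp at hJ
  obtain ⟨s, hs⟩ := PowerSeries.exists_eq_add_X_mul_eval (-ρ⁻¹)
    (Polynomial.C (-ρ⁻¹) * (Polynomial.C (-2 * PowerSeries.C l * τ ^ j) * Polynomial.X +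
      Polynomial.C (PowerSeries.C l ^ 2 * τ ^ (2 * j + 1)) * Polynomial.X ^ 2 -
      Polynomial.C (τ ^ (j + 1)) * Polynomial.X *
        (a.map PowerSeries.C).comp (Polynomial.C (τ ^ j) * Polynomial.X)))
  simp only [Polynomial.eval_mul, Polynomial.eval_add, Polynomial.eval_sub, Polynomial.eval_C,
    Polynomial.eval_X, Polynomial.eval_pow, Polynomial.eval_comp, ← hτ] at hs
  refine ⟨τ ^ j * s, ?_⟩
  set A := Polynomial.eval (τ ^ j * s) (a.map PowerSeries.C) with hA
  have h1 : (1 - PowerSeries.C l * τ * (τ ^ j * s)) ^ 2 + s * ρ - τ ^ 2 * (τ ^ j * s) * A = 0 := by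
    linear_combination (exp := 1) ρ * hs + (-1 - τ * (-2 * PowerSeries.C l * τ ^ j * s +
      PowerSeries.C l ^ 2 * τ ^ (2 * j + 1) * s ^ 2 - τ ^ (j + 1) * s * A)) * hρ0
  have h2 := congrArg LaurentField.ofPowerSeries h1
  have hyτ := LaurentField.invX_mul_ofPowerSeries_X (L := K)
  rw [← hτ] at hyτ
  simp only [map_sub, map_add, map_mul, map_pow, map_one, map_zero,
    LaurentField.ofPowerSeries_C] at h2
  have h3 : LaurentField.ofPowerSeries A =
      Polynomial.aeval (LaurentField.ofPowerSeries (τ ^ j * s)) a := by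
    rw [LaurentField.aeval_ofPowerSeries, hA, Polynomial.eval_map]
  set y := LaurentField.invX (L := K) with hy
  set t := LaurentField.ofPowerSeries τ with ht
  have h4 : LaurentField.ofPowerSeries ρ = t ^ (j + 2) * Polynomial.aeval y φ := by
    have hρ' : LaurentField.ofPowerSeries ρ = Polynomial.aeval t φ.reverse := by
      rw [ht, LaurentField.aeval_ofPowerSeries, hρ]
      rw [hτ, Polynomial.eval₂_C_X_eq_coe]
    have hinv : Invertible y := ⟨t, by rw [mul_comm]; exact hyτ, hyτ⟩
    have h5 := Polynomial.eval₂_reverse_mul_pow (algebraMap K (LaurentField K)) y φ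
    have h6 : ⅟y = t := invOf_eq_right_inv hyτ
    rw [h6, hj] at h5
    rw [hρ', Polynomial.aeval_def, Polynomial.aeval_def, ← h5]
    have : t ^ (j + 2) * y ^ (j + 2) = 1 := by rw [← mul_pow, mul_comm t, hyτ, one_pow]
    linear_combination -Polynomial.eval₂ (algebraMap K (LaurentField K)) t φ.reverse * this
  rw [eval₂_fiberPoly]
  rw [h3, h4] at h2
  have h7 : t ^ 2 ≠ 0 := pow_ne_zero _ (right_ne_zero_of_mul_eq_one hyτ)
  have h8 : (y - algebraMap K _ l * LaurentField.ofPowerSeries (τ ^ j * s)) ^ 2 +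
      LaurentField.ofPowerSeries (τ ^ j * s) * (Polynomial.aeval y φ -
        Polynomial.aeval (LaurentField.ofPowerSeries (τ ^ j * s)) a) = 0 := by
    refine (mul_eq_zero.1 ?_).resolve_left h7
    rw [← h2]
    set B := Polynomial.aeval (LaurentField.ofPowerSeries (τ ^ j * s)) a
    simp only [map_mul, map_pow, ← ht]
    linear_combination (y * t + 1 - 2 * algebraMap K (LaurentField K) l * t ^ (j + 1) *
      LaurentField.ofPowerSeries s) * hyτ
  rw [h8, mul_zero]

lemma exists_fiber_root [Fintype K] (ha : a.natDegree = d) (hJ : 2 ≤ φ.natDegree) (hJd : φ.natDegree ≤ d)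
    (l : K)
    (hq : 2 * ((d + 1) ^ 2 * d ^ 2) < Fintype.card K) :
    ∃ y u : K, y ≠ 0 ∧ (y - l * u) ^ 2 + u * (φ.eval y - a.eval u) = 0 := by
  obtain ⟨θ, hθ⟩ := exists_powerSeries_fiberPoly (a := a) hJ l
  obtain ⟨hmon, hdeg⟩ := monic_fiberPoly ha hJ hJd l
  obtain ⟨y, hy, u, hu⟩ := exists_eval₂_eq_zero_of_place_at_infinity hmon
    (coeff_coeff_fiberPoly_eq_zero ha hJ hJd l) θ hθ (by rwa [hdeg, Nat.add_sub_cancel]) 0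
  refine ⟨y, u, hy, ?_⟩
  rw [eval₂_fiberPoly] at hu
  refine (mul_eq_zero.1 hu).resolve_left ?_
  rw [neg_eq_zero, Algebra.algebraMap_self_apply, inv_eq_zero, Polynomial.leadingCoeff_eq_zero]
  rintro rfl
  simp at ha; omega

end Fiber

section DoubleCover

variable {K : Type*} [Field K] [Fintype K]

lemma exists_root_of_two_mul_add_eq_zero {b c : K} {L : Type*} [Field L] [Algebra K L] {w : L}
    (hw : w ^ 2 + algebraMap K L b * w + algebraMap K L c = 0)
    (h2 : 2 * w + algebraMap K L b = 0) : ∃ w₀ : K, w₀ ^ 2 + b * w₀ + c = 0 := by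
  by_cases hchar : (2 : K) = 0
  · have hchar' : (2 : L) = 0 := by
      have := congrArg (algebraMap K L) hchar
      rwa [map_ofNat, map_zero] at this
    have hb : b = 0 := by
      rw [hchar', zero_mul, zero_add] at h2
      exact (map_eq_zero _).1 h2
    have hp : ringChar K = 2 := by
      have h3 : ringChar K ∣ 2 := ringChar.dvd (by exact_mod_cast hchar)
      rcases (Nat.dvd_prime Nat.prime_two).1 h3 with h | h
      · exact absurd h (CharP.ringChar_ne_one)
      · exact h
    obtain ⟨w₀, hw₀⟩ := FiniteField.isSquare_of_char_two hp (-c)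
    exact ⟨w₀, by rw [hb]; linear_combination -hw₀⟩
  · refine ⟨-b / 2, ?_⟩
    have hchar' : (2 : L) ≠ 0 := by
      intro h
      apply hchar
      apply (algebraMap K L).injective
      rwa [map_ofNat, map_zero]
    have hw' : w = algebraMap K L (-b / 2) := by
      rw [map_div₀, map_neg, map_ofNat, eq_div_iff hchar']
      linear_combination h2
    apply (algebraMap K L).injective
    rw [map_zero, ← hw, hw']
    simp

/-- If the double cover `W² + b W + Q(Y) = 0` has no rational point outside the fibre over `c`,
then it splits over the algebraic closure. -/
lemma exists_sq_add_mul_add_eq_zero {b : K} {Q : Polynomial K} {d : ℕ} (hd : 1 ≤ d)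
    (hQ : Q.natDegree ≤ d) (hq : 4 * (d * (d + 1)) < Fintype.card K) (c : K)
    (hno : ∀ y w : K, y ≠ c → w ^ 2 + b * w + Q.eval y ≠ 0) :
    ∃ T : Polynomial (AlgebraicClosure K),
      T ^ 2 + Polynomial.C (algebraMap K (AlgebraicClosure K) b) * T +
        Q.map (algebraMap K (AlgebraicClosure K)) = 0 := by
  by_contra hT
  set L := AlgebraicClosure K with hL
  obtain ⟨w, rfl⟩ := Nat.exists_eq_add_of_le' hd
  set b' : L := algebraMap K L b with hb'
  set Q' : Polynomial L := Q.map (algebraMap K L) with hQ'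
  obtain ⟨y₁, hy₁⟩ := exists_ne c
  obtain ⟨w₁, hw₁⟩ := IsAlgClosed.exists_root (Polynomial.X ^ 2 + Polynomial.C b' * Polynomial.X +
    Polynomial.C (algebraMap K L (Q.eval y₁))) (by
      have : (Polynomial.X ^ 2 + Polynomial.C b' * Polynomial.X +
        Polynomial.C (algebraMap K L (Q.eval y₁)) : Polynomial L).degree = 2 := by
        compute_degree!
      rw [this]; norm_num)
  replace hw₁ : w₁ ^ 2 + b' * w₁ + algebraMap K L (Q.eval y₁) = 0 := by simpa using hw₁
  have he : 2 * w₁ + b' ≠ 0 := fun h => by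
    obtain ⟨w₀, hw₀⟩ := exists_root_of_two_mul_add_eq_zero hw₁ h
    exact hno y₁ w₀ hy₁ hw₀
  set e := 2 * w₁ + b' with hedef
  set y₁' : L := algebraMap K L y₁ with hy₁'
  obtain ⟨R, hR⟩ : (PowerSeries.X : PowerSeries L) ∣
      Q'.eval₂ PowerSeries.C (PowerSeries.C y₁' + PowerSeries.X) - PowerSeries.C (Q'.eval y₁') := by
    have := Polynomial.sub_dvd_eval_sub (PowerSeries.C y₁' + PowerSeries.X) (PowerSeries.C y₁')
      (Q'.map PowerSeries.C)
    rwa [add_sub_cancel_left, Polynomial.eval_map, Polynomial.eval_map,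
      Polynomial.eval₂_at_apply] at this
  obtain ⟨s, hs⟩ := PowerSeries.exists_eq_add_X_mul_eval (PowerSeries.C (-e⁻¹) * R)
    (Polynomial.C (PowerSeries.C (-e⁻¹)) * Polynomial.X ^ 2)
  simp only [Polynomial.eval_mul, Polynomial.eval_C, Polynomial.eval_X, Polynomial.eval_pow] at hs
  have hQy : Q'.eval y₁' = algebraMap K L (Q.eval y₁) := by
    rw [hQ', hy₁', Polynomial.eval_map_algebraMap, Polynomial.aeval_algebraMap_apply]
    simp
  set Ypow : PowerSeries L := PowerSeries.C y₁' + PowerSeries.X with hYpow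
  set θ₁ : PowerSeries L := PowerSeries.C w₁ + PowerSeries.X * s with hθ₁
  have heq : θ₁ ^ 2 + PowerSeries.C b' * θ₁ + Q'.eval₂ PowerSeries.C Ypow = 0 := by
    have h1 : PowerSeries.C e * PowerSeries.C (-e⁻¹) = (-1 : PowerSeries L) := by
      rw [← map_mul, mul_neg, mul_inv_cancel₀ he, map_neg, map_one]
    have h2 : PowerSeries.C e = 2 * PowerSeries.C w₁ + PowerSeries.C b' := by
      rw [hedef, map_add, map_mul, map_ofNat]
    have h3 := congrArg (PowerSeries.C (R := L)) hw₁
    rw [← hQy] at h3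
    simp only [map_add, map_mul, map_pow, map_zero] at h3
    rw [eq_add_of_sub_eq hR, hθ₁]
    linear_combination h3 + PowerSeries.X * PowerSeries.C e * hs - PowerSeries.X * s * h2 +
      PowerSeries.X * (R + PowerSeries.X * s ^ 2) * h1
  set y := LaurentField.ofPowerSeries Ypow with hy
  set θ := LaurentField.ofPowerSeries θ₁ with hθ
  have heqΛ : θ ^ 2 + algebraMap L (LaurentField L) b' * θ + Polynomial.aeval y Q' = 0 := by
    have := congrArg LaurentField.ofPowerSeries heq
    simpa [LaurentField.aeval_ofPowerSeries, hy, hθ] using this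
  have hinj : Function.Injective (Polynomial.aeval (R := L) y) := by
    rw [injective_iff_map_eq_zero]
    intro r hr
    rw [hy, LaurentField.aeval_ofPowerSeries, ← map_zero LaurentField.ofPowerSeries] at hr
    have hr := LaurentField.ofPowerSeries_injective hr
    rw [hYpow, LaurentField.eval₂_C_add_X] at hr
    have h2 : Polynomial.taylor y₁' r = 0 := by exact_mod_cast hr
    exact (Polynomial.taylor_eq_zero _ _).1 h2
  set P : Polynomial (Polynomial L) := Polynomial.X ^ 2 +
    Polynomial.C (Polynomial.C b') * Polynomial.X + Polynomial.C Q' with hP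
  have hPdeg : P.natDegree = 2 := by rw [hP]; compute_degree!
  have hPmon : P.Monic := by rw [hP]; monicity!
  obtain ⟨g, hg, hgP, hg1, hgθ, hmin⟩ := exists_monic_minimal hinj hPmon (θ := θ) (by
    rw [← heqΛ, hP]; simp [Polynomial.eval₂_add, Polynomial.eval₂_mul])
  have hg2 : g.natDegree = 2 := by
    have hle := Polynomial.natDegree_le_of_dvd hgP hPmon.ne_zero
    rw [hPdeg] at hle
    by_contra hne
    have h1 : g.natDegree = 1 := by omega
    rw [Polynomial.eval₂_eq_sum_range, h1, Finset.sum_range_succ, Finset.sum_range_one,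
      show g.coeff 1 = 1 by rw [← hg.coeff_natDegree, h1]] at hgθ
    refine hT ⟨-g.coeff 0, hinj ?_⟩
    have h2 : θ = Polynomial.aeval y (-g.coeff 0) := by
      rw [map_neg]
      simp only [pow_zero, mul_one, map_one, pow_one, one_mul] at hgθ
      exact eq_neg_of_add_eq_zero_right hgθ
    rw [map_add, map_add, map_pow, map_mul, ← h2, map_zero, ← heqΛ, Polynomial.aeval_C]
  set P₀ : Polynomial (Polynomial K) := Polynomial.X ^ 2 +
    Polynomial.C (Polynomial.C b) * Polynomial.X + Polynomial.C Q with hP₀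
  have hP₀deg : P₀.natDegree = 2 := by rw [hP₀]; compute_degree!
  have hP₀mon : P₀.Monic := by rw [hP₀]; monicity!
  have hweight : ∀ k < 2, (P₀.coeff k).natDegree ≤ (w + 1) * (2 - k) := by
    intro k hk
    interval_cases k
    · have : P₀.coeff 0 = Q := by simp [hP₀]
      rw [this]; omega
    · have : P₀.coeff 1 = Polynomial.C b := by
        simp [hP₀, Polynomial.coeff_X_pow, Polynomial.coeff_C]
      rw [this]; simp
  obtain ⟨y₀, hy₀, u₀, hu₀⟩ := exists_weightedVal_eq_zero (LaurentField.place L) (w := w) (κ := 0)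
    (K := K) (γ := fun k i => (P₀.coeff k).coeff i) (n := 2) (y := y) (θ := θ) le_rfl
    (LaurentField.ofPowerSeries_mem_place_ge _ (by norm_num))
    (LaurentField.ofPowerSeries_mem_place_ge _ (by norm_num))
    (fun r hr => by
      have := LaurentField.place_ord_aeval_C_add_X_le y₁' hr
      rw [← hYpow, ← hy] at this
      simpa using this) (by norm_num)
    (fun c => IsAlgClosed.exists_pow_nat_eq c Fintype.card_pos)
    (by
      rw [weightedVal_eq_eval₂ hP₀mon hP₀deg hweight, ← heqΛ, hP₀, hQ']
      simp [Polynomial.eval₂_add, Polynomial.eval₂_mul, hb',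
        ← IsScalarTower.algebraMap_apply K L (LaurentField L)]) le_rfl
    (eq_zero_of_sum_aeval_mul_pow_eq_zero hg hg2 hmin) (by
      refine lt_of_eq_of_lt ?_ hq; ring) c
  rw [weightedVal_eq_eval₂ hP₀mon hP₀deg hweight, hP₀] at hu₀
  refine hno y₀ u₀ hy₀ ?_
  simpa [Polynomial.eval₂_add, Polynomial.eval₂_mul] using hu₀

end DoubleCover

section SquareCofactors

variable {L : Type*} [Field L]

lemma Polynomial.exists_three_eval_ne {M : Polynomial L} (hM : 1 ≤ M.natDegree) {Z : Finset L}
    (hZ : 2 * M.natDegree < Z.card) :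
    ∃ z₁ ∈ Z, ∃ z₂ ∈ Z, ∃ z₃ ∈ Z, M.eval z₁ ≠ M.eval z₂ ∧ M.eval z₁ ≠ M.eval z₃ ∧
      M.eval z₂ ≠ M.eval z₃ := by
  classical
  have h := Finset.card_le_mul_card_image (f := fun z => M.eval z) Z M.natDegree (by
    intro v _
    have hne : M - C v ≠ 0 := fun h0 => by
      rw [sub_eq_zero.1 h0, natDegree_C] at hM
      omega
    calc (Z.filter fun z => M.eval z = v).card ≤ (M - C v).roots.toFinset.card := by
          refine Finset.card_le_card fun z hz => ?_
          rw [Finset.mem_filter] at hz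
          rw [Multiset.mem_toFinset, mem_roots hne]
          simp [hz.2]
      _ ≤ Multiset.card (M - C v).roots := Multiset.toFinset_card_le _
      _ ≤ (M - C v).natDegree := card_roots' _
      _ = M.natDegree := natDegree_sub_C)
  have h3 : 2 < (Z.image fun z => M.eval z).card := by
    by_contra hle
    have := Nat.mul_le_mul_left M.natDegree (not_lt.1 hle)
    omega
  obtain ⟨a, ha, b, hb, c, hc, hab, hac, hbc⟩ := Finset.two_lt_card.1 h3
  obtain ⟨z₁, h₁, rfl⟩ := Finset.mem_image.1 ha
  obtain ⟨z₂, h₂, rfl⟩ := Finset.mem_image.1 hb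
  obtain ⟨z₃, h₃, rfl⟩ := Finset.mem_image.1 hc
  exact ⟨z₁, h₁, z₂, h₂, z₃, h₃, hab, hac, hbc⟩

lemma Polynomial.isCoprime_of_dvd_sub_C {M S₁ S₂ : Polynomial L} {v₁ v₂ : L} (hv : v₁ ≠ v₂)
    (h₁ : S₁ ∣ M - C v₁) (h₂ : S₂ ∣ M - C v₂) : IsCoprime S₁ S₂ := by
  refine IsCoprime.of_isCoprime_of_dvd_left (IsCoprime.of_isCoprime_of_dvd_right ?_ h₂) h₁
  refine ⟨C (v₂ - v₁)⁻¹, -C (v₂ - v₁)⁻¹, ?_⟩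
  have h : C (v₂ - v₁)⁻¹ * C (v₂ - v₁) = (1 : Polynomial L) := by
    rw [← C_mul, inv_mul_cancel₀ (sub_ne_zero.2 hv.symm), C_1]
  rw [C_sub] at h
  linear_combination h

lemma Polynomial.exists_eq_sq_of_sq_mul_eq_sq {A B S : Polynomial L} (hA : A ≠ 0)
    (h : A ^ 2 * B = S ^ 2) : ∃ T : Polynomial L, B = T ^ 2 := by
  obtain ⟨T, rfl⟩ := (IsIntegrallyClosed.pow_dvd_pow_iff two_ne_zero).1 (Dvd.intro _ h)
  rw [mul_pow] at h
  exact ⟨T, mul_left_cancel₀ (pow_ne_zero 2 hA) h⟩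

/-- A polynomial of positive degree over a perfect field of odd characteristic all of whose
increments from the points of a large set are a linear factor times a square is, up to constants,
a power of the Frobenius. -/
lemma Polynomial.eq_C_mul_X_pow_add_C_of_square_cofactors {p : ℕ} [Fact p.Prime] [CharP L p]
    [PerfectRing L p] (hp2 : p ≠ 2) {M : Polynomial L} (hM : 1 ≤ M.natDegree) {Z : Finset L}
    (hZ : 2 * M.natDegree < Z.card)
    (hS : ∀ z ∈ Z, ∃ S : Polynomial L, M - C (M.eval z) = (X - C z) * S ^ 2) :
    ∃ (α β : L) (r : ℕ), α ≠ 0 ∧ M = C α * X ^ p ^ r + C β := by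
  induction he : M.natDegree using Nat.strong_induction_on generalizing M with
  | _ e ih =>
  have hpp : p.Prime := Fact.out
  have hdeg : ∀ {z : L} {S : Polynomial L}, M - C (M.eval z) = (X - C z) * S ^ 2 →
      1 + 2 * S.natDegree = M.natDegree := fun {z S} h => by
    have hS0 : S ≠ 0 := by
      rintro rfl
      rw [sub_eq_zero.1 (h.trans (by simp)), natDegree_C] at hM
      omega
    have := congrArg natDegree h
    rw [natDegree_sub_C, natDegree_mul (X_sub_C_ne_zero z) (pow_ne_zero 2 hS0),
      natDegree_X_sub_C, natDegree_pow] at this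
    exact this.symm
  by_cases hder : derivative M = 0
  · obtain ⟨E, rfl⟩ : ∃ E : Polynomial L, M = E ^ p :=
      ⟨_, by rw [← polynomial_expand_eq, expand_contract p hder hpp.ne_zero]⟩
    rw [natDegree_pow] at hM hZ he
    have hE : 1 ≤ E.natDegree := Nat.pos_of_mul_pos_left hM
    have hlt : E.natDegree < e := by
      rw [← he]
      exact lt_mul_of_one_lt_left hE hpp.one_lt
    obtain ⟨m, hm⟩ := hpp.odd_of_ne_two hp2
    obtain ⟨α, β, r, hα, hE'⟩ := ih _ hlt hE (by omega) (fun z hz => by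
      obtain ⟨S, hS⟩ := hS z hz
      obtain ⟨E₁, hE₁⟩ := X_sub_C_dvd_sub_C_eval (a := z) (p := E)
      have h1 : (X - C z) * ((((X - C z) * E₁) ^ m) ^ 2 * E₁) = (X - C z) * S ^ 2 := by
        rw [← hS, eval_pow, C_pow, ← sub_pow_char, hE₁, hm]
        ring
      have hne : (X - C z) * E₁ ≠ 0 := by
        rw [← hE₁]
        intro h0
        rw [sub_eq_zero.1 h0, natDegree_C] at hE
        omega
      obtain ⟨T, hT⟩ := exists_eq_sq_of_sq_mul_eq_sq (pow_ne_zero m hne)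
        (mul_left_cancel₀ (X_sub_C_ne_zero z) h1)
      exact ⟨T, by rw [hE₁, hT]⟩) rfl
    refine ⟨α ^ p, β ^ p, r + 1, pow_ne_zero _ hα, ?_⟩
    rw [hE', add_pow_char, mul_pow, ← C_pow, ← C_pow, ← pow_mul, pow_succ]
  · obtain ⟨z₁, h₁, z₂, h₂, z₃, h₃, h12, h13, h23⟩ := exists_three_eval_ne hM hZ
    obtain ⟨S₁, hS₁⟩ := hS z₁ h₁
    obtain ⟨S₂, hS₂⟩ := hS z₂ h₂
    obtain ⟨S₃, hS₃⟩ := hS z₃ h₃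
    have hdvd : ∀ {z : L} {S : Polynomial L}, M - C (M.eval z) = (X - C z) * S ^ 2 →
        S ∣ M - C (M.eval z) ∧ S ∣ derivative M := fun {z S} h => by
      refine ⟨⟨(X - C z) * S, by rw [h]; ring⟩, S + (X - C z) * (2 * derivative S), ?_⟩
      have := congrArg derivative h
      simp only [derivative_sub, derivative_C, sub_zero, derivative_mul, derivative_X,
        derivative_pow] at this
      rw [this]
      push_cast
      rw [C_ofNat]
      ring
    have hc12 := isCoprime_of_dvd_sub_C h12 (hdvd hS₁).1 (hdvd hS₂).1
    have hc13 := isCoprime_of_dvd_sub_C h13 (hdvd hS₁).1 (hdvd hS₃).1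
    have hc23 := isCoprime_of_dvd_sub_C h23 (hdvd hS₂).1 (hdvd hS₃).1
    have hall : S₁ * S₂ * S₃ ∣ derivative M :=
      (hc13.mul_left hc23).mul_dvd (hc12.mul_dvd (hdvd hS₁).2 (hdvd hS₂).2) (hdvd hS₃).2
    have hne := ne_zero_of_dvd_ne_zero hder hall
    have hle := natDegree_le_of_dvd hall hder
    rw [natDegree_mul (left_ne_zero_of_mul hne) (right_ne_zero_of_mul hne),
      natDegree_mul (left_ne_zero_of_mul (left_ne_zero_of_mul hne))
        (right_ne_zero_of_mul (left_ne_zero_of_mul hne))] at hle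
    have h1 := hdeg hS₁
    have h2 := hdeg hS₂
    have h3 := hdeg hS₃
    have h4 := natDegree_derivative_le M
    have hM1 : M.natDegree = 1 := by omega
    refine ⟨M.coeff 1, M.coeff 0, 0, ?_, ?_⟩
    · rw [← hM1, coeff_natDegree, leadingCoeff_ne_zero]
      rintro rfl
      simp at hM1
    · rw [pow_zero, pow_one]
      exact eq_X_add_C_of_natDegree_le_one hM1.le

/-- In characteristic two, if the increments of `A` from `0` and `1` are split by an Artin–Schreier
type equation, then `A` has degree at most one. -/
lemma Polynomial.natDegree_le_one_of_sq_add_mul {b : L}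
    {A Q₀ Q₁ T₀ T₁ : Polynomial L} {c₀ c₁ : L} (h₀ : A - C c₀ = X * Q₀)
    (h₁ : A - C c₁ = (X - 1) * Q₁) (h2 : (2 : L) = 0)
    (hT₀ : T₀ ^ 2 + C b * T₀ + Q₀ = 0) (hT₁ : T₁ ^ 2 + C b * T₁ + Q₁ = 0) : A.natDegree ≤ 1 := by
  have heven : ∀ T : Polynomial L, Even (T ^ 2 + C b * T).natDegree := fun T => by
    rcases Nat.eq_zero_or_pos T.natDegree with h | h
    · rw [eq_C_of_natDegree_eq_zero h, ← C_pow, ← C_mul, ← C_add, natDegree_C]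
      exact Even.zero
    · rw [natDegree_add_eq_left_of_natDegree_lt, natDegree_pow]
      · exact even_two_mul _
      · rw [natDegree_pow]
        exact (natDegree_C_mul_le _ _).trans_lt (by omega)
  have h2' : (2 : Polynomial L) = 0 := by
    rw [← C_ofNat, h2, C_0]
  by_contra! hA
  have hQ₁0 : Q₁ ≠ 0 := by
    rintro rfl
    rw [mul_zero, sub_eq_zero] at h₁
    rw [h₁, natDegree_C] at hA
    omega
  have hdQ : Q₁.natDegree + 1 = A.natDegree := by
    have := congrArg natDegree h₁
    rw [natDegree_sub_C, natDegree_mul (by simpa using X_sub_C_ne_zero (1 : L)) hQ₁0,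
      show (X - 1 : Polynomial L) = X - C 1 by simp, natDegree_X_sub_C] at this
    omega
  have e₁ : Even Q₁.natDegree := by
    have := heven T₁
    rwa [eq_neg_of_add_eq_zero_left hT₁, natDegree_neg] at this
  have e₂ : Even (Q₀ - Q₁).natDegree := by
    have := heven (T₀ - T₁)
    rwa [show (T₀ - T₁) ^ 2 + C b * (T₀ - T₁) = -(Q₀ - Q₁) by
      linear_combination hT₀ - hT₁ + (T₁ ^ 2 - T₀ * T₁) * h2', natDegree_neg] at this
  have hrel : X * (Q₀ - Q₁) = -(Q₁ + C (c₀ - c₁)) := by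
    rw [C_sub]
    linear_combination h₁ - h₀
  have hd2 : (X * (Q₀ - Q₁)).natDegree = Q₁.natDegree := by
    rw [hrel, natDegree_neg, natDegree_add_C]
  have hne : Q₀ - Q₁ ≠ 0 := by
    intro h
    rw [h, mul_zero, natDegree_zero] at hd2
    omega
  rw [natDegree_X_mul hne] at hd2
  rw [← hd2, Nat.even_add_one] at e₁
  exact e₁ e₂

end SquareCofactors

section AbsolutelyIrreducibleComponent

variable {K : Type*} [Field K] [Fintype K]

lemma FiniteField.exists_algebraMap_eq_of_pow_card_eq {L : Type*} [Field L] [Algebra K L] {x : L}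
    (hx : x ^ Fintype.card K = x) : ∃ a : K, algebraMap K L a = x := by
  classical
  by_contra! h
  have hne := FiniteField.X_pow_card_sub_X_ne_zero L (Fintype.one_lt_card (α := K))
  have hle := Polynomial.card_le_degree_of_subset_roots
    (p := (Polynomial.X ^ Fintype.card K - Polynomial.X : Polynomial L))
    (Z := insert x (Finset.univ.image (algebraMap K L))) (fun y hy => by
      rw [Polynomial.mem_roots hne]
      rcases Finset.mem_insert.1 hy with rfl | hy
      · simp [hx]
      · obtain ⟨a, -, rfl⟩ := Finset.mem_image.1 hy
        simp [← map_pow, FiniteField.pow_card])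
  rw [FiniteField.X_pow_card_sub_X_natDegree_eq L Fintype.one_lt_card,
    Finset.card_insert_of_notMem (by simpa using h),
    Finset.card_image_of_injective _ (algebraMap K L).injective, Finset.card_univ] at hle
  omega

/-- An absolutely irreducible polynomial over `K` cannot divide `P + σ (X₁ - X₃)^m` when `σ` is not
fixed by the Frobenius and `P` does not vanish at `(1,0,1,0,0)`. -/
lemma not_dvd_map_add_C_mul_pow {L : Type*} [Field L] [Algebra K L] {g P : MvPolynomial (Fin 5) K}
    {m : ℕ} (hm : 1 ≤ m) {σ : L} (hσ : σ ^ Fintype.card K ≠ σ)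
    (hP : eval ![1, 0, 1, 0, 0] P ≠ 0) (hg : Irreducible (map (algebraMap K L) g)) :
    ¬ map (algebraMap K L) g ∣ map (algebraMap K L) P + C σ * (X 1 - X 3) ^ m := by
  intro hdvd
  set G := map (algebraMap K L) g
  have hfrob : ∀ r : MvPolynomial (Fin 5) K,
      map (FiniteField.frobeniusAlgHom K L : L →+* L) (map (algebraMap K L) r) =
        map (algebraMap K L) r := fun r => by
    rw [map_map, AlgHom.comp_algebraMap]
  have hdvd' : G ∣ map (algebraMap K L) P + C (σ ^ Fintype.card K) * (X 1 - X 3) ^ m := by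
    have := map_dvd (map (FiniteField.frobeniusAlgHom K L : L →+* L)) hdvd
    rw [hfrob, map_add, hfrob, map_mul, map_C, map_pow, map_sub, map_X, map_X] at this
    exact this
  have hu : G ∣ X 1 - X 3 := by
    have h1 := dvd_sub hdvd' hdvd
    rw [add_sub_add_left_eq_sub, ← sub_mul, ← C_sub] at h1
    rcases hg.prime.dvd_or_dvd h1 with h2 | h2
    · exact absurd (isUnit_of_dvd_unit h2 ((isUnit_iff_ne_zero.2 (sub_ne_zero.2 hσ)).map C))
        hg.not_isUnit
    · exact hg.prime.dvd_of_dvd_pow h2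
  obtain ⟨H, hH⟩ := hu
  have hu0 : (X 1 - X 3 : MvPolynomial (Fin 5) L) ≠ 0 :=
    sub_ne_zero.2 fun h => by simpa using X_injective h
  have hH0 : H ≠ 0 := by
    rintro rfl
    exact hu0 (hH.trans (mul_zero _))
  have hdG : G.totalDegree ≠ 0 := fun h => by
    rw [totalDegree_eq_zero_iff_eq_C] at h
    refine hg.not_isUnit ?_
    rw [h]
    refine (isUnit_iff_ne_zero.2 fun h0 => hg.ne_zero ?_).map C
    rw [h, h0, C_0]
  have hdH : H.totalDegree = 0 := by
    have h1 := totalDegree_mul_of_isDomain hg.ne_zero hH0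
    rw [← hH] at h1
    have h2 := totalDegree_sub (X 1 : MvPolynomial (Fin 5) L) (X 3)
    rw [totalDegree_X, totalDegree_X, max_self] at h2
    omega
  rw [totalDegree_eq_zero_iff_eq_C] at hdH
  set pt : Fin 5 → L := ![1, 0, 1, 0, 0]
  have hGpt : eval pt G = 0 := by
    have h1 := congrArg (eval pt) hH
    rw [hdH] at h1
    have hc : coeff 0 H ≠ 0 := fun h0 => hH0 (by rw [hdH, h0, C_0])
    simpa [pt, hc] using h1
  obtain ⟨R, hR⟩ := hdvd
  have hPpt : eval pt (map (algebraMap K L) P) = 0 := by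
    have h1 := congrArg (eval pt) hR
    rw [map_mul, hGpt, zero_mul] at h1
    simpa [pt, (Nat.pos_iff_ne_zero.1 hm)] using h1
  apply hP
  apply (algebraMap K L).injective
  rw [map_zero, ← hPpt, eval_map, ← eval₂_id, eval₂_comp_left, RingHom.comp_id]
  congr 1
  funext i
  fin_cases i <;> simp [pt]

/-- An anisotropic binary quadratic form in `P` and `(X₁ - X₃)^m` has no absolutely irreducible
component over a finite field. -/
lemma not_hasAbsIrrComponent_of_quadratic {F P : MvPolynomial (Fin 5) K} {a b c : K} {m : ℕ}
    (hm : 1 ≤ m)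
    (hF : C a * F = P ^ 2 + C b * P * (X 1 - X 3) ^ m + C c * ((X 1 - X 3) ^ m) ^ 2)
    (hP : eval ![1, 0, 1, 0, 0] P ≠ 0) (hno : ∀ w : K, w ^ 2 + b * w + c ≠ 0) :
    ¬ HasAbsIrrComponent F := by
  rintro ⟨g, hgF, -, hg⟩
  set L := AlgebraicClosure K
  obtain ⟨ρ, hρ⟩ := IsAlgClosed.exists_root (Polynomial.X ^ 2 +
    Polynomial.C (algebraMap K L b) * Polynomial.X + Polynomial.C (algebraMap K L c)) (by
      have : (Polynomial.X ^ 2 + Polynomial.C (algebraMap K L b) * Polynomial.X +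
        Polynomial.C (algebraMap K L c) : Polynomial L).degree = 2 := by
        compute_degree!
      rw [this]; norm_num)
  replace hρ : ρ ^ 2 + algebraMap K L b * ρ + algebraMap K L c = 0 := by simpa using hρ
  set φ := FiniteField.frobeniusAlgHom K L
  have hφ : ∀ x, φ x = x ^ Fintype.card K := fun _ => rfl
  have hfix : φ ρ ≠ ρ := fun h => by
    obtain ⟨w, rfl⟩ := FiniteField.exists_algebraMap_eq_of_pow_card_eq ((hφ ρ).symm.trans h)
    refine hno w ((algebraMap K L).injective ?_)
    simpa using hρ
  have hρ' : φ ρ ^ 2 + algebraMap K L b * φ ρ + algebraMap K L c = 0 := by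
    have := congrArg φ hρ
    simpa using this
  have hsum : φ ρ + ρ + algebraMap K L b = 0 := by
    apply mul_left_cancel₀ (sub_ne_zero.2 hfix)
    linear_combination hρ' - hρ
  have hprod : ρ * φ ρ = algebraMap K L c := by
    linear_combination ρ * hsum - hρ
  have hfac : C (algebraMap K L a) * map (algebraMap K L) F =
      (map (algebraMap K L) P + C (-ρ) * (X 1 - X 3) ^ m) *
        (map (algebraMap K L) P + C (-φ ρ) * (X 1 - X 3) ^ m) := by
    have h1 := congrArg (map (algebraMap K L)) hF
    simp only [map_mul, map_add, map_C, map_pow, map_sub, map_X] at h1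
    have h2 : C (algebraMap K L b) = -C (φ ρ) - (C ρ : MvPolynomial (Fin 5) L) := by
      rw [← C_neg, ← C_sub]
      congr 1
      linear_combination hsum
    rw [h1, h2, ← hprod, C_mul, C_neg, C_neg]
    ring
  have hdvd : map (algebraMap K L) g ∣ C (algebraMap K L a) * map (algebraMap K L) F :=
    (map_dvd _ hgF).mul_left _
  rw [hfac] at hdvd
  rcases hg.prime.dvd_or_dvd hdvd with h | h
  · refine not_dvd_map_add_C_mul_pow hm (fun h0 => hfix ?_) hP hg h
    rw [← hφ, map_neg] at h0
    exact neg_injective h0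
  · refine not_dvd_map_add_C_mul_pow hm (fun h0 => hfix ?_) hP hg h
    rw [← hφ, map_neg] at h0
    exact φ.toRingHom.injective (neg_injective h0)

end AbsolutelyIrreducibleComponent

section AffineInSecondVariable

variable {K : Type*} [Field K]

/-- The linear map `X^i Y^j ↦ (X₁^i X₂^j - X₃^i X₄^j) X₀^(d-i-j)`. -/
noncomputable def differenceForm (K : Type*) [Field K] (d : ℕ) :
    MvPolynomial (Fin 2) K →ₗ[K] MvPolynomial (Fin 5) K :=
  (basisMonomials (Fin 2) K).constr K fun m =>
    (X 1 ^ m 0 * X 2 ^ m 1 - X 3 ^ m 0 * X 4 ^ m 1) * X 0 ^ (d - m 0 - m 1)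

lemma differenceForm_monomial (d : ℕ) (m : Fin 2 →₀ ℕ) (a : K) :
    differenceForm K d (monomial m a) =
      C a * (X 1 ^ m 0 * X 2 ^ m 1 - X 3 ^ m 0 * X 4 ^ m 1) * X 0 ^ (d - m 0 - m 1) := by
  have h : monomial m a = a • basisMonomials (Fin 2) K m := by
    rw [coe_basisMonomials, smul_monomial, smul_eq_mul, mul_one]
  rw [h, map_smul, differenceForm, Module.Basis.constr_basis, smul_eq_C_mul, mul_assoc]

lemma differenceForm_C_mul_X_zero_pow (d i : ℕ) (a : K) :
    differenceForm K d (C a * X 0 ^ i) = C a * (X 1 ^ i - X 3 ^ i) * X 0 ^ (d - i) := by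
  rw [C_mul_X_pow_eq_monomial, differenceForm_monomial]
  simp

lemma differenceForm_C_mul_X_one (d : ℕ) (a : K) :
    differenceForm K d (C a * X 1) = C a * (X 2 - X 4) * X 0 ^ (d - 1) := by
  rw [C_mul_X_eq_monomial, differenceForm_monomial]
  simp

lemma Fpoly_eq_differenceForm (f : MvPolynomial (Fin 2) K) (d : ℕ) :
    Fpoly f d = (X 2 - X 4) ^ 2 * X 0 ^ (d - 1) + (X 1 - X 3) * differenceForm K d f := by
  conv_rhs => rw [← support_sum_monomial_coeff f]
  rw [map_sum, Fpoly]
  simp only [differenceForm_monomial]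

lemma eval_aeval_X_zero_add (A : Polynomial K) (b x y : K) :
    eval ![x, y] (Polynomial.aeval (X 0) A + C b * X 1) = A.eval x + b * y := by
  have h : eval ![x, y] (Polynomial.aeval (X 0 : MvPolynomial (Fin 2) K) A) = A.eval x := by
    rw [Polynomial.aeval_def, Polynomial.hom_eval₂]
    have : (eval ![x, y]).comp (algebraMap K (MvPolynomial (Fin 2) K)) = RingHom.id K := by
      ext; simp [algebraMap_eq]
    rw [this, eval_X]
    simp
  rw [map_add, h]
  simp

lemma natDegree_le_totalDegree_aeval_X_zero_add (A : Polynomial K) (b : K) :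
    A.natDegree ≤ (Polynomial.aeval (X 0) A + C b * X 1 : MvPolynomial (Fin 2) K).totalDegree := by
  have h := aeval_natDegree_le (Polynomial.aeval (X 0) A + C b * X 1 : MvPolynomial (Fin 2) K)
    le_rfl ![Polynomial.X, 0] (n := 1) (by
      intro i
      fin_cases i <;> simp)
  have h2 : aeval ![Polynomial.X, 0] (Polynomial.aeval (X 0 : MvPolynomial (Fin 2) K) A) = A := by
    rw [← Polynomial.aeval_algHom_apply]
    simp
  rw [map_add, h2] at h
  simpa using h

variable [Fintype K]

/-- An ovoid `A(X) + b Y` forces the double covers attached to the increments of `A` to split over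
the algebraic closure. -/
lemma OvoidCondition.exists_sq_add_mul_add_eq_zero {A : Polynomial K} {b : K} {d : ℕ} (hd : 1 ≤ d)
    (hov : OvoidCondition (Polynomial.aeval (X 0) A + C b * X 1)) (hA : A.natDegree ≤ d)
    (hq : 4 * (d * (d + 1)) < Fintype.card K) (x₀ : K) :
    ∃ Q : Polynomial K, A - Polynomial.C (A.eval x₀) = (Polynomial.X - Polynomial.C x₀) * Q ∧
      ∃ T : Polynomial (AlgebraicClosure K),
        T ^ 2 + Polynomial.C (algebraMap K (AlgebraicClosure K) b) * T +
          Q.map (algebraMap K (AlgebraicClosure K)) = 0 := by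
  obtain ⟨Q, hQ⟩ := Polynomial.X_sub_C_dvd_sub_C_eval (a := x₀) (p := A)
  refine ⟨Q, hQ, _root_.exists_sq_add_mul_add_eq_zero hd ?_ hq x₀ fun y w hy hw => ?_⟩
  · rcases eq_or_ne Q 0 with rfl | hQ0
    · simp
    · have := congrArg Polynomial.natDegree hQ
      rw [Polynomial.natDegree_sub_C, Polynomial.natDegree_mul (Polynomial.X_sub_C_ne_zero _) hQ0,
        Polynomial.natDegree_X_sub_C] at this
      omega
  · refine hov y ((y - x₀) * w) x₀ 0 (by simp [hy]) ?_
    have h := congrArg (Polynomial.eval y) hQ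
    simp only [Polynomial.eval_sub, Polynomial.eval_C, Polynomial.eval_mul,
      Polynomial.eval_X] at h
    rw [eval_aeval_X_zero_add, eval_aeval_X_zero_add]
    linear_combination (y - x₀) * h + (y - x₀) ^ 2 * hw

/-- In odd characteristic, an ovoid `A(X) + b Y` has `b² X - 4 A` proportional to a power of the
Frobenius. -/
lemma OvoidCondition.exists_four_mul_eq {A : Polynomial K} {b : K} {d p : ℕ} [Fact p.Prime]
    [CharP K p] (hp2 : p ≠ 2) (hd : 1 ≤ d)
    (hov : OvoidCondition (Polynomial.aeval (X 0) A + C b * X 1)) (hA : A.natDegree ≤ d)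
    (hA0 : A.coeff 0 = 0) (hq : 4 * (d * (d + 1)) < Fintype.card K) :
    ∃ (α : K) (r : ℕ), p ^ r ≤ d ∧
      4 * A = Polynomial.C (b ^ 2) * Polynomial.X - Polynomial.C α * Polynomial.X ^ p ^ r := by
  classical
  have h2 : (2 : K) ≠ 0 := by
    intro h
    have h3 : p ∣ 2 := (CharP.cast_eq_zero_iff K p 2).1 (by exact_mod_cast h)
    exact hp2 ((Nat.prime_dvd_prime_iff_eq Fact.out Nat.prime_two).1 h3)
  set L := AlgebraicClosure K
  have : CharP L p := charP_of_injective_algebraMap (algebraMap K L).injective p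
  set N : Polynomial K := Polynomial.C (b ^ 2) * Polynomial.X - 4 * A with hN
  have hN0 : N.coeff 0 = 0 := by simp [hN, hA0, Polynomial.mul_coeff_zero]
  have hNd : N.natDegree ≤ d := by
    refine (Polynomial.natDegree_sub_le _ _).trans (max_le ?_ ?_)
    · exact (Polynomial.natDegree_C_mul_le _ _).trans (Polynomial.natDegree_X_le.trans hd)
    · rw [show (4 : Polynomial K) = Polynomial.C 4 by rw [Polynomial.C_ofNat]]
      exact (Polynomial.natDegree_C_mul_le _ _).trans hA
  have hN1 : 1 ≤ N.natDegree := by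
    by_contra hlt
    have hN' : N = 0 := by
      rw [Polynomial.eq_C_of_natDegree_eq_zero (p := N) (by omega), hN0, Polynomial.C_0]
    have h1 := congrArg (Polynomial.eval 1) hN'
    have hA00 : A.eval 0 = 0 := by rw [← Polynomial.coeff_zero_eq_eval_zero, hA0]
    simp [hN] at h1
    refine hov 1 (-b / 2) 0 0 (by simp) ?_
    rw [eval_aeval_X_zero_add, eval_aeval_X_zero_add, hA00]
    apply mul_left_cancel₀ (mul_ne_zero h2 h2)
    field_simp
    linear_combination -h1
  have hM : (N.map (algebraMap K L)).natDegree = N.natDegree := Polynomial.natDegree_map _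
  obtain ⟨α, β, r, -, hαβ⟩ := Polynomial.eq_C_mul_X_pow_add_C_of_square_cofactors (p := p) hp2
    (M := N.map (algebraMap K L)) (Z := Finset.univ.image (algebraMap K L)) (hM.symm ▸ hN1)
    (by
      rw [hM, Finset.card_image_of_injective _ (algebraMap K L).injective, Finset.card_univ]
      nlinarith)
    (fun z hz => by
      obtain ⟨x₀, -, rfl⟩ := Finset.mem_image.1 hz
      obtain ⟨Q, hQ, T, hT⟩ := hov.exists_sq_add_mul_add_eq_zero hd hA hq x₀
      refine ⟨2 * T + Polynomial.C (algebraMap K L b), ?_⟩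
      have h3 := congrArg (Polynomial.map (algebraMap K L)) hQ
      simp only [Polynomial.map_sub, Polynomial.map_mul, Polynomial.map_C, Polynomial.map_X] at h3
      rw [Polynomial.eval_map_apply, hN]
      simp only [Polynomial.map_sub, Polynomial.map_mul, Polynomial.map_C, Polynomial.map_X,
        Polynomial.map_pow, Polynomial.map_ofNat, Polynomial.eval_sub, Polynomial.eval_mul,
        Polynomial.eval_C, Polynomial.eval_pow, Polynomial.eval_X, Polynomial.eval_ofNat, map_sub, map_mul, map_pow, map_ofNat]
      linear_combination -4 * h3 - 4 * (Polynomial.X - Polynomial.C (algebraMap K L x₀)) * hT)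
  have hσ : p ^ r ≠ 0 := pow_ne_zero _ (Nat.Prime.ne_zero Fact.out)
  have hNeq : N = Polynomial.C (N.coeff (p ^ r)) * Polynomial.X ^ p ^ r := by
    ext i
    rw [Polynomial.coeff_C_mul_X_pow]
    split_ifs with hi
    · rw [hi]
    · rcases eq_or_ne i 0 with rfl | hi0
      · exact hN0
      · apply (algebraMap K L).injective
        rw [← Polynomial.coeff_map, hαβ]
        simp [Polynomial.coeff_X_pow, Polynomial.coeff_C, hi, hi0]
  refine ⟨N.coeff (p ^ r), r, ?_, ?_⟩
  · by_contra hlt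
    rw [Polynomial.coeff_eq_zero_of_natDegree_lt (by omega), Polynomial.C_0, zero_mul] at hNeq
    rw [hNeq, Polynomial.natDegree_zero] at hN1
    omega
  · rw [← hNeq, hN]
    ring

lemma OvoidCondition.not_hasAbsIrrComponent_of_odd {A : Polynomial K} {b : K} {d p : ℕ}
    [Fact p.Prime] [CharP K p] (hp2 : p ≠ 2) (hd : 1 ≤ d)
    {f : MvPolynomial (Fin 2) K} (hf : f = Polynomial.aeval (X 0) A + C b * X 1)
    (hov : OvoidCondition f) (hdeg : f.totalDegree = d)
    (hA0 : A.coeff 0 = 0) (hq : 4 * (d * (d + 1)) < Fintype.card K) :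
    ¬ HasAbsIrrComponent (Fpoly f d) := by
  have hpp : p.Prime := Fact.out
  have h2 : (2 : K) ≠ 0 := by
    intro h
    have h3 : p ∣ 2 := (CharP.cast_eq_zero_iff K p 2).1 (by exact_mod_cast h)
    exact hp2 ((Nat.prime_dvd_prime_iff_eq hpp Nat.prime_two).1 h3)
  have h4 : (4 : K) ≠ 0 := by
    rw [show (4 : K) = 2 * 2 by norm_num]
    exact mul_ne_zero h2 h2
  have hA : A.natDegree ≤ d := by
    rw [← hdeg, hf]
    exact natDegree_le_totalDegree_aeval_X_zero_add A b
  have hov' := hf ▸ hov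
  obtain ⟨α, r, hr, hα⟩ := hov'.exists_four_mul_eq hp2 hd hA hA0 hq
  have hσ1 : 1 ≤ p ^ r := Nat.one_le_pow _ _ hpp.pos
  have hf4 : (4 : K) • f = C (b ^ 2) * X 0 ^ 1 - C α * X 0 ^ p ^ r + C (4 * b) * X 1 := by
    have h := congrArg (Polynomial.aeval (X 0 : MvPolynomial (Fin 2) K)) hα
    simp only [map_mul, map_sub, Polynomial.aeval_C, Polynomial.aeval_X, map_pow, map_ofNat,
      algebraMap_eq] at h
    rw [smul_eq_C_mul, hf, C_mul, C_pow, map_ofNat C 4]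
    linear_combination h
  have hd' : d = p ^ r := by
    refine le_antisymm ?_ hr
    have h5 : f = (4 : K)⁻¹ • (C (b ^ 2) * X 0 ^ 1 - C α * X 0 ^ p ^ r + C (4 * b) * X 1) := by
      rw [← hf4, inv_smul_smul₀ h4]
    rw [← hdeg, h5]
    have hterm : ∀ (c : K) (i : Fin 2) (n : ℕ),
        (C c * X i ^ n : MvPolynomial (Fin 2) K).totalDegree ≤ n := fun c i n =>
      (totalDegree_mul _ _).trans (by rw [totalDegree_C, totalDegree_X_pow, zero_add])
    refine (totalDegree_smul_le _ _).trans ((totalDegree_add _ _).trans (max_le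
      ((totalDegree_sub _ _).trans (max_le ((hterm _ _ _).trans hσ1) (hterm _ _ _))) ?_))
    simpa using (hterm (4 * b) 1 1).trans hσ1
  obtain ⟨k, hk⟩ : Odd (p ^ r) := (hpp.odd_of_ne_two hp2).pow
  refine not_hasAbsIrrComponent_of_quadratic (a := 4) (b := 0) (c := -α) (m := k + 1)
    (P := (2 * (X 2 - X 4) + C b * (X 1 - X 3)) * X 0 ^ k) (Nat.le_add_left 1 k) ?_ ?_
    (fun w hw => ?_)
  · have hΦ := congrArg (differenceForm K d) hf4
    rw [map_smul, map_add, map_sub, differenceForm_C_mul_X_zero_pow,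
      differenceForm_C_mul_X_zero_pow, differenceForm_C_mul_X_one,
      ← sub_pow_char_pow, smul_eq_C_mul, map_ofNat C 4, C_mul, map_ofNat C 4, C_pow,
      hd', hk] at hΦ
    rw [Fpoly_eq_differenceForm, hd', hk, map_ofNat C 4, C_0, C_neg]
    simp only [Nat.add_sub_cancel, Nat.sub_self, pow_zero, pow_one, mul_one] at hΦ ⊢
    linear_combination (X 1 - X 3) * hΦ
  · simp [h2]
  · have hA00 : A.eval 0 = 0 := by rw [← Polynomial.coeff_zero_eq_eval_zero, hA0]
    have hA1 := congrArg (Polynomial.eval 1) hα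
    simp only [Polynomial.eval_mul, Polynomial.eval_ofNat, Polynomial.eval_sub, Polynomial.eval_C,
      Polynomial.eval_X, Polynomial.eval_pow, one_pow, mul_one] at hA1
    refine hov 1 ((w - b) / 2) 0 0 (by simp) ?_
    rw [hf, eval_aeval_X_zero_add, eval_aeval_X_zero_add, hA00]
    apply mul_left_cancel₀ h4
    field_simp
    linear_combination hA1 + hw

lemma OvoidCondition.natDegree_le_one {A : Polynomial K} {b : K} {d : ℕ}
    (h2 : (2 : K) = 0) (hd : 1 ≤ d) (hov : OvoidCondition (Polynomial.aeval (X 0) A + C b * X 1))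
    (hA : A.natDegree ≤ d) (hq : 4 * (d * (d + 1)) < Fintype.card K) : A.natDegree ≤ 1 := by
  obtain ⟨Q₀, hQ₀, T₀, hT₀⟩ := hov.exists_sq_add_mul_add_eq_zero hd hA hq 0
  obtain ⟨Q₁, hQ₁, T₁, hT₁⟩ := hov.exists_sq_add_mul_add_eq_zero hd hA hq 1
  have h₀ := congrArg (Polynomial.map (algebraMap K (AlgebraicClosure K))) hQ₀
  have h₁ := congrArg (Polynomial.map (algebraMap K (AlgebraicClosure K))) hQ₁
  simp only [Polynomial.map_sub, Polynomial.map_mul, Polynomial.map_C, Polynomial.map_X,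
    Polynomial.map_one, map_zero, map_one, sub_zero] at h₀ h₁
  have h2L : (2 : (AlgebraicClosure K)) = 0 := by
    rw [← map_ofNat (algebraMap K (AlgebraicClosure K)) 2, h2, map_zero]
  have hA1 := Polynomial.natDegree_le_one_of_sq_add_mul (L := AlgebraicClosure K) h₀ h₁ h2L hT₀ hT₁
  rwa [Polynomial.natDegree_map] at hA1

lemma OvoidCondition.not_hasAbsIrrComponent_of_two_eq_zero {A : Polynomial K} {b : K} {d : ℕ}
    (h2 : (2 : K) = 0) (hd : 1 ≤ d)
    {f : MvPolynomial (Fin 2) K} (hf : f = Polynomial.aeval (X 0) A + C b * X 1)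
    (hov : OvoidCondition f) (hdeg : f.totalDegree = d)
    (hA0 : A.coeff 0 = 0) (hq : 4 * (d * (d + 1)) < Fintype.card K) :
    ¬ HasAbsIrrComponent (Fpoly f d) := by
  have hA : A.natDegree ≤ d := by
    rw [← hdeg, hf]
    exact natDegree_le_totalDegree_aeval_X_zero_add A b
  have hov' := hf ▸ hov
  have hA1 := hov'.natDegree_le_one h2 hd hA hq
  obtain ⟨α, rfl⟩ : ∃ α, A = Polynomial.C α * Polynomial.X :=
    ⟨A.coeff 1, by
      conv_lhs => rw [Polynomial.eq_X_add_C_of_natDegree_le_one hA1, hA0, Polynomial.C_0, add_zero]⟩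
  have hf' : f = C α * X 0 ^ 1 + C b * X 1 := by
    rw [hf, map_mul, Polynomial.aeval_C, Polynomial.aeval_X, pow_one, algebraMap_eq]
  obtain rfl : d = 1 := by
    refine le_antisymm ?_ hd
    have hterm : ∀ (c : K) (i : Fin 2),
        (C c * X i : MvPolynomial (Fin 2) K).totalDegree ≤ 1 := fun c i =>
      (totalDegree_mul _ _).trans (by rw [totalDegree_C, totalDegree_X, zero_add])
    rw [← hdeg, hf', pow_one]
    exact (totalDegree_add _ _).trans (max_le (hterm _ _) (hterm _ _))
  refine not_hasAbsIrrComponent_of_quadratic (a := 1) (b := b) (c := α) (m := 1)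
    (P := X 2 - X 4) le_rfl ?_ (by simp) (fun w hw => ?_)
  · rw [Fpoly_eq_differenceForm, hf', map_add, differenceForm_C_mul_X_zero_pow,
      differenceForm_C_mul_X_one, C_1]
    ring
  · refine hov 1 w 0 0 (by simp) ?_
    rw [hf, eval_aeval_X_zero_add, eval_aeval_X_zero_add]
    simp only [Polynomial.eval_mul, Polynomial.eval_C, Polynomial.eval_X]
    linear_combination hw

end AffineInSecondVariable

section Bivariate

variable {K : Type*} [Field K]

/-- A polynomial in two variables, as a polynomial in the second one. -/
noncomputable def toBivariate (f : MvPolynomial (Fin 2) K) : Polynomial (Polynomial K) :=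
  aeval ![Polynomial.C Polynomial.X, Polynomial.X] f

lemma toBivariate_eq_sum (f : MvPolynomial (Fin 2) K) :
    toBivariate f = ∑ m ∈ f.support,
      Polynomial.C (Polynomial.C (f.coeff m) * Polynomial.X ^ m 0) * Polynomial.X ^ m 1 := by
  conv_lhs => rw [← support_sum_monomial_coeff f]
  rw [toBivariate, map_sum]
  refine Finset.sum_congr rfl fun m _ => ?_
  rw [aeval_monomial, Finsupp.prod_fintype _ _ (by simp), Fin.prod_univ_two, Polynomial.C_mul,
    Polynomial.C_pow, mul_assoc]
  rfl

lemma add_le_totalDegree {f : MvPolynomial (Fin 2) K} {m : Fin 2 →₀ ℕ} (hm : m ∈ f.support) :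
    m 0 + m 1 ≤ f.totalDegree := by
  have := le_totalDegree hm
  rwa [Finsupp.sum_fintype _ _ (by simp), Fin.sum_univ_two] at this

lemma natDegree_toBivariate_le (f : MvPolynomial (Fin 2) K) :
    (toBivariate f).natDegree ≤ f.totalDegree := by
  rw [toBivariate_eq_sum]
  refine Polynomial.natDegree_sum_le_of_forall_le _ _ fun m hm => ?_
  exact (Polynomial.natDegree_C_mul_X_pow_le _ _).trans
    ((Nat.le_add_left _ _).trans (add_le_totalDegree hm))

lemma natDegree_coeff_toBivariate_le (f : MvPolynomial (Fin 2) K) (j : ℕ) :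
    ((toBivariate f).coeff j).natDegree ≤ f.totalDegree := by
  rw [toBivariate_eq_sum, Polynomial.finsetSum_coeff]
  refine Polynomial.natDegree_sum_le_of_forall_le _ _ fun m hm => ?_
  rw [Polynomial.coeff_C_mul_X_pow]
  split_ifs
  · exact (Polynomial.natDegree_C_mul_X_pow_le _ _).trans
      ((Nat.le_add_right _ _).trans (add_le_totalDegree hm))
  · simp

lemma eval_map_toBivariate (f : MvPolynomial (Fin 2) K) (x y : K) :
    ((toBivariate f).map (Polynomial.evalRingHom x)).eval y = eval ![x, y] f := by
  have h : ((Polynomial.evalRingHom y).comp (Polynomial.mapRingHom (Polynomial.evalRingHom x))).comp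
      (aeval ![Polynomial.C Polynomial.X, Polynomial.X] :
        MvPolynomial (Fin 2) K →ₐ[K] Polynomial (Polynomial K)).toRingHom = eval ![x, y] := by
    refine ringHom_ext (fun a => ?_) (fun i => ?_)
    · simp [Polynomial.algebraMap_apply]
    · fin_cases i <;> simp
  exact RingHom.congr_fun h f

lemma eval₂_toBivariate (f : MvPolynomial (Fin 2) K) :
    (toBivariate f).eval₂ (Polynomial.aeval (X 0 : MvPolynomial (Fin 2) K)).toRingHom (X 1) =
      f := by
  have h : (Polynomial.eval₂RingHom (Polynomial.aeval (X 0 : MvPolynomial (Fin 2) K)).toRingHom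
      (X 1)).comp (aeval ![Polynomial.C Polynomial.X, Polynomial.X] :
        MvPolynomial (Fin 2) K →ₐ[K] Polynomial (Polynomial K)).toRingHom = RingHom.id _ := by
    refine ringHom_ext (fun a => ?_) (fun i => ?_)
    · simp [Polynomial.algebraMap_apply, algebraMap_eq]
    · fin_cases i <;> simp
  exact RingHom.congr_fun h f

lemma eq_aeval_add_of_natDegree_toBivariate_le_one {f : MvPolynomial (Fin 2) K} {b : K}
    (h : (toBivariate f).natDegree ≤ 1) (hb : (toBivariate f).coeff 1 = Polynomial.C b) :
    f = Polynomial.aeval (X 0) ((toBivariate f).coeff 0) + C b * X 1 := by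
  conv_lhs => rw [← eval₂_toBivariate f, Polynomial.eq_X_add_C_of_natDegree_le_one h, hb]
  simp [algebraMap_eq, add_comm]

/-- The coefficient of degree `totalDegree f` of `f(x₀ - U, l U)`. -/
lemma coeff_aeval_totalDegree (f : MvPolynomial (Fin 2) K) (x₀ l : K) :
    (aeval ![Polynomial.C x₀ - Polynomial.X, Polynomial.C l * Polynomial.X] f :
      Polynomial K).coeff f.totalDegree =
      (∑ m ∈ f.support, if m 0 + m 1 = f.totalDegree then
        Polynomial.C (f.coeff m * (-1) ^ m 0) * Polynomial.X ^ m 1 else 0).eval l := by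
  conv_lhs => rw [← support_sum_monomial_coeff f]
  rw [map_sum, Polynomial.finsetSum_coeff, Polynomial.eval_finsetSum, support_sum_monomial_coeff]
  refine Finset.sum_congr rfl fun m hm => ?_
  have h0 : (Polynomial.C x₀ - Polynomial.X : Polynomial K).natDegree ≤ 1 := by compute_degree
  have h1 : (Polynomial.C l * Polynomial.X : Polynomial K).natDegree ≤ 1 := by compute_degree
  have e0 := Polynomial.natDegree_pow_le_of_le (m 0) h0
  have e1 := Polynomial.natDegree_pow_le_of_le (m 1) h1
  rw [mul_one] at e0 e1
  rw [aeval_monomial, Finsupp.prod_fintype _ _ (by simp), Fin.prod_univ_two]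
  simp only [Matrix.cons_val_zero, Matrix.cons_val_one, Polynomial.algebraMap_eq,
    Polynomial.coeff_C_mul]
  split_ifs with h
  · rw [← h, Polynomial.coeff_mul_add_eq_of_natDegree_le e0 e1]
    have c0 := Polynomial.coeff_pow_of_natDegree_le (m := m 0) h0
    have c1 := Polynomial.coeff_pow_of_natDegree_le (m := m 1) h1
    rw [mul_one] at c0 c1
    rw [c0, c1]
    simp [Polynomial.coeff_C, mul_assoc]
  · have := add_le_totalDegree hm
    rw [Polynomial.coeff_eq_zero_of_natDegree_lt, mul_zero, Polynomial.eval_zero]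
    exact (Polynomial.natDegree_mul_le_of_le e0 e1).trans_lt (by omega)

lemma sum_top_ne_zero {f : MvPolynomial (Fin 2) K} (hf : f ≠ 0) :
    (∑ m ∈ f.support, if m 0 + m 1 = f.totalDegree then
      Polynomial.C (f.coeff m * (-1) ^ m 0) * Polynomial.X ^ m 1 else 0 : Polynomial K) ≠ 0 := by
  obtain ⟨m, hm, hmd⟩ := Finset.exists_mem_eq_sup f.support (support_nonempty.2 hf)
    (fun s => s.sum fun _ e => e)
  rw [Finsupp.sum_fintype _ _ (by simp), Fin.sum_univ_two] at hmd
  have hmd : f.totalDegree = m 0 + m 1 := hmd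
  intro h
  have h1 := congrArg (fun r => r.coeff (m 1)) h
  simp only [Polynomial.finsetSum_coeff, Polynomial.coeff_zero] at h1
  rw [Finset.sum_eq_single m] at h1
  · rw [if_pos hmd.symm, Polynomial.coeff_C_mul_X_pow, if_pos rfl] at h1
    exact (mem_support_iff.1 hm) ((mul_eq_zero.1 h1).resolve_right (by simp))
  · intro s _ hs
    split_ifs with hsd
    · rw [Polynomial.coeff_C_mul_X_pow, if_neg]
      intro h2
      apply hs
      ext i
      fin_cases i
      · simp only [Fin.zero_eta]
        omega
      · exact h2.symm
    · simp
  · exact fun h => absurd hm h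

variable [Fintype K]

lemma Polynomial.exists_eval_ne_zero_of_natDegree_lt_fintypeCard {r : Polynomial K} (hr : r ≠ 0)
    (h : r.natDegree < Fintype.card K) : ∃ x, r.eval x ≠ 0 :=
  exists_eval_ne_zero_of_natDegree_lt_card r hr (by rw [Cardinal.mk_fintype]; exact_mod_cast h)

/-- If `f` has degree at least two in the second variable, it does not define an ovoid. -/
lemma not_ovoidCondition_of_two_le_natDegree {f : MvPolynomial (Fin 2) K}
    (hJ : 2 ≤ (toBivariate f).natDegree)
    (hq : 2 * ((f.totalDegree + 1) ^ 2 * f.totalDegree ^ 2) < Fintype.card K) :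
    ¬ OvoidCondition f := by
  intro hov
  have hJd := natDegree_toBivariate_le f
  have hdq : f.totalDegree < Fintype.card K := by nlinarith [sq_nonneg f.totalDegree]
  have hf : f ≠ 0 := by
    rintro rfl
    simp [toBivariate] at hJ
  obtain ⟨x₀, hx₀⟩ := Polynomial.exists_eval_ne_zero_of_natDegree_lt_fintypeCard
    (r := (toBivariate f).leadingCoeff)
    (by
      rw [Polynomial.leadingCoeff_ne_zero]
      intro h
      rw [h, Polynomial.natDegree_zero] at hJ
      omega)
    ((natDegree_coeff_toBivariate_le f _).trans_lt hdq)
  obtain ⟨l, hl⟩ := Polynomial.exists_eval_ne_zero_of_natDegree_lt_fintypeCard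
    (sum_top_ne_zero hf) (lt_of_le_of_lt (Polynomial.natDegree_sum_le_of_forall_le _ _
      fun m hm => by
        split_ifs
        · exact (Polynomial.natDegree_C_mul_X_pow_le _ _).trans
            ((Nat.le_add_left _ _).trans (add_le_totalDegree hm))
        · simp) hdq)
  rw [← coeff_aeval_totalDegree f x₀] at hl
  set a : Polynomial K :=
    aeval ![Polynomial.C x₀ - Polynomial.X, Polynomial.C l * Polynomial.X] f with ha
  have hadeg : a.natDegree = f.totalDegree := by
    refine le_antisymm ?_ (Polynomial.le_natDegree_of_ne_zero hl)
    have := aeval_natDegree_le f le_rfl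
      ![Polynomial.C x₀ - Polynomial.X, Polynomial.C l * Polynomial.X] (n := 1) (by
        intro i
        fin_cases i
        · change (Polynomial.C x₀ - Polynomial.X : Polynomial K).natDegree ≤ 1
          compute_degree
        · change (Polynomial.C l * Polynomial.X : Polynomial K).natDegree ≤ 1
          compute_degree)
    rwa [mul_one] at this
  have haeval : ∀ u, a.eval u = eval ![x₀ - u, l * u] f := fun u => by
    have h : (Polynomial.evalRingHom u).comp
        (aeval ![Polynomial.C x₀ - Polynomial.X, Polynomial.C l * Polynomial.X] :
          MvPolynomial (Fin 2) K →ₐ[K] Polynomial K).toRingHom = eval ![x₀ - u, l * u] := by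
      refine ringHom_ext (fun c => ?_) (fun i => ?_)
      · simp
      · fin_cases i <;> simp
    exact RingHom.congr_fun h f
  have hφdeg : ((toBivariate f).map (Polynomial.evalRingHom x₀)).natDegree =
      (toBivariate f).natDegree :=
    Polynomial.natDegree_map_of_leadingCoeff_ne_zero _ hx₀
  obtain ⟨y, u, hy, hyu⟩ := exists_fiber_root hadeg (by rw [hφdeg]; exact hJ)
    (by rw [hφdeg]; exact hJd) l hq
  rw [haeval, eval_map_toBivariate] at hyu
  refine hov x₀ y (x₀ - u) (l * u) (fun h => ?_) (by rw [sub_sub_cancel]; exact hyu)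
  rw [Prod.mk.injEq] at h
  have hu : u = 0 := by linear_combination h.1
  apply hy
  rw [h.2, hu, mul_zero]

/-- If `f = A(X) + B(X) Y` with `B` nonconstant, it does not define an ovoid. -/
lemma not_ovoidCondition_of_natDegree_coeff_pos {f : MvPolynomial (Fin 2) K}
    (hJ : (toBivariate f).natDegree ≤ 1) (hB : 1 ≤ ((toBivariate f).coeff 1).natDegree)
    (hq : f.totalDegree < Fintype.card K) : ¬ OvoidCondition f := by
  intro hov
  have heval : ∀ x y, eval ![x, y] f =
      ((toBivariate f).coeff 1).eval x * y + ((toBivariate f).coeff 0).eval x := fun x y => by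
    rw [← eval_map_toBivariate]
    conv_lhs => rw [Polynomial.eq_X_add_C_of_natDegree_le_one hJ]
    simp
  set A := (toBivariate f).coeff 0
  set B := (toBivariate f).coeff 1 with hBdef
  obtain ⟨x, hx⟩ := Polynomial.exists_eval_ne_zero_of_natDegree_lt_fintypeCard
    (r := B - Polynomial.C (B.eval 0))
    (by
      intro h
      rw [sub_eq_zero.1 h, Polynomial.natDegree_C] at hB
      omega)
    (by
      rw [Polynomial.natDegree_sub_C]
      exact (natDegree_coeff_toBivariate_le f 1).trans_lt hq)
  rw [Polynomial.eval_sub, Polynomial.eval_C] at hx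
  refine hov x (-(A.eval x - A.eval 0) / (B.eval x - B.eval 0)) 0
    (-(A.eval x - A.eval 0) / (B.eval x - B.eval 0)) ?_ ?_
  · intro h
    rw [Prod.mk.injEq] at h
    rw [h.1, sub_self] at hx
    exact hx rfl
  · rw [heval, heval]
    field_simp
    ring

end Bivariate

/-- If `q > 6.3·(d+1)^{13/3}` and the hypersurface `S_f` contains an absolutely irreducible
component defined over `F_q`, then `O_4(f)` is not an ovoid of `Q(4,q)`. -/
theorem statement0 (p h q : ℕ) (hp : p.Prime) (hh : 0 < h) (hq : q = p ^ h)
    (K : Type*) [Field K] [Fintype K] (hcard : Fintype.card K = q)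
    (f : MvPolynomial (Fin 2) K) (d : ℕ) (hdeg : f.totalDegree = d) (hd : 1 ≤ d)
    (h00 : coeffXY f 0 0 = 0)
    (hbig : (6.3 : ℝ) * ((d : ℝ) + 1) ^ ((13 : ℝ) / 3) < (q : ℝ))
    (hcomp : HasAbsIrrComponent (Fpoly f d)) :
    ¬ OvoidCondition f := by
  have hcard' : 6 * (d + 1) ^ 4 < Fintype.card K := by
    have h1 : ((d : ℝ) + 1) ^ 4 ≤ ((d : ℝ) + 1) ^ ((13 : ℝ) / 3) := by
      rw [← Real.rpow_natCast]
      exact Real.rpow_le_rpow_of_exponent_le (by linarith [(Nat.cast_nonneg d : (0 : ℝ) ≤ d)])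
        (by norm_num)
    have h2 : (0 : ℝ) ≤ ((d : ℝ) + 1) ^ 4 := by positivity
    have h3 : (6 : ℝ) * ((d : ℝ) + 1) ^ 4 < q := by linarith
    rw [hcard]
    exact_mod_cast h3
  have hd4 : (d + 1) ^ 2 ≤ (d + 1) ^ 4 := Nat.pow_le_pow_right (Nat.succ_pos d) (by norm_num)
  intro hov
  by_cases hJ : 2 ≤ (toBivariate f).natDegree
  · refine not_ovoidCondition_of_two_le_natDegree hJ ?_ hov
    rw [hdeg]
    have h1 : (d + 1) ^ 2 * d ^ 2 ≤ (d + 1) ^ 2 * (d + 1) ^ 2 :=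
      Nat.mul_le_mul_left _ (Nat.pow_le_pow_left (Nat.le_succ d) 2)
    rw [← pow_add, show 2 + 2 = 4 from rfl] at h1
    omega
  have hJ' : (toBivariate f).natDegree ≤ 1 := by omega
  by_cases hB : 1 ≤ ((toBivariate f).coeff 1).natDegree
  · refine not_ovoidCondition_of_natDegree_coeff_pos hJ' hB ?_ hov
    rw [hdeg]
    nlinarith
  have hf := eq_aeval_add_of_natDegree_toBivariate_le_one hJ'
    (Polynomial.eq_C_of_natDegree_eq_zero (by omega))
  have hA0 : ((toBivariate f).coeff 0).coeff 0 = 0 := by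
    have h1 := congrArg (eval ![(0 : K), 0]) hf
    rw [eval_aeval_X_zero_add, mul_zero, add_zero, ← Polynomial.coeff_zero_eq_eval_zero] at h1
    rw [← h1, show (![0, 0] : Fin 2 → K) = 0 by ext i; fin_cases i <;> rfl, eval_zero]
    simpa [coeffXY, constantCoeff_eq] using h00
  have hq4 : 4 * (d * (d + 1)) < Fintype.card K := by nlinarith
  have : Fact p.Prime := ⟨hp⟩
  have : CharP K p := charP_of_card_eq_prime_pow (hcard.trans hq)
  rcases eq_or_ne p 2 with rfl | hp2
  · exact hov.not_hasAbsIrrComponent_of_two_eq_zero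
      (by exact_mod_cast CharP.cast_eq_zero K 2) hd hf hdeg hA0 hq4 hcomp
  · exact hov.not_hasAbsIrrComponent_of_odd hp2 hd hf hdeg hA0 hq4 hcomp
end

section
/- Let q = p^h be a prime power and let f(X,Y) = Σ_{i,j} a_{i,j} X^i Y^j ∈ F_q[X,Y] have total degree d > 1 and a_{0,0} = 0. If there exists an index i ≠ d with a_{i,d−i} ≠ 0, then the hypersurface S_f contains an absolutely irreducible component defined over F_q; that is, there is a nonconstant polynomial g ∈ F_q[X_0,X_1,X_2,X_3,X_4] dividing F that remains irreducible over the algebraic closure of F_q. -/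
open MvPolynomial

section GaloisDescent

variable {σ K L : Type*} [Field K] [Field L] [Algebra K L]

/-- Polynomials with coefficients in the base field are fixed by the Galois action. -/
lemma map_algEquiv_map_algebraMap (τ : Gal(L/K)) (P : MvPolynomial σ K) :
    map (τ : L →+* L) (map (algebraMap K L) P) = map (algebraMap K L) P := by
  rw [map_map]
  congr 2
  ext x
  simp

/-- A polynomial fixed by the Galois action has coefficients in the base field. -/
lemma exists_map_algebraMap_eq_of_fixed [IsGalois K L] (g : MvPolynomial σ L)
    (hg : ∀ τ : Gal(L/K), map (τ : L →+* L) g = g) :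
    ∃ g₀ : MvPolynomial σ K, map (algebraMap K L) g₀ = g := by
  refine mem_range_map_iff_coeffs_subset.mpr fun c hc => ?_
  obtain ⟨m, -, rfl⟩ := mem_coeffs_iff.mp hc
  rw [InfiniteGalois.mem_range_algebraMap_iff_fixed]
  intro τ
  have := congrArg (coeff m) (hg τ)
  rwa [coeff_map] at this

/-- A polynomial associated to all of its Galois conjugates is, up to a nonzero scalar, defined
over the base field. -/
lemma exists_associated_map_algebraMap [IsGalois K L] {g : MvPolynomial σ L} (hg : g ≠ 0)
    (h : ∀ τ : Gal(L/K), Associated g (map (τ : L →+* L) g)) :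
    ∃ g₀ : MvPolynomial σ K, Associated (map (algebraMap K L) g₀) g := by
  obtain ⟨m, hm⟩ := ne_zero_iff.mp hg
  obtain ⟨g₀, hg₀⟩ := exists_map_algebraMap_eq_of_fixed (K := K) (C (coeff m g)⁻¹ * g) fun τ => by
    obtain ⟨u, hu⟩ := h τ
    obtain ⟨c, hc, hcu⟩ := isUnit_iff_eq_C_of_isReduced.mp u.isUnit
    rw [hcu] at hu
    have hτ : τ (coeff m g) = coeff m g * c := by
      have := congrArg (coeff m) hu
      rw [mul_comm, coeff_C_mul, coeff_map] at this
      rw [mul_comm]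
      exact this.symm
    have hscal : τ (coeff m g)⁻¹ * c = (coeff m g)⁻¹ := by
      rw [map_inv₀, hτ, mul_inv, mul_assoc, inv_mul_cancel₀ hc.ne_zero, mul_one]
    rw [map_mul, map_C, ← hu, mul_comm g, ← mul_assoc, ← C_mul]
    congr 2
  refine ⟨g₀, ?_⟩
  rw [hg₀]
  exact (associated_isUnit_mul_left_iff ((isUnit_iff_ne_zero.mpr (inv_ne_zero hm)).map C)).mpr
    (Associated.refl g)

/-- Divisibility of polynomials descends along a Galois extension. -/
lemma dvd_of_map_algebraMap_dvd [IsGalois K L] {g F : MvPolynomial σ K}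
    (hg : g ≠ 0) (h : map (algebraMap K L) g ∣ map (algebraMap K L) F) : g ∣ F := by
  have hinj : Function.Injective (map (σ := σ) (algebraMap K L)) :=
    map_injective _ (algebraMap K L).injective
  obtain ⟨k, hk⟩ := h
  obtain ⟨k₀, rfl⟩ := exists_map_algebraMap_eq_of_fixed (K := K) k fun τ => by
    have := congrArg (map (τ : L →+* L)) hk
    rw [map_mul, map_algEquiv_map_algebraMap, map_algEquiv_map_algebraMap, hk] at this
    exact (mul_left_cancel₀ ((map_ne_zero_iff _ hinj).mpr hg) this).symm
  exact ⟨k₀, hinj (by rw [hk, map_mul])⟩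

/-- If, after a substitution `v` defined over the base field, `F` becomes exactly divisible (once)
by a polynomial `l` over the base field that is prime over `L`, then `F` has a factor over the base
field which is irreducible over `L`. -/
lemma exists_dvd_irreducible_map [IsGalois K L] {ρ : Type*} (F : MvPolynomial σ K)
    (v : σ → MvPolynomial ρ K) (l : MvPolynomial ρ K) (hl : Prime (map (algebraMap K L) l))
    (hdvd : l ∣ aeval v F)
    (hsq : ¬ map (algebraMap K L) l ^ 2 ∣ map (algebraMap K L) (aeval v F)) :
    ∃ g : MvPolynomial σ K, g ∣ F ∧ Irreducible (map (algebraMap K L) g) := by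
  set ι : K →+* L := algebraMap K L
  let φ : MvPolynomial σ L →ₐ[L] MvPolynomial ρ L := aeval fun i => map ι (v i)
  have hφ (F : MvPolynomial σ K) : φ (map ι F) = map ι (aeval v F) := by
    induction F using MvPolynomial.induction_on with
    | C a => simp [φ, algebraMap_eq]
    | add p q hp hq => simp only [map_add, hp, hq]
    | mul_X p i hp =>
      simp only [map_mul, hp, map_X]
      simp only [φ, aeval_X]
  have hφτ (τ : Gal(L/K)) (P : MvPolynomial σ L) :
      φ (map (τ : L →+* L) P) = map (τ : L →+* L) (φ P) := by
    induction P using MvPolynomial.induction_on with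
    | C a => simp [φ, algebraMap_eq]
    | add p q hp hq => simp only [map_add, hp, hq]
    | mul_X p i hp =>
      simp only [map_mul, hp, map_X]
      simp only [φ, aeval_X]
      rw [map_algEquiv_map_algebraMap]
  have hF : map ι F ≠ 0 := by
    intro h0
    rw [← hφ, h0, map_zero] at hsq
    exact hsq (dvd_zero _)
  obtain ⟨g, hgirr, hgF, hlg⟩ : ∃ g, Irreducible g ∧ g ∣ map ι F ∧ map ι l ∣ φ g := by
    have hlF : map ι l ∣ φ (map ι F) := hφ F ▸ map_dvd (map ι) hdvd
    obtain ⟨s, hs, hprod⟩ := WfDvdMonoid.exists_factors (map ι F) hF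
    have h1 : map ι l ∣ (s.map φ).prod := by
      rw [← map_multiset_prod]
      exact hlF.trans (map_dvd φ hprod.symm.dvd)
    obtain ⟨y, hy, hly⟩ := hl.exists_mem_multiset_map_dvd (f := φ) (s := s)
      (by simpa using h1)
    exact ⟨y, hs y hy, (Multiset.dvd_prod hy).trans hprod.dvd, hly⟩
  have hassoc (τ : Gal(L/K)) : Associated g (map (τ : L →+* L) g) := by
    by_contra hna
    have hirr : Irreducible (map (τ : L →+* L) g) :=
      (MulEquiv.irreducible_iff (mapEquiv σ (τ : L ≃+* L))).mpr hgirr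
    have hcop : IsRelPrime g (map (τ : L →+* L) g) :=
      (hgirr.isRelPrime_iff_not_dvd).mpr fun h => hna (hgirr.associated_of_dvd hirr h)
    have hmul : g * map (τ : L →+* L) g ∣ map ι F := by
      refine hcop.mul_dvd hgF ?_
      rw [← map_algEquiv_map_algebraMap τ F]
      exact map_dvd (map (τ : L →+* L)) hgF
    refine hsq ?_
    rw [← hφ, sq]
    refine dvd_trans ?_ (map_dvd φ hmul)
    rw [map_mul, hφτ]
    refine mul_dvd_mul hlg ?_
    rw [← map_algEquiv_map_algebraMap τ l]
    exact map_dvd (map (τ : L →+* L)) hlg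
  obtain ⟨g₀, hg₀⟩ := exists_associated_map_algebraMap hgirr.ne_zero hassoc
  have hirr : Irreducible (map ι g₀) := hg₀.irreducible_iff.mpr hgirr
  refine ⟨g₀, dvd_of_map_algebraMap_dvd (L := L) ?_ (hg₀.dvd.trans hgF), hirr⟩
  rintro rfl
  exact hirr.ne_zero (map_zero _)

end GaloisDescent

/-- A polynomial irreducible after base change is nonconstant. -/
lemma totalDegree_pos_of_irreducible_map {σ K L : Type*} [Field K] [Field L] (ι : K →+* L)
    {g : MvPolynomial σ K} (hg : Irreducible (map ι g)) : 0 < g.totalDegree := by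
  refine Nat.pos_of_ne_zero fun h0 => ?_
  rw [totalDegree_eq_zero_iff_eq_C] at h0
  rw [h0, map_C] at hg
  refine hg.not_isUnit ((isUnit_iff_ne_zero.mpr fun h => hg.ne_zero ?_).map C)
  rw [h, C_0]

lemma prime_X_sub_X {σ R : Type*} [Field R] {i j : σ} (hij : i ≠ j) :
    Prime (X i - X j : MvPolynomial σ R) := by
  refine Irreducible.prime ?_
  have := irreducible_mul_X_add (1 : MvPolynomial σ R) (-X j) i one_ne_zero
    (by simp) (by classical simp [vars_neg, hij]) isRelPrime_one_left
  rwa [one_mul, ← sub_eq_add_neg] at this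

/-- After the substitution `X₀ = X₄ = 0`, `X₁ = X₃ = X`, `X₂ = Y`, the second factor in `Fpoly f d`
keeps the coefficients of `f` of degree `d` whose monomials involve `Y`. -/
lemma coeff_sum_top {K : Type*} [Field K] (f : MvPolynomial (Fin 2) K) {d : ℕ}
    {s : Fin 2 →₀ ℕ} (hs : s 0 + s 1 = d) (hs1 : s 1 ≠ 0) :
    coeff s (∑ m ∈ f.support, C (coeff m f) *
      ((X 0) ^ (m 0) * (X 1) ^ (m 1) - (X 0) ^ (m 0) * 0 ^ (m 1))
        * (0 : MvPolynomial (Fin 2) K) ^ (d - m 0 - m 1)) = coeff s f := by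
  classical
  have hmon (m : Fin 2 →₀ ℕ) : (X 0 ^ m 0 * X 1 ^ m 1 : MvPolynomial (Fin 2) K) =
      monomial m 1 := by
    rw [monomial_eq, C_1, one_mul, Finsupp.prod_fintype _ _ (by simp), Fin.prod_univ_two]
  have hterm : ∀ m ∈ f.support, coeff s (C (coeff m f) *
      ((X 0) ^ (m 0) * (X 1) ^ (m 1) - (X 0) ^ (m 0) * 0 ^ (m 1))
        * (0 : MvPolynomial (Fin 2) K) ^ (d - m 0 - m 1)) = if m = s then coeff m f else 0 := by
    intro m hm
    by_cases hmd : d - m 0 - m 1 = 0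
    · rw [hmd, pow_zero, mul_one, coeff_C_mul, coeff_sub, hmon, coeff_monomial]
      have hzero : coeff s ((X 0) ^ (m 0) * 0 ^ (m 1) : MvPolynomial (Fin 2) K) = 0 := by
        rcases eq_or_ne (m 1) 0 with h1 | h1
        · rw [h1, pow_zero, mul_one, coeff_X_pow, if_neg]
          rintro rfl
          simp at hs1
        · rw [zero_pow h1, mul_zero, coeff_zero]
      rw [hzero, sub_zero, mul_ite, mul_one, mul_zero]
    · rw [zero_pow hmd, mul_zero, coeff_zero, if_neg]
      rintro rfl
      omega
  rw [coeff_sum, Finset.sum_congr rfl hterm, Finset.sum_ite_eq']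
  split_ifs with hm
  · rfl
  · exact (notMem_support_iff.mp hm).symm

/-- If `d > 1` and there is an index `i ≠ d` with `a_{i,d−i} ≠ 0`, then `S_f` contains an
absolutely irreducible component defined over `F_q`. -/
theorem statement1 (p h q : ℕ) (hp : p.Prime) (hh : 0 < h) (hq : q = p ^ h)
    (K : Type*) [Field K] [Fintype K] (hcard : Fintype.card K = q)
    (f : MvPolynomial (Fin 2) K) (d : ℕ) (hdeg : f.totalDegree = d) (hd : 1 < d)
    (h00 : coeffXY f 0 0 = 0)
    (hex : ∃ i : ℕ, i ≠ d ∧ coeffXY f i (d - i) ≠ 0) :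
    HasAbsIrrComponent (Fpoly f d) := by
  obtain ⟨i, hid, hi⟩ := hex
  let s : Fin 2 →₀ ℕ := Finsupp.single 0 i + Finsupp.single 1 (d - i)
  have hs0 : s 0 = i := by simp [s]
  have hs1 : s 1 = d - i := by simp [s]
  have hi' : coeff s f ≠ 0 := hi
  have hile : i ≤ d := by
    have := le_totalDegree (mem_support_iff.mpr hi')
    rw [Finsupp.sum_fintype _ _ (by simp), Fin.sum_univ_two] at this
    omega
  let v : Fin 5 → MvPolynomial (Fin 3) K := ![0, X 0, X 1, X 2, 0]
  let R : MvPolynomial (Fin 3) K := ∑ m ∈ f.support, C (coeff m f) *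
    ((X 0) ^ (m 0) * (X 1) ^ (m 1) - (X 2) ^ (m 0) * 0 ^ (m 1)) * 0 ^ (d - m 0 - m 1)
  have hv : aeval v (Fpoly f d) = (X 0 - X 2) * R := by
    simp [Fpoly, v, R, algebraMap_eq, zero_pow (show d - 1 ≠ 0 by omega)]
  have hR : aeval (![X 0, X 1, X 0] : Fin 3 → MvPolynomial (Fin 2) K) R ≠ 0 := by
    refine ne_zero_iff.mpr ⟨s, ?_⟩
    have := coeff_sum_top f (d := d) (s := s) (by omega) (by omega)
    rw [← this] at hi'
    simpa [R, algebraMap_eq] using hi'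
  let ι := algebraMap K (AlgebraicClosure K)
  have hprime : Prime (map ι (X 0 - X 2 : MvPolynomial (Fin 3) K)) := by
    rw [map_sub, map_X, map_X]
    exact prime_X_sub_X (by decide)
  have : IsGalois K (AlgebraicClosure K) := ⟨⟩
  obtain ⟨g, hgF, hg⟩ := exists_dvd_irreducible_map (L := AlgebraicClosure K) (Fpoly f d) v
    (X 0 - X 2) hprime (hv ▸ dvd_mul_right _ _) (by
      rw [hv, map_mul, sq]
      intro hsq
      have hdvd := dvd_of_map_algebraMap_dvd (prime_X_sub_X (by decide)).ne_zero
        ((mul_dvd_mul_iff_left hprime.ne_zero).mp hsq)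
      refine hR (zero_dvd_iff.mp ?_)
      simpa using map_dvd (aeval (![X 0, X 1, X 0] : Fin 3 → MvPolynomial (Fin 2) K)) hdvd)
  exact ⟨g, hgF, totalDegree_pos_of_irreducible_map _ hg, hg⟩
end
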